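/- There is an absolute constant C with the following property. Let L₁(u,v), L₂(u,v), M₁(u,v), M₂(u,v) ∈ ℤ[u, v] be nonzero linear forms such that no two of them are proportional, except possibly L₁ and M₁, or L₂ and M₂. Put F = L₁²M₁³ + L₂²M₂³. Then for all real X, Y ≥ 1, the number μ(X, Y) of pairs of integers (x, y) with |x| ≤ X, |y| ≤ Y for which F(x, y) is a nonzero perfect square satisfies μ(X, Y) ≤ C (XY)^{2/3} (log(2‖F‖XY))², unless there exist nonzero rationals g and ν such that L₁(u, v) = ν(4M₁(u, v) − 5g²M₂(u, v)) and L₂(u, v) = νg³(5M₁(u, v) − 4g²M₂(u, v)) identically. -/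

import Mathlib

open MvPolynomial

/-- The maximum of the absolute values of the coefficients of an integral polynomial. -/
def polyNorm (F : MvPolynomial (Fin 2) ℤ) : ℕ :=
  F.support.sup fun d => (F.coeff d).natAbs

/-- The linear form in `ℤ[u, v]` with coefficient pair `L`. -/
noncomputable def linForm (L : ℤ × ℤ) : MvPolynomial (Fin 2) ℤ :=
  C L.1 * X 0 + C L.2 * X 1

/-- Two linear forms are proportional if one is a rational multiple of the other. -/
def Proportional (L M : ℤ × ℤ) : Prop :=
  (∃ t : ℚ, (L.1 : ℚ) = t * M.1 ∧ (L.2 : ℚ) = t * M.2) ∨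
  (∃ t : ℚ, (M.1 : ℚ) = t * L.1 ∧ (M.2 : ℚ) = t * L.2)

/-!
Let `F` be a binary form of odd degree `2 * k + 1`. If `F` is not a linear form times the square of
a form, then for all but few primes `p` the form `F` modulo `p` is not of this shape either. Up to a
Gauss sum, the Fourier transform of the quadratic character of `F` modulo `p` is then a one-variable
character sum, because the degree is odd, and Stepanov's method bounds it by `O(√p)`. Heath-Brown's
square sieve with moduli `p * q` turns this into the bound `(XY)^{2/3} + X + Y`, up to logarithms.
In a box with `Y² ≤ X` the term `X` is too large; there one fixes `y` and observes that the `x` for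
which `F(x, y)` is a square occupy about half of the classes modulo `p`, so that Gallagher's larger
sieve gives `Y√X`. Boxes with `X² ≤ Y` are treated in the same way, with `x` and `y` exchanged.

For the quintic form `L₁²M₁³ + L₂²M₂³` with `M₁`, `M₂` independent, taking `M₁`, `M₂` as coordinates
and comparing coefficients shows that a linear form times a square arises only from the
one-parameter family of exceptions.
-/

open scoped Polynomial

namespace SquareValues

/-! ### Stepanov's method for quadratic character sums -/

section Stepanov

/-- A polynomial that is a constant times a square; for these alone the values of the quadratic
character do not cancel. -/
def IsConstMulSq {R : Type*} [CommRing R] (f : R[X]) : Prop :=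
  ∃ (c : R) (h : R[X]), f = Polynomial.C c * h ^ 2

/-- The operator `D_k` of Stepanov's method, characterised by
`(f ^ N * r)⁽ᵏ⁾ = f ^ (N - k) * D_k r`. The exponent `N` enters only through its image
in `R`. -/
noncomputable def stepanovOp {R : Type*} [CommRing R] (f : R[X]) (N : R) : ℕ → R[X] →ₗ[R] R[X]
  | 0 => LinearMap.id
  | k + 1 => (LinearMap.mulLeft R (Polynomial.C (N - k) * f.derivative) +
      LinearMap.mulLeft R f ∘ₗ Polynomial.derivative) ∘ₗ stepanovOp f N k

section Ring

variable {R : Type*} [CommRing R]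

theorem stepanovOp_succ_apply (f : R[X]) (N : R) (k : ℕ) (r : R[X]) :
    stepanovOp f N (k + 1) r = Polynomial.C (N - k) * f.derivative * stepanovOp f N k r +
      f * (stepanovOp f N k r).derivative :=
  rfl

theorem iterate_derivative_pow_mul (f r : R[X]) {N k : ℕ} (hk : k ≤ N) :
    Polynomial.derivative^[k] (f ^ N * r) = f ^ (N - k) * stepanovOp f (N : R) k r := by
  induction k with
  | zero => simp [stepanovOp]
  | succ k ih =>
    obtain ⟨n, rfl⟩ : ∃ n, N = k + 1 + n := Nat.exists_eq_add_of_le hk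
    have hn : k + 1 + n - k = n + 1 := by omega
    have hcast : ((k + 1 + n : ℕ) : R) - k = ((n + 1 : ℕ) : R) := by push_cast; ring
    rw [Function.iterate_succ_apply', ih (by omega), hn, Nat.add_sub_cancel_left,
      Polynomial.derivative_mul, Polynomial.derivative_pow, stepanovOp_succ_apply, hcast,
      Nat.add_sub_cancel]
    ring

theorem stepanovOp_mem_degreeLT {f : R[X]} {m : ℕ} (hf : f.natDegree ≤ m + 1) (N : R) {r : R[X]}
    {d : ℕ} (hr : r ∈ Polynomial.degreeLT R d) (k : ℕ) :
    stepanovOp f N k r ∈ Polynomial.degreeLT R (d + m * k) := by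
  induction k with
  | zero => simpa [stepanovOp] using hr
  | succ k ih =>
    rw [stepanovOp_succ_apply]
    set g := stepanovOp f N k r
    rw [Polynomial.mem_degreeLT] at ih
    have hf' : f.derivative.natDegree ≤ m := by
      have := Polynomial.natDegree_derivative_le f
      omega
    rcases eq_or_ne g 0 with hg | hg
    · simp [hg]
    have hgd : g.natDegree < d + m * k := (Polynomial.natDegree_lt_iff_degree_lt hg).2 ih
    have hbound : d + m * k + m = d + m * (k + 1) := by ring
    refine add_mem (Polynomial.mem_degreeLT.2 ?_) (Polynomial.mem_degreeLT.2 ?_)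
    · refine Polynomial.degree_le_natDegree.trans_lt (Nat.cast_lt.2 ?_)
      have h₁ := Polynomial.natDegree_mul_le (p := Polynomial.C (N - k) * f.derivative) (q := g)
      have h₂ := Polynomial.natDegree_C_mul_le (N - k) f.derivative
      omega
    · rcases eq_or_ne g.natDegree 0 with hg₀ | hg₀
      · rw [Polynomial.derivative_of_natDegree_zero hg₀, mul_zero, Polynomial.degree_zero]
        exact WithBot.bot_lt_coe _
      refine Polynomial.degree_le_natDegree.trans_lt (Nat.cast_lt.2 ?_)
      have h₁ := Polynomial.natDegree_mul_le (p := f) (q := g.derivative)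
      have h₂ := Polynomial.natDegree_derivative_lt hg₀
      omega

theorem iterate_derivative_mul_X_pow_char {p : ℕ} [CharP R p] (q : R[X]) (j k : ℕ) :
    Polynomial.derivative^[k] (q * Polynomial.X ^ (j * p)) =
      Polynomial.derivative^[k] q * Polynomial.X ^ (j * p) := by
  induction k with
  | zero => rfl
  | succ k ih =>
    rw [Function.iterate_succ_apply', ih, Polynomial.derivative_mul, Polynomial.derivative_X_pow,
      Function.iterate_succ_apply']
    simp

/-- The auxiliary polynomial `f ^ l * ∑ⱼ (rⱼ + sⱼ f ^ e) X ^ (j p)` of Stepanov's method. -/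
noncomputable def stepanovPoly (p : ℕ) (f : R[X]) (l e : ℕ) {J : ℕ} (r s : Fin J → R[X]) : R[X] :=
  f ^ l * ∑ j, (r j + s j * f ^ e) * Polynomial.X ^ (j.1 * p)

theorem iterate_derivative_stepanovPoly {p : ℕ} [CharP R p] (f : R[X]) {l k : ℕ} (hk : k ≤ l)
    (e : ℕ) {J : ℕ} (r s : Fin J → R[X]) :
    Polynomial.derivative^[k] (stepanovPoly p f l e r s) =
      f ^ (l - k) * ∑ j, (stepanovOp f (l : R) k (r j) +
        stepanovOp f ((l + e : ℕ) : R) k (s j) * f ^ e) * Polynomial.X ^ (j.1 * p) := by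
  rw [stepanovPoly, Finset.mul_sum, Finset.mul_sum, Polynomial.iterate_derivative_sum]
  refine Finset.sum_congr rfl fun j _ => ?_
  have hsplit : f ^ l * ((r j + s j * f ^ e) * Polynomial.X ^ (j.1 * p)) =
      (f ^ l * r j + f ^ (l + e) * s j) * Polynomial.X ^ (j.1 * p) := by ring
  have hexp : l + e - k = l - k + e := by omega
  rw [hsplit, iterate_derivative_mul_X_pow_char, iterate_map_add,
    iterate_derivative_pow_mul _ _ hk, iterate_derivative_pow_mul _ _ (hk.trans le_self_add),
    hexp]
  ring

theorem X_pow_dvd_of_sum_mul_X_pow_eq_zero [IsDomain R] {p J : ℕ} {g : Fin J → R[X]}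
    (hsum : ∑ j, g j * Polynomial.X ^ (j.1 * p) = 0) (j : Fin J) (hlow : ∀ i < j, g i = 0) :
    Polynomial.X ^ p ∣ g j := by
  have hdvd : (Polynomial.X : R[X]) ^ (p + j.1 * p) ∣ g j * Polynomial.X ^ (j.1 * p) := by
    rw [← Finset.add_sum_erase _ _ (Finset.mem_univ j)] at hsum
    rw [eq_neg_of_add_eq_zero_left hsum, dvd_neg]
    refine Finset.dvd_sum fun i hi => ?_
    rcases lt_or_gt_of_ne (Finset.ne_of_mem_erase hi) with hij | hij
    · simp [hlow i hij]
    · refine Dvd.dvd.mul_left (pow_dvd_pow _ ?_) _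
      calc p + j.1 * p = (j.1 + 1) * p := by ring
        _ ≤ i.1 * p := Nat.mul_le_mul_right _ hij
  rw [pow_add] at hdvd
  exact (mul_dvd_mul_iff_right (pow_ne_zero _ Polynomial.X_ne_zero)).1 hdvd

end Ring

theorem eq_zero_of_sq_mul_eq_const_mul_sq {K : Type*} [Field K] {f r s : K[X]} {c : K}
    (hc : c ≠ 0) (hns : ¬ IsConstMulSq f) (h : r ^ 2 * f = Polynomial.C c * s ^ 2) :
    r = 0 ∧ s = 0 := by
  have hr : r = 0 := by
    by_contra hr
    have hdvd : r ^ 2 ∣ s ^ 2 :=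
      (Polynomial.isUnit_C.2 hc.isUnit).dvd_mul_left.1 ⟨f, h.symm⟩
    obtain ⟨t, rfl⟩ := (UniqueFactorizationMonoid.pow_dvd_pow_iff_dvd two_ne_zero).1 hdvd
    exact hns ⟨c, t, mul_left_cancel₀ (pow_ne_zero 2 hr) (by rw [h]; ring)⟩
  refine ⟨hr, ?_⟩
  simpa [hr, hc] using h.symm

variable {p : ℕ} [Fact p.Prime]

theorem X_pow_dvd_sq_mul_sub {f r s : (ZMod p)[X]} {e : ℕ} (he : 2 * e + 1 = p)
    (h : Polynomial.X ^ p ∣ r + s * f ^ e) :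
    Polynomial.X ^ p ∣ r ^ 2 * f - Polynomial.C (f.eval 0) * s ^ 2 := by
  have hfrob : Polynomial.X ^ p ∣ f ^ p - Polynomial.C (f.eval 0) := by
    have hC : Polynomial.C (f.eval 0) = Polynomial.C (f.eval 0) ^ p := by
      rw [← Polynomial.C_pow, ZMod.pow_card]
    rw [hC, ← sub_pow_char]
    refine pow_dvd_pow_of_dvd ?_ p
    rw [Polynomial.X_dvd_iff]
    simp [Polynomial.coeff_zero_eq_eval_zero]
  have hfp : f ^ p = f * (f ^ e) ^ 2 := by rw [← pow_mul, ← pow_succ', mul_comm e 2, he]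
  have hid : r ^ 2 * f - Polynomial.C (f.eval 0) * s ^ 2 =
      (r + s * f ^ e) * ((r - s * f ^ e) * f) + s ^ 2 * (f ^ p - Polynomial.C (f.eval 0)) := by
    rw [hfp]; ring
  rw [hid]
  exact (h.mul_right _).add (hfrob.mul_left _)

theorem sq_mul_eq_of_X_pow_dvd {f r s : (ZMod p)[X]} {m d e : ℕ} (hf : f.natDegree ≤ m + 1)
    (hd : 2 * d + m ≤ p) (he : 2 * e + 1 = p) (hr : r ∈ Polynomial.degreeLT (ZMod p) d)
    (hs : s ∈ Polynomial.degreeLT (ZMod p) d) (h : Polynomial.X ^ p ∣ r + s * f ^ e) :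
    r ^ 2 * f = Polynomial.C (f.eval 0) * s ^ 2 := by
  rcases Nat.eq_zero_or_pos d with rfl | hd₀
  · have hbot (q : (ZMod p)[X]) (hq : q ∈ Polynomial.degreeLT (ZMod p) 0) : q = 0 := by
      simpa [Polynomial.mem_degreeLT, Nat.WithBot.lt_zero_iff] using hq
    simp [hbot r hr, hbot s hs]
  have hnat (q : (ZMod p)[X]) (hq : q ∈ Polynomial.degreeLT (ZMod p) d) : q.natDegree ≤ d - 1 := by
    rcases eq_or_ne q 0 with rfl | hq₀
    · simp
    · exact Nat.le_sub_one_of_lt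
        ((Polynomial.natDegree_lt_iff_degree_lt hq₀).2 (Polynomial.mem_degreeLT.1 hq))
  rw [← sub_eq_zero]
  refine Polynomial.eq_zero_of_dvd_of_natDegree_lt (X_pow_dvd_sq_mul_sub he h) ?_
  rw [Polynomial.natDegree_X_pow]
  refine (Polynomial.natDegree_sub_le _ _).trans_lt (max_lt ?_ ?_)
  · have h₁ := Polynomial.natDegree_mul_le (p := r ^ 2) (q := f)
    have h₂ := Polynomial.natDegree_pow_le (p := r) (n := 2)
    have h₃ := hnat r hr
    omega
  · have h₁ := Polynomial.natDegree_C_mul_le (f.eval 0) (s ^ 2)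
    have h₂ := Polynomial.natDegree_pow_le (p := s) (n := 2)
    have h₃ := hnat s hs
    omega

theorem stepanovPoly_ne_zero {f : (ZMod p)[X]} {m d e : ℕ} (hf : f.natDegree ≤ m + 1)
    (hf₀ : f.eval 0 ≠ 0) (hns : ¬ IsConstMulSq f) (hd : 2 * d + m ≤ p) (he : 2 * e + 1 = p) (l : ℕ)
    {J : ℕ} {r s : Fin J → (ZMod p)[X]} (hr : ∀ j, r j ∈ Polynomial.degreeLT (ZMod p) d)
    (hs : ∀ j, s j ∈ Polynomial.degreeLT (ZMod p) d) (hrs : ¬ ∀ j, r j = 0 ∧ s j = 0) :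
    stepanovPoly p f l e r s ≠ 0 := by
  have hf_ne : f ≠ 0 := by rintro rfl; simp at hf₀
  refine fun h => hrs fun j => ?_
  have hsum := (mul_eq_zero.1 h).resolve_left (pow_ne_zero l hf_ne)
  induction j using WellFoundedLT.induction with
  | ind j ih =>
    refine eq_zero_of_sq_mul_eq_const_mul_sq hf₀ hns
      (sq_mul_eq_of_X_pow_dvd hf hd he (hr j) (hs j) ?_)
    exact X_pow_dvd_of_sum_mul_X_pow_eq_zero (g := fun j => r j + s j * f ^ e) hsum j
      fun i hi => by simp [ih i hi]

theorem natDegree_stepanovPoly_le {f : (ZMod p)[X]} {m d e l J : ℕ} (hf : f.natDegree ≤ m + 1)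
    (hd : 2 * d + m ≤ p) (he : 2 * e + 1 = p) {r s : Fin (J + 1) → (ZMod p)[X]}
    (hr : ∀ j, r j ∈ Polynomial.degreeLT (ZMod p) d)
    (hs : ∀ j, s j ∈ Polynomial.degreeLT (ZMod p) d) :
    2 * (stepanovPoly p f l e r s).natDegree ≤ 2 * l * (m + 1) + (m + 2 + 2 * J) * p := by
  have hfl (k : ℕ) : (f ^ k).natDegree ≤ k * (m + 1) :=
    Polynomial.natDegree_pow_le.trans (Nat.mul_le_mul_left k hf)
  have hnat (q : (ZMod p)[X]) (hq : q ∈ Polynomial.degreeLT (ZMod p) d) : q.natDegree ≤ d :=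
    Polynomial.natDegree_le_of_degree_le (Polynomial.mem_degreeLT.1 hq).le
  have hsum : (∑ j, (r j + s j * f ^ e) * Polynomial.X ^ (j.1 * p)).natDegree ≤
      d + e * (m + 1) + J * p := by
    refine Polynomial.natDegree_sum_le_of_forall_le _ _ fun j _ => ?_
    have h₁ := Polynomial.natDegree_mul_le (p := r j + s j * f ^ e)
      (q := Polynomial.X ^ (j.1 * p))
    rw [Polynomial.natDegree_X_pow] at h₁
    have h₂ := Polynomial.natDegree_add_le (r j) (s j * f ^ e)
    have h₃ := Polynomial.natDegree_mul_le (p := s j) (q := f ^ e)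
    have h₄ : j.1 * p ≤ J * p := Nat.mul_le_mul_right _ (Nat.lt_succ_iff.1 j.2)
    have h₅ := hnat _ (hr j)
    have h₆ := hnat _ (hs j)
    have h₇ := hfl e
    omega
  have hmul := Polynomial.natDegree_mul_le (p := f ^ l)
    (q := ∑ j, (r j + s j * f ^ e) * Polynomial.X ^ (j.1 * p))
  have hl := hfl l
  change 2 * (f ^ l * _).natDegree ≤ _
  nlinarith

theorem exists_ne_zero_forall_apply_eq_zero {K W M : Type*} [Field K] [AddCommGroup W] [Module K W]
    [Module.Finite K W] [AddCommGroup M] [Module K M] {V : Submodule K M} [Module.Finite K V]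
    {l : ℕ} {S : ℕ → W →ₗ[K] M} (hS : ∀ k < l, ∀ w, S k w ∈ V)
    (hcard : l * Module.finrank K V < Module.finrank K W) :
    ∃ w ≠ 0, ∀ k < l, S k w = 0 := by
  let T := LinearMap.pi fun k : Fin l => (S k).codRestrict V (hS k k.2)
  have hker : LinearMap.ker T ≠ ⊥ := by
    apply LinearMap.ker_ne_bot_of_finrank_lt
    rwa [Module.finrank_pi_fintype, Finset.sum_const, Finset.card_univ, Fintype.card_fin,
      smul_eq_mul]
  obtain ⟨w, hTw, hw⟩ := Submodule.exists_mem_ne_zero_of_ne_bot hker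
  exact ⟨w, hw, fun k hk => congrArg Subtype.val (congrFun hTw ⟨k, hk⟩)⟩

theorem mul_X_pow_mem_degreeLT {K : Type*} [Semiring K] {q : K[X]} {m n i : ℕ}
    (hq : q ∈ Polynomial.degreeLT K m) (hn : m + i ≤ n) :
    q * Polynomial.X ^ i ∈ Polynomial.degreeLT K n := by
  rw [Polynomial.mem_degreeLT, Polynomial.degree_lt_iff_coeff_zero] at hq ⊢
  intro j hj
  rw [Polynomial.coeff_mul_X_pow', if_pos (by omega)]
  exact hq _ (by omega)

theorem exists_stepanovOp_sum_eq_zero {K : Type*} [Field K] {f : K[X]} {m : ℕ}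
    (hf : f.natDegree ≤ m + 1) (a N M : K) {l J d : ℕ}
    (hcount : l * (d + m * l + J) < 2 * (J * d)) :
    ∃ r s : Fin J → K[X], (∀ j, r j ∈ Polynomial.degreeLT K d) ∧
      (∀ j, s j ∈ Polynomial.degreeLT K d) ∧ (¬ ∀ j, r j = 0 ∧ s j = 0) ∧
      ∀ k < l, ∑ j, (stepanovOp f N k (r j) + a • stepanovOp f M k (s j)) *
        Polynomial.X ^ j.1 = 0 := by
  let V := Polynomial.degreeLT K d
  let S (k : ℕ) : ((Fin J → V) × (Fin J → V)) →ₗ[K] K[X] := ∑ j : Fin J,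
    LinearMap.mulRight K (Polynomial.X ^ j.1) ∘ₗ
      (stepanovOp f N k ∘ₗ V.subtype ∘ₗ LinearMap.proj j ∘ₗ LinearMap.fst K _ _ +
        a • stepanovOp f M k ∘ₗ V.subtype ∘ₗ LinearMap.proj j ∘ₗ LinearMap.snd K _ _)
  have hS (k : ℕ) (v) : S k v = ∑ j, (stepanovOp f N k (v.1 j : K[X]) +
      a • stepanovOp f M k (v.2 j : K[X])) * Polynomial.X ^ j.1 := by
    simp [S]
  have hmem (k : ℕ) (hk : k < l) (v) : S k v ∈ Polynomial.degreeLT K (d + m * l + J) := by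
    rw [hS]
    refine sum_mem fun j _ => mul_X_pow_mem_degreeLT (m := d + m * k)
      (add_mem (stepanovOp_mem_degreeLT hf N (v.1 j).2 k)
        (Submodule.smul_mem _ a (stepanovOp_mem_degreeLT hf M (v.2 j).2 k))) ?_
    have hkl : m * k ≤ m * l := Nat.mul_le_mul_left m hk.le
    omega
  have hrank (n : ℕ) : Module.finrank K (Polynomial.degreeLT K n) = n := by
    rw [(Polynomial.degreeLTEquiv K n).finrank_eq, Module.finrank_fin_fun]
  have (n : ℕ) : Module.Finite K (Polynomial.degreeLT K n) :=
    Module.Finite.equiv (Polynomial.degreeLTEquiv K n).symm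
  obtain ⟨v, hv, hvan⟩ := exists_ne_zero_forall_apply_eq_zero hmem (by
    simp only [Module.finrank_prod, Module.finrank_pi_fintype, hrank, V, Finset.sum_const,
      Finset.card_univ, Fintype.card_fin, smul_eq_mul]
    omega)
  refine ⟨fun j => v.1 j, fun j => v.2 j, fun j => (v.1 j).2, fun j => (v.2 j).2,
    fun h => hv ?_, fun k hk => hS k v ▸ hvan k hk⟩
  exact Prod.ext (funext fun j => Subtype.ext (h j).1) (funext fun j => Subtype.ext (h j).2)

theorem card_mul_le_natDegree {R : Type*} [CommRing R] [IsDomain R] {f : R[X]} {S : Finset R}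
    {k : ℕ} (hS : ∀ x ∈ S, k ≤ f.rootMultiplicity x) : S.card * k ≤ f.natDegree := by
  classical
  have hle : k • S.val ≤ f.roots := by
    rw [Multiset.le_iff_count]
    intro x
    rw [Multiset.count_nsmul, Polynomial.count_roots]
    by_cases hx : x ∈ S
    · rw [Multiset.count_eq_one_of_mem S.nodup hx, mul_one]
      exact hS x hx
    · simp [Multiset.count_eq_zero_of_notMem (s := S.val) hx]
  calc S.card * k = (k • S.val).card := by rw [Multiset.card_nsmul, mul_comm]; rfl
    _ ≤ f.roots.card := Multiset.card_le_card hle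
    _ ≤ f.natDegree := Polynomial.card_roots' f

-- On the set where `f ^ e` takes the value `a`, replacing `f ^ e` by `a` and `X ^ p` by `X` turns
-- each derivative of `stepanovPoly` into a combination that was arranged to vanish identically.
theorem le_rootMultiplicity_stepanovPoly {f : (ZMod p)[X]} {l e J : ℕ} (hl₀ : 0 < l) (hlp : l ≤ p)
    {r s : Fin J → (ZMod p)[X]} {a : ZMod p} (hne : stepanovPoly p f l e r s ≠ 0)
    (hvan : ∀ k < l, ∑ j, (stepanovOp f (l : ZMod p) k (r j) +
      a • stepanovOp f ((l + e : ℕ) : ZMod p) k (s j)) * Polynomial.X ^ j.1 = 0)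
    {x : ZMod p} (hx : f.eval x ^ e = a) :
    l ≤ (stepanovPoly p f l e r s).rootMultiplicity x := by
  suffices l - 1 < (stepanovPoly p f l e r s).rootMultiplicity x by omega
  refine Polynomial.lt_rootMultiplicity_of_isRoot_iterate_derivative_of_mem_nonZeroDivisors' hne
    (fun k hk => ?_) fun k hk hk₀ => ?_
  · have heval := congrArg (Polynomial.eval x) (hvan k (by omega))
    simp only [Polynomial.eval_finsetSum, Polynomial.eval_mul, Polynomial.eval_add,
      Polynomial.eval_smul, Polynomial.eval_pow, Polynomial.eval_X, Polynomial.eval_zero,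
      smul_eq_mul] at heval
    rw [iterate_derivative_stepanovPoly f (by omega), Polynomial.IsRoot, Polynomial.eval_mul]
    simp only [Polynomial.eval_finsetSum, Polynomial.eval_mul, Polynomial.eval_add,
      Polynomial.eval_pow, Polynomial.eval_X, hx, mul_comm _ p, pow_mul, ZMod.pow_card,
      mul_comm _ a, heval, mul_zero]
  · rw [mem_nonZeroDivisors_iff_ne_zero, Ne, ZMod.natCast_eq_zero_iff]
    intro hdvd
    have := Nat.le_of_dvd (Nat.pos_of_ne_zero hk₀) hdvd
    omega

theorem card_mul_le_of_eval_pow_eq {f : (ZMod p)[X]} {m e w : ℕ} (hf : f.natDegree ≤ m + 1)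
    (hf₀ : f.eval 0 ≠ 0) (hns : ¬ IsConstMulSq f) (hp : 16 * (m + 1) ^ 2 ≤ p)
    (he : 2 * e + 1 = p) (hw₀ : 0 < w) (hw : 4 * w ^ 2 ≤ p) (a : ZMod p) {S : Finset (ZMod p)}
    (hS : ∀ x ∈ S, f.eval x ^ e = a) :
    4 * w * S.card ≤ 4 * w * (m + 1) + (2 * w + 5 * (m + 1)) * p := by
  have hwp : 8 * w ≤ p := by
    rcases Nat.lt_or_ge w 2 with h | h <;> nlinarith
  have hmp : m ≤ p := by nlinarith
  obtain ⟨d, hd, hd'⟩ : ∃ d, 2 * d + m ≤ p ∧ p ≤ 2 * d + m + 1 :=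
    ⟨(p - m) / 2, by omega, by omega⟩
  have hcount : 2 * w * (d + m * (2 * w) + (w + 2 * m + 1 + 1)) <
      2 * ((w + 2 * m + 1 + 1) * d) := by
    have h₁ : (2 * m + 1) * (4 * w ^ 2) ≤ (2 * m + 1) * p := Nat.mul_le_mul_left _ hw
    have h₂ : (m + 1) * (8 * w) ≤ (m + 1) * p := Nat.mul_le_mul_left _ hwp
    have h₃ : (m + 1) * p ≤ (m + 1) * (2 * d + m + 1) := Nat.mul_le_mul_left _ hd'
    nlinarith
  obtain ⟨r, s, hr, hs, hrs, hvan⟩ := exists_stepanovOp_sum_eq_zero hf a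
    ((2 * w : ℕ) : ZMod p) ((2 * w + e : ℕ) : ZMod p) hcount
  have hne := stepanovPoly_ne_zero hf hf₀ hns hd he (2 * w) hr hs hrs
  have hcard := card_mul_le_natDegree fun x hx =>
    le_rootMultiplicity_stepanovPoly (by omega) (by omega) hne hvan (hS x hx)
  have hdeg := natDegree_stepanovPoly_le (l := 2 * w) hf hd he hr hs
  nlinarith

theorem card_le_of_eval_pow_eq {f : (ZMod p)[X]} {n e : ℕ} (hn : 0 < n) (hf : f.natDegree ≤ n)
    (hf₀ : f.eval 0 ≠ 0) (hns : ¬ IsConstMulSq f) (hp : 16 * n ^ 2 ≤ p) (he : 2 * e + 1 = p)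
    (a : ZMod p) {S : Finset (ZMod p)} (hS : ∀ x ∈ S, f.eval x ^ e = a) :
    (S.card : ℝ) ≤ p / 2 + n + 5 * n * √p := by
  obtain ⟨m, rfl⟩ : ∃ m, n = m + 1 := Nat.exists_eq_add_of_lt hn |>.imp fun _ h => by omega
  have hq : 4 ≤ p.sqrt := Nat.le_sqrt.2 (by nlinarith)
  obtain ⟨w, hw⟩ : ∃ w, w = p.sqrt / 2 := ⟨_, rfl⟩
  have hw₀ : 0 < w := by omega
  have hwp : 4 * w ^ 2 ≤ p := by nlinarith [p.sqrt_le, show 2 * w ≤ p.sqrt by omega]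
  have hpw : √(p : ℝ) ≤ 4 * w := by
    rw [Real.sqrt_le_left (by positivity)]
    have : p ≤ (4 * w) ^ 2 := by nlinarith [p.lt_succ_sqrt, show p.sqrt + 1 ≤ 4 * w by omega]
    exact_mod_cast this
  have hbound : 4 * (w : ℝ) * S.card ≤ 4 * w * (m + 1) + (2 * w + 5 * (m + 1)) * p := by
    exact_mod_cast card_mul_le_of_eval_pow_eq hf hf₀ hns hp he hw₀ hwp a hS
  have hmul : 5 * ((m : ℝ) + 1) * p ≤ 5 * (m + 1) * (4 * w * √p) := by
    gcongr
    calc (p : ℝ) = √p * √p := (Real.mul_self_sqrt (by positivity)).symm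
      _ ≤ 4 * w * √p := by gcongr
  refine le_of_mul_le_mul_left (a := 4 * (w : ℝ)) ?_ (by positivity)
  push_cast
  linarith

theorem quadraticChar_apply_eq_ite {F : Type*} [Field F] [Fintype F] [DecidableEq F] (x : F) :
    quadraticChar F x =
      (if quadraticChar F x = 1 then 1 else 0) - if quadraticChar F x = -1 then 1 else 0 := by
  rcases eq_or_ne x 0 with rfl | hx
  · simp
  · rcases quadraticChar_dichotomy hx with h | h <;> simp [h]

theorem one_eq_ite_quadraticChar {F : Type*} [Field F] [Fintype F] [DecidableEq F] (x : F) :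
    (1 : ℤ) = (if quadraticChar F x = 1 then 1 else 0) +
      (if quadraticChar F x = -1 then 1 else 0) + if x = 0 then 1 else 0 := by
  rcases eq_or_ne x 0 with rfl | hx
  · simp
  · rcases quadraticChar_dichotomy hx with h | h <;> simp [h, hx]

theorem abs_quadraticChar_le_one {F : Type*} [Field F] [Fintype F] [DecidableEq F] (x : F) :
    |quadraticChar F x| ≤ 1 := by
  rcases eq_or_ne x 0 with rfl | hx
  · simp
  · rcases quadraticChar_dichotomy hx with h | h <;> simp [h]

theorem card_filter_eval_eq_zero_le {R : Type*} [CommRing R] [IsDomain R] [Fintype R]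
    [DecidableEq R] {f : R[X]} (hf : f ≠ 0) :
    (Finset.univ.filter fun x => f.eval x = 0).card ≤ f.natDegree := by
  simpa using card_mul_le_natDegree (k := 1) (S := Finset.univ.filter fun x => f.eval x = 0)
    fun x hx => (Polynomial.rootMultiplicity_pos hf).2 (Finset.mem_filter.1 hx).2

theorem abs_sum_quadraticChar_le_of_eval_zero_ne {f : (ZMod p)[X]} {n : ℕ} (hn : 0 < n)
    (hf : f.natDegree ≤ n) (hf₀ : f.eval 0 ≠ 0) (hns : ¬ IsConstMulSq f) (hp : 16 * n ^ 2 ≤ p) :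
    |((∑ x : ZMod p, quadraticChar (ZMod p) (f.eval x) : ℤ) : ℝ)| ≤ 11 * n * √p := by
  have hp₁₆ : 16 ≤ p := by nlinarith
  obtain ⟨e, he⟩ : ∃ e, p = 2 * e + 1 := by
    refine (Nat.Prime.eq_two_or_odd' (Fact.out : p.Prime)).resolve_left (by omega)
  have hchar : ringChar (ZMod p) ≠ 2 := by rw [ZMod.ringChar_zmod_n]; omega
  set N : ℤ → Finset (ZMod p) := fun ε =>
    Finset.univ.filter fun x => quadraticChar (ZMod p) (f.eval x) = ε
  set Z : Finset (ZMod p) := Finset.univ.filter fun x => f.eval x = 0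
  have hN (ε : ℤ) : ((N ε).card : ℝ) ≤ p / 2 + n + 5 * n * √p := by
    refine card_le_of_eval_pow_eq hn hf hf₀ hns hp he.symm (ε : ZMod p) fun x hx => ?_
    rw [← (Finset.mem_filter.1 hx).2, quadraticChar_eq_pow_of_char_ne_two' hchar, ZMod.card]
    congr 1
    omega
  have hZ : (Z.card : ℝ) ≤ n := by
    exact_mod_cast (card_filter_eval_eq_zero_le (by rintro rfl; simp at hf₀)).trans hf
  have hsum : ∑ x : ZMod p, quadraticChar (ZMod p) (f.eval x) = (N 1).card - (N (-1)).card := by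
    rw [Finset.sum_congr rfl fun x _ => quadraticChar_apply_eq_ite (f.eval x),
      Finset.sum_sub_distrib, Finset.sum_boole, Finset.sum_boole]
  have hcard : (p : ℝ) = (N 1).card + (N (-1)).card + Z.card := by
    have h : ((Finset.univ : Finset (ZMod p)).card : ℤ) =
        (N 1).card + (N (-1)).card + Z.card := by
      rw [Finset.cast_card, Finset.sum_congr rfl fun x _ => one_eq_ite_quadraticChar (f.eval x),
        Finset.sum_add_distrib, Finset.sum_add_distrib, Finset.sum_boole, Finset.sum_boole,
        Finset.sum_boole]
    rw [Finset.card_univ, ZMod.card] at h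
    exact_mod_cast h
  have hn_sqrt : 3 * (n : ℝ) ≤ n * √p := by
    rw [mul_comm]
    gcongr
    exact Real.le_sqrt_of_sq_le (by norm_num; exact_mod_cast (by omega : 9 ≤ p))
  rw [hsum]
  push_cast
  have h₁ := hN 1
  have h₂ := hN (-1)
  rw [abs_le]
  constructor <;> linarith

theorem IsConstMulSq.comp {R : Type*} [CommRing R] {f : R[X]} (hf : IsConstMulSq f) (g : R[X]) :
    IsConstMulSq (f.comp g) := by
  obtain ⟨c, h, rfl⟩ := hf
  exact ⟨c, h.comp g, by simp⟩

theorem natDegree_pos_of_not_isConstMulSq {R : Type*} [CommRing R] {f : R[X]}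
    (hf : ¬ IsConstMulSq f) : 0 < f.natDegree := by
  refine Nat.pos_of_ne_zero fun h => hf ⟨f.coeff 0, 1, ?_⟩
  simpa using Polynomial.eq_C_of_natDegree_eq_zero h

theorem abs_sum_quadraticChar_le {f : (ZMod p)[X]} {n : ℕ} (hf : f.natDegree ≤ n)
    (hns : ¬ IsConstMulSq f) :
    |((∑ x : ZMod p, quadraticChar (ZMod p) (f.eval x) : ℤ) : ℝ)| ≤ 11 * n * √p := by
  have hn : 0 < n := (natDegree_pos_of_not_isConstMulSq hns).trans_le hf
  have hf_ne : f ≠ 0 := by rintro rfl; simpa using natDegree_pos_of_not_isConstMulSq hns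
  rcases le_or_gt (16 * n ^ 2) p with hp | hp
  · obtain ⟨c, hc⟩ : ∃ c, f.eval c ≠ 0 := by
      by_contra! hroots
      have := card_filter_eval_eq_zero_le hf_ne
      simp only [hroots, Finset.filter_true, Finset.card_univ, ZMod.card] at this
      nlinarith
    have hshift : ∑ x : ZMod p, quadraticChar (ZMod p) (f.eval x) =
        ∑ x, quadraticChar (ZMod p) ((f.comp (Polynomial.X + Polynomial.C c)).eval x) := by
      simpa using (Equiv.sum_comp (Equiv.addRight c)
        fun x => quadraticChar (ZMod p) (f.eval x)).symm
    rw [hshift]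
    refine abs_sum_quadraticChar_le_of_eval_zero_ne hn (by simpa [Polynomial.natDegree_comp])
      (by simpa) (fun h => hns ?_) hp
    have hcomp := h.comp (Polynomial.X - Polynomial.C c)
    rwa [Polynomial.comp_assoc, Polynomial.add_comp, Polynomial.X_comp, Polynomial.C_comp,
      sub_add_cancel, Polynomial.comp_X] at hcomp
  · have htriv : |∑ x : ZMod p, quadraticChar (ZMod p) (f.eval x)| ≤ p := by
      refine (Finset.abs_sum_le_sum_abs _ _).trans ?_
      simpa [ZMod.card] using
        Finset.sum_le_card_nsmul Finset.univ _ 1 fun x _ => abs_quadraticChar_le_one (f.eval x)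
    have hsqrt : √(p : ℝ) ≤ 4 * n := by
      rw [Real.sqrt_le_left (by positivity)]
      have : p ≤ (4 * n) ^ 2 := by nlinarith
      exact_mod_cast this
    calc _ ≤ (p : ℝ) := by exact_mod_cast htriv
      _ = √p * √p := (Real.mul_self_sqrt (by positivity)).symm
      _ ≤ 11 * n * √p := by gcongr; linarith

end Stepanov

/-! ### Binary forms and the primes at which they degenerate -/

section Decomposition

theorem exists_eq_sq_mul_squarefree {M : Type*} [CommMonoidWithZero M] [WfDvdMonoid M] {a : M}
    (ha : a ≠ 0) : ∃ b c : M, a = b ^ 2 * c ∧ Squarefree c := by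
  induction a using WellFounded.induction (wellFounded_dvdNotUnit (α := M)) with | _ a ih
  by_cases hsq : Squarefree a
  · exact ⟨1, a, by simp, hsq⟩
  obtain ⟨x, ⟨y, rfl⟩, hx⟩ : ∃ x, x * x ∣ a ∧ ¬ IsUnit x := by simpa [Squarefree] using hsq
  have hy : y ≠ 0 := by
    rintro rfl
    simp at ha
  obtain ⟨b, c, rfl, hc⟩ := ih y ⟨hy, x * x, fun h => hx (isUnit_of_mul_isUnit_left h),
    mul_comm _ _⟩ hy
  exact ⟨x * b, c, by rw [mul_pow, sq x, mul_assoc (x * x)], hc⟩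

variable {R : Type*} [CommRing R] [IsDomain R]

theorem exists_isPrimitive_associated_map [NormalizedGCDMonoid R] {K : Type*} [Field K]
    [Algebra R K] [IsFractionRing R K] {q : K[X]} (hq : q ≠ 0) :
    ∃ r : R[X], r.IsPrimitive ∧ Associated (r.map (algebraMap R K)) q := by
  obtain ⟨b, hbR, hb⟩ := IsLocalization.integerNormalization_spec (nonZeroDivisors R) q
  set r := IsLocalization.integerNormalization (nonZeroDivisors R) q
  have hr : r ≠ 0 := by rwa [Ne, IsFractionRing.integerNormalization_eq_zero_iff]
  have hunit (a : R) (ha : a ≠ 0) : IsUnit (Polynomial.C (algebraMap R K a)) :=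
    Polynomial.isUnit_C.2 (by simpa using ha)
  refine ⟨r.primPart, r.isPrimitive_primPart, ?_⟩
  have h₁ := associated_unit_mul_left (r.primPart.map (algebraMap R K)) _
    (hunit r.content (by rwa [Ne, Polynomial.content_eq_zero_iff]))
  rw [← Polynomial.map_C, ← Polynomial.map_mul, ← r.eq_C_content_mul_primPart, hb] at h₁
  have h₂ := associated_unit_mul_left q _ (hunit b (nonZeroDivisors.ne_zero hbR))
  rw [← Polynomial.smul_eq_C_mul, algebraMap_smul] at h₂
  exact h₁.symm.trans h₂

theorem squarefree_map_algebraMap [NormalizedGCDMonoid R] (K : Type*) [Field K] [Algebra R K]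
    [IsFractionRing R K] {g : R[X]} (hg : Squarefree g) (hg₀ : g ≠ 0) :
    Squarefree (g.map (algebraMap R K)) := by
  intro q hq
  have hq₀ : q ≠ 0 := by
    rintro rfl
    rw [mul_zero, zero_dvd_iff, Polynomial.map_eq_zero_iff (IsFractionRing.injective R K)] at hq
    exact hg₀ hq
  obtain ⟨r, hr, hrq⟩ := exists_isPrimitive_associated_map (R := R) hq₀
  refine hrq.isUnit (hg r ?_ |>.map (Polynomial.mapRingHom _))
  refine (hr.mul hr).dvd_of_fraction_map_dvd_fraction_map (K := K) ?_
  rw [Polynomial.map_mul]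
  exact (hrq.mul_mul hrq).dvd.trans hq

end Decomposition

section Dehomogenize

variable {R : Type*} [CommRing R] {n k : ℕ} {F : MvPolynomial (Fin 2) R}

/-- The univariate polynomial `F(X, 1)` attached to the binary form `F`; together with the degree
of `F` it determines `F`. -/
noncomputable def dehomogenize (F : MvPolynomial (Fin 2) R) : R[X] :=
  aeval ![Polynomial.X, 1] F

theorem homogenize_dehomogenize (hF : F.IsHomogeneous n) : (dehomogenize F).homogenize n = F :=
  Polynomial.homogenize_eq_of_isHomogeneous hF rfl

theorem eval_eq_sum_antidiagonal (hF : F.IsHomogeneous n) (x y : R) :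
    eval ![x, y] F = ∑ i ∈ Finset.HasAntidiagonal.antidiagonal n,
      (dehomogenize F).coeff i.1 * x ^ i.1 * y ^ i.2 := by
  conv_lhs => rw [← homogenize_dehomogenize hF]
  simp [Polynomial.homogenize, eval_monomial, Finsupp.prod_fintype, mul_assoc]

theorem natDegree_dehomogenize_le (hF : F.IsHomogeneous n) : (dehomogenize F).natDegree ≤ n := by
  rw [dehomogenize]
  simpa using MvPolynomial.aeval_natDegree_le (m := n) F hF.totalDegree_le
    ![Polynomial.X, 1] (n := 1) (by simp [Fin.forall_fin_two, Polynomial.natDegree_X_le])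

theorem dehomogenize_map {S : Type*} [CommRing S] (φ : R →+* S) (F : MvPolynomial (Fin 2) R) :
    dehomogenize (map φ F) = (dehomogenize F).map φ := by
  induction F using MvPolynomial.induction_on with
  | C a => simp [dehomogenize]
  | add F G hF hG => simp only [dehomogenize, map_add, Polynomial.map_add] at *; rw [hF, hG]
  | mul_X F i hF =>
    simp only [dehomogenize, map_mul, Polynomial.map_mul, map_X, aeval_X] at *
    rw [hF]
    fin_cases i <;> simp

theorem abs_coeff_le_polyNorm (F : MvPolynomial (Fin 2) ℤ) (d : Fin 2 →₀ ℕ) :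
    |F.coeff d| ≤ polyNorm F := by
  by_cases hd : d ∈ F.support
  · rw [Int.abs_eq_natAbs]
    exact_mod_cast Finset.le_sup (f := fun d => (F.coeff d).natAbs) hd
  · simp [notMem_support_iff.1 hd]

theorem abs_coeff_dehomogenize_le {F : MvPolynomial (Fin 2) ℤ} (hF : F.IsHomogeneous n) (i : ℕ) :
    |(dehomogenize F).coeff i| ≤ polyNorm F := by
  rcases le_or_gt i n with hi | hi
  · have hcoeff : (dehomogenize F).coeff i = F.coeff fun₀ | 0 => i | 1 => n - i := by
      conv_rhs => rw [← homogenize_dehomogenize hF]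
      simp [Polynomial.coeff_homogenize, Nat.add_sub_of_le hi]
    exact hcoeff ▸ abs_coeff_le_polyNorm F _
  · simp [Polynomial.coeff_eq_zero_of_natDegree_lt ((natDegree_dehomogenize_le hF).trans_lt hi)]

/-- A form which is a linear form times the square of a form of degree `k`. These are the
forms of degree `2 * k + 1` to which the square sieve does not apply. -/
def IsLinearMulSq (k : ℕ) (F : MvPolynomial (Fin 2) R) : Prop :=
  ∃ L Q : MvPolynomial (Fin 2) R, L.IsHomogeneous 1 ∧ Q.IsHomogeneous k ∧ F = L * Q ^ 2

theorem isLinearMulSq_zero (k : ℕ) : IsLinearMulSq k (0 : MvPolynomial (Fin 2) R) :=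
  ⟨0, 0, isHomogeneous_zero _ _ _, isHomogeneous_zero _ _ _, by simp⟩

theorem isLinearMulSq_of_dehomogenize_eq (hF : F.IsHomogeneous (2 * k + 1)) {g h : R[X]}
    (hfg : dehomogenize F = h ^ 2 * g) (hg : g.natDegree ≤ 1) (hh : h.natDegree ≤ k) :
    IsLinearMulSq k F := by
  refine ⟨g.homogenize 1, h.homogenize k, Polynomial.isHomogeneous_homogenize g,
    Polynomial.isHomogeneous_homogenize h, ?_⟩
  rw [sq] at hfg
  rw [← homogenize_dehomogenize hF, hfg, two_mul, Polynomial.homogenize_mul _ _ ?_ hg,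
    Polynomial.homogenize_mul _ _ hh hh]
  · ring
  · exact Polynomial.natDegree_mul_le.trans (add_le_add hh hh)

theorem two_le_natDegree_of_not_isLinearMulSq [IsDomain R] (hF : F.IsHomogeneous (2 * k + 1))
    (hne : ¬ IsLinearMulSq k F) {g h : R[X]} (hfg : dehomogenize F = h ^ 2 * g) :
    2 ≤ g.natDegree := by
  by_contra! hg
  refine hne (isLinearMulSq_of_dehomogenize_eq hF hfg (by omega) ?_)
  have hf₀ : h ^ 2 * g ≠ 0 := by
    rw [← hfg]
    intro h₀
    rw [← homogenize_dehomogenize hF, h₀, Polynomial.homogenize_zero] at hne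
    exact hne (isLinearMulSq_zero k)
  have hdeg := natDegree_dehomogenize_le hF
  rw [hfg, Polynomial.natDegree_mul (left_ne_zero_of_mul hf₀) (right_ne_zero_of_mul hf₀),
    Polynomial.natDegree_pow] at hdeg
  omega

end Dehomogenize

section Nondegenerate

/-- A polynomial that is not a constant times a square, even after multiplication by a nonzero
polynomial of degree at most one. This controls the twists of its quadratic character sums by
linear polynomials. -/
def IsNondegenerate {R : Type*} [CommRing R] (f : R[X]) : Prop :=
  ∀ a b : R, a ≠ 0 ∨ b ≠ 0 → ¬ IsConstMulSq (f * (Polynomial.C a * Polynomial.X + Polynomial.C b))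

theorem isNondegenerate_sq_mul {K : Type*} [Field K] {g h : K[X]} (hh : h ≠ 0)
    (hg : Squarefree g) (hdeg : 2 ≤ g.natDegree) : IsNondegenerate (h ^ 2 * g) := by
  rintro a b hab ⟨c, s, hs⟩
  set l : K[X] := Polynomial.C a * Polynomial.X + Polynomial.C b
  have hl : l ≠ 0 := fun h₀ => by
    have ha := congrArg (Polynomial.coeff · 1) h₀
    have hb := congrArg (Polynomial.coeff · 0) h₀
    simp [l, Polynomial.coeff_C] at ha hb
    tauto
  have hg₀ : g ≠ 0 := by rintro rfl; simp at hdeg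
  have hc : IsUnit (Polynomial.C c) := by
    refine Polynomial.isUnit_C.2 (isUnit_iff_ne_zero.2 ?_)
    rintro rfl
    simp [hh, hg₀, hl] at hs
  have hhs : h ^ 2 ∣ s ^ 2 := hc.dvd_mul_left.1 ⟨g * l, by rw [← hs]; ring⟩
  obtain ⟨t, rfl⟩ := (UniqueFactorizationMonoid.pow_dvd_pow_iff_dvd two_ne_zero).1 hhs
  have hgl : g * l = Polynomial.C c * t ^ 2 :=
    mul_left_cancel₀ (pow_ne_zero 2 hh) (by linear_combination hs)
  obtain ⟨r, rfl⟩ := (hg.dvd_pow_iff_dvd two_ne_zero).1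
    (hc.dvd_mul_left.1 ⟨l, hgl.symm⟩)
  have hdvd : g ∣ l := ⟨Polynomial.C c * r ^ 2, mul_left_cancel₀ hg₀ (by rw [hgl]; ring)⟩
  have hle := Polynomial.natDegree_le_of_dvd hdvd hl
  have hl₁ : l.natDegree ≤ 1 := Polynomial.natDegree_linear_le
  omega

theorem squarefree_map_of_resultant_ne_zero {R K : Type*} [CommRing R] [Field K] (φ : R →+* K)
    {g : R[X]} (hg : g.natDegree ≠ 0) (hres : φ (g.resultant g.derivative) ≠ 0) :
    Squarefree (g.map φ) := by
  obtain ⟨u, v, -, -, huv⟩ := Polynomial.exists_mul_add_mul_eq_C_resultant g g.derivative le_rfl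
    le_rfl (Or.inl hg)
  have hmap := congrArg (Polynomial.map φ) huv
  rw [Polynomial.map_add, Polynomial.map_mul, Polynomial.map_mul, Polynomial.map_C] at hmap
  set r := φ (g.resultant g.derivative)
  have hr : Polynomial.C r⁻¹ * Polynomial.C r = 1 := by
    rw [← Polynomial.C_mul, inv_mul_cancel₀ hres, Polynomial.C_1]
  refine Polynomial.Separable.squarefree
    ⟨Polynomial.C r⁻¹ * u.map φ, Polynomial.C r⁻¹ * v.map φ, ?_⟩
  rw [Polynomial.derivative_map]
  linear_combination Polynomial.C r⁻¹ * hmap + hr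

theorem resultant_derivative_ne_zero {g : ℤ[X]} (hg : Squarefree g) (hg₀ : g ≠ 0) :
    g.resultant g.derivative ≠ 0 := by
  intro h₀
  have hsep := PerfectField.separable_iff_squarefree.2 (squarefree_map_algebraMap ℚ hg hg₀)
  have hmap : (g.map (algebraMap ℤ ℚ)).resultant (g.map (algebraMap ℤ ℚ)).derivative = 0 := by
    have hinj : Function.Injective (algebraMap ℤ ℚ) := IsFractionRing.injective ℤ ℚ
    rw [Polynomial.derivative_map, Polynomial.natDegree_map_eq_of_injective hinj,
      Polynomial.natDegree_map_eq_of_injective hinj, Polynomial.resultant_map_map, h₀, map_zero]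
  rw [Polynomial.resultant_eq_zero_iff] at hmap
  exact hmap.2 hsep

end Nondegenerate

section Height

theorem abs_resultant_le {f g : ℤ[X]} {B : ℤ} (hf : ∀ i, |f.coeff i| ≤ B)
    (hg : ∀ i, |g.coeff i| ≤ B) (m n : ℕ) :
    |f.resultant g m n| ≤ (m + n).factorial * B ^ (m + n) := by
  have hB : 0 ≤ B := (abs_nonneg _).trans (hf 0)
  have hentry (i j) : AbsoluteValue.abs (f.sylvester g m n i j) ≤ B := by
    rw [AbsoluteValue.abs_apply, Polynomial.sylvester, Matrix.of_apply]
    refine Fin.addCases (fun j => ?_) (fun j => ?_) j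
    · rw [Fin.addCases_left]
      split_ifs
      · exact hg _
      · simpa using hB
    · rw [Fin.addCases_right]
      split_ifs
      · exact hf _
      · simpa using hB
  rw [Polynomial.resultant]
  simpa [AbsoluteValue.abs_apply] using Matrix.det_le hentry

theorem abs_coeff_derivative_le {g : ℤ[X]} {n : ℕ} {B : ℤ} (hn : g.natDegree ≤ n)
    (hg : ∀ i, |g.coeff i| ≤ B) (i : ℕ) : |g.derivative.coeff i| ≤ n * B := by
  have hB : 0 ≤ B := (abs_nonneg _).trans (hg 0)
  rw [Polynomial.coeff_derivative]
  rcases le_or_gt (i + 1) n with hi | hi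
  · rw [abs_mul, mul_comm, abs_of_nonneg (by positivity : (0 : ℤ) ≤ i + 1)]
    exact mul_le_mul (by exact_mod_cast hi) (hg _) (abs_nonneg _) (by positivity)
  · rw [Polynomial.coeff_eq_zero_of_natDegree_lt (by omega)]
    simpa using mul_nonneg (Nat.cast_nonneg n) hB

theorem mahlerMeasure_map_le {f : ℤ[X]} {n H : ℕ} (hn : f.natDegree ≤ n)
    (hf : ∀ i, |f.coeff i| ≤ H) : (f.map (Int.castRingHom ℂ)).mahlerMeasure ≤ (n + 1) * H := by
  refine (Polynomial.mahlerMeasure_le_sum_norm_coeff _).trans ?_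
  rw [Polynomial.sum_over_range' _ (by simp) (n + 1)
    (Nat.lt_succ_of_le (Polynomial.natDegree_map_le.trans hn))]
  refine (Finset.sum_le_card_nsmul _ _ (H : ℝ) fun j _ => ?_).trans (by simp)
  rw [Polynomial.coeff_map, eq_intCast, Complex.norm_intCast]
  exact_mod_cast hf j

theorem abs_coeff_le_of_mul {q g : ℤ[X]} (hq : q ≠ 0) {n H : ℕ} (hn : (q * g).natDegree ≤ n)
    (hH : ∀ i, |(q * g).coeff i| ≤ H) (i : ℕ) : |g.coeff i| ≤ 2 ^ n * ((n + 1) * H) := by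
  rcases eq_or_ne g 0 with rfl | hg
  · rw [Polynomial.coeff_zero, abs_zero]
    positivity
  have hgn : g.natDegree ≤ n := by
    rw [Polynomial.natDegree_mul hq hg] at hn
    omega
  have hcoeff := Polynomial.norm_coeff_le_choose_mul_mahlerMeasure_of_one_le_mahlerMeasure i
    (g.map (Int.castRingHom ℂ)) (q.map (Int.castRingHom ℂ))
    (Polynomial.one_le_mahlerMeasure_of_ne_zero hq)
  rw [← Polynomial.map_mul, mul_comm g, Polynomial.coeff_map, eq_intCast, Complex.norm_intCast,
    Polynomial.natDegree_map_eq_of_injective (RingHom.injective_int _)] at hcoeff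
  have hchoose : (g.natDegree.choose i : ℝ) ≤ 2 ^ n := by
    exact_mod_cast (Nat.choose_le_two_pow _ _).trans (Nat.pow_le_pow_right two_pos hgn)
  have hle : |(g.coeff i : ℝ)| ≤ 2 ^ n * ((n + 1) * H) :=
    hcoeff.trans (mul_le_mul hchoose (mahlerMeasure_map_le hn hH)
      (Polynomial.mahlerMeasure_nonneg _) (by positivity))
  exact_mod_cast hle

theorem abs_resultant_derivative_le {g : ℤ[X]} {n : ℕ} {B : ℤ} (hg : g.natDegree ≤ n)
    (hn : n ≠ 0) (hB : 1 ≤ B) (hgB : ∀ i, |g.coeff i| ≤ B) :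
    |g.resultant g.derivative| ≤ (2 * n).factorial * (n * B) ^ (2 * n) := by
  have hn₁ : (1 : ℤ) ≤ n := by exact_mod_cast Nat.one_le_iff_ne_zero.2 hn
  have hdeg : g.natDegree + g.derivative.natDegree ≤ 2 * n := by
    have := Polynomial.natDegree_derivative_le g
    omega
  refine (abs_resultant_le (B := n * B) (fun i => (hgB i).trans ?_)
    (abs_coeff_derivative_le hg hgB) _ _).trans ?_
  · exact le_mul_of_one_le_left (by positivity) hn₁
  · gcongr
    exact one_le_mul_of_one_le_of_one_le hn₁ hB

end Height

theorem abs_leadingCoeff_mul_resultant_le {h g : ℤ[X]} {n H : ℕ} (hh : h ≠ 0) (hg : g ≠ 0)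
    (hn : n ≠ 0) (hdeg : (h ^ 2 * g).natDegree ≤ n) (hH : ∀ i, |(h ^ 2 * g).coeff i| ≤ H) :
    |(h ^ 2 * g).leadingCoeff * g.resultant g.derivative| ≤
      (2 * n).factorial * (n * (2 ^ n * (n + 1))) ^ (2 * n) * H ^ (2 * n + 1) := by
  have hh₂ : h ^ 2 ≠ 0 := pow_ne_zero 2 hh
  have hlead : |(h ^ 2 * g).leadingCoeff| ≤ H := hH _
  have hH₁ : (1 : ℤ) ≤ H :=
    (Int.one_le_abs (Polynomial.leadingCoeff_ne_zero.2 (mul_ne_zero hh₂ hg))).trans hlead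
  have hgn : g.natDegree ≤ n := by
    rw [Polynomial.natDegree_mul hh₂ hg] at hdeg
    omega
  have hB : (1 : ℤ) ≤ 2 ^ n * ((n + 1) * H) :=
    one_le_mul_of_one_le_of_one_le (one_le_pow₀ one_le_two)
      (one_le_mul_of_one_le_of_one_le (by simp) hH₁)
  calc |(h ^ 2 * g).leadingCoeff * g.resultant g.derivative|
      ≤ H * ((2 * n).factorial * (n * (2 ^ n * ((n + 1) * H))) ^ (2 * n)) := by
        rw [abs_mul]
        exact mul_le_mul hlead (abs_resultant_derivative_le hgn hn hB
          (abs_coeff_le_of_mul hh₂ hdeg hH)) (abs_nonneg _) (by positivity)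
    _ = (2 * n).factorial * (n * (2 ^ n * (n + 1)) * H) ^ (2 * n) * H := by ring
    _ = _ := by rw [mul_pow, pow_succ]; ring

theorem isNondegenerate_map_of_leadingCoeff_mul_resultant {K : Type*} [Field K] {h g : ℤ[X]}
    (φ : ℤ →+* K) (hdeg : 2 ≤ g.natDegree)
    (hD : φ ((h ^ 2 * g).leadingCoeff * g.resultant g.derivative) ≠ 0) :
    IsNondegenerate ((h ^ 2 * g).map φ) := by
  rw [map_mul, mul_ne_zero_iff, Polynomial.leadingCoeff_mul, map_mul, mul_ne_zero_iff,
    Polynomial.leadingCoeff_pow, map_pow, pow_ne_zero_iff two_ne_zero] at hD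
  obtain ⟨⟨hh, hg⟩, hres⟩ := hD
  rw [Polynomial.map_mul, Polynomial.map_pow]
  refine isNondegenerate_sq_mul (fun h₀ => hh ?_)
    (squarefree_map_of_resultant_ne_zero φ (by omega) hres) ?_
  · rw [Polynomial.leadingCoeff, ← Polynomial.coeff_map, h₀, Polynomial.coeff_zero]
  · rwa [Polynomial.natDegree_map_of_leadingCoeff_ne_zero φ hg]

theorem exists_forall_isNondegenerate_of_not_dvd (k : ℕ) :
    ∃ E : ℕ, ∀ F : MvPolynomial (Fin 2) ℤ, F.IsHomogeneous (2 * k + 1) → ¬ IsLinearMulSq k F →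
      ∃ D : ℕ, D ≠ 0 ∧ D ≤ (2 * polyNorm F) ^ E ∧ ∀ (p : ℕ) [Fact p.Prime], ¬ p ∣ D →
        IsNondegenerate (dehomogenize (map (Int.castRingHom (ZMod p)) F)) := by
  set n := 2 * k + 1
  set A := (2 * n).factorial * (n * (2 ^ n * (n + 1))) ^ (2 * n)
  refine ⟨A + (2 * n + 1), fun F hF hne => ?_⟩
  have hf₀ : dehomogenize F ≠ 0 := fun h₀ => hne <|
    isLinearMulSq_of_dehomogenize_eq hF (g := 0) (h := 0) (by simpa using h₀) (by simp) (by simp)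
  have hnd := natDegree_dehomogenize_le hF
  have hH := abs_coeff_dehomogenize_le hF
  obtain ⟨h, g, hfg, hg⟩ := exists_eq_sq_mul_squarefree hf₀
  have hdeg := two_le_natDegree_of_not_isLinearMulSq hF hne hfg
  rw [hfg] at hf₀ hnd hH
  have hh : h ≠ 0 := by rintro rfl; simp at hf₀
  have hg₀ := right_ne_zero_of_mul hf₀
  have hD₀ := mul_ne_zero (Polynomial.leadingCoeff_ne_zero.2 hf₀)
    (resultant_derivative_ne_zero hg hg₀)
  refine ⟨_, Int.natAbs_ne_zero.2 hD₀, ?_, fun p _ hp => ?_⟩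
  · have hF₀ : 0 < polyNorm F := by
      exact_mod_cast (abs_pos.2 (Polynomial.leadingCoeff_ne_zero.2 hf₀)).trans_le (hH _)
    have hbound := abs_leadingCoeff_mul_resultant_le hh hg₀ (by omega) hnd hH
    calc _ ≤ A * polyNorm F ^ (2 * n + 1) := by
          rw [Int.abs_eq_natAbs] at hbound
          exact_mod_cast hbound
      _ ≤ (2 * polyNorm F) ^ A * (2 * polyNorm F) ^ (2 * n + 1) := by
          gcongr
          · exact A.lt_two_pow_self.le.trans (Nat.pow_le_pow_left (by omega) A)
          · omega
      _ = _ := (pow_add _ _ _).symm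
  · rw [dehomogenize_map, hfg]
    refine isNondegenerate_map_of_leadingCoeff_mul_resultant _ hdeg ?_
    rwa [eq_intCast, Ne, ZMod.intCast_zmod_eq_zero_iff_dvd, Int.natCast_dvd]

/-! ### Character sums of binary forms -/

section Fourier

variable {G ι : Type*} [AddCommGroup G] (B : Finset ι) (r : ι → G)

theorem norm_sum_addChar_sq [Finite G] (χ : AddChar G ℂ) :
    ((‖∑ i ∈ B, χ (r i)‖ ^ 2 : ℝ) : ℂ) = ∑ i ∈ B, ∑ j ∈ B, χ (r j - r i) := by
  have hsq : ((‖∑ i ∈ B, χ (r i)‖ ^ 2 : ℝ) : ℂ)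
      = (starRingEnd ℂ) (∑ i ∈ B, χ (r i)) * ∑ i ∈ B, χ (r i) := by
    rw [← Complex.normSq_eq_conj_mul_self, Complex.normSq_eq_norm_sq]
  rw [hsq, map_sum, Finset.sum_mul_sum]
  refine Finset.sum_congr rfl fun i _ => Finset.sum_congr rfl fun j _ => ?_
  rw [sub_eq_add_neg, AddChar.map_add_eq_mul, mul_comm, AddChar.map_neg_eq_conj]

variable [Fintype G]

theorem card_mul_eq_sum_addChar (ψ : G → ℂ) (z : G) :
    (Fintype.card G : ℂ) * ψ z = ∑ χ : AddChar G ℂ, (∑ g, ψ g * χ g) * χ (-z) := by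
  classical
  have horth (g : G) : ∑ χ : AddChar G ℂ, ψ g * χ g * χ (-z)
      = if g = z then Fintype.card G * ψ z else 0 := by
    calc ∑ χ : AddChar G ℂ, ψ g * χ g * χ (-z) = ψ g * ∑ χ : AddChar G ℂ, χ (g - z) := by
          rw [Finset.mul_sum]
          refine Finset.sum_congr rfl fun χ _ => ?_
          rw [sub_eq_add_neg, AddChar.map_add_eq_mul, mul_assoc]
      _ = _ := by
          rw [AddChar.sum_apply_eq_ite, sub_eq_zero]
          split_ifs with h
          · rw [h, mul_comm]
          · rw [mul_zero]
  simp_rw [Finset.sum_mul]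
  rw [Finset.sum_comm]
  simp [horth]

theorem card_mul_sum_sum_sub (ψ : G → ℂ) :
    (Fintype.card G : ℂ) * ∑ i ∈ B, ∑ j ∈ B, ψ (r i - r j)
      = ∑ χ : AddChar G ℂ, (∑ g, ψ g * χ g) * ((‖∑ i ∈ B, χ (r i)‖ ^ 2 : ℝ) : ℂ) := by
  simp_rw [norm_sum_addChar_sq, Finset.mul_sum, card_mul_eq_sum_addChar, neg_sub]
  symm
  rw [Finset.sum_comm]
  exact Finset.sum_congr rfl fun i _ => Finset.sum_comm

variable [DecidableEq G]

theorem sum_norm_sum_addChar_sq :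
    ∑ χ : AddChar G ℂ, ‖∑ i ∈ B, χ (r i)‖ ^ 2
      = Fintype.card G * (((B ×ˢ B).filter fun x => r x.1 = r x.2).card : ℝ) := by
  have h : (Fintype.card G : ℂ) * ∑ i ∈ B, ∑ j ∈ B, (if r i = r j then 1 else 0)
      = ∑ χ : AddChar G ℂ, ((‖∑ i ∈ B, χ (r i)‖ ^ 2 : ℝ) : ℂ) := by
    simpa [Pi.single_apply, sub_eq_zero] using card_mul_sum_sum_sub B r (Pi.single 0 1)
  rw [Finset.natCast_card_filter, Finset.sum_product]
  apply Complex.ofReal_injective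
  push_cast [apply_ite Complex.ofReal] at h ⊢
  exact h.symm

theorem norm_sum_sum_sub_le {ψ : G → ℂ} {M : ℝ}
    (hM : ∀ χ : AddChar G ℂ, ‖∑ g, ψ g * χ g‖ ≤ M) :
    ‖∑ i ∈ B, ∑ j ∈ B, ψ (r i - r j)‖ ≤
      M * (((B ×ˢ B).filter fun x => r x.1 = r x.2).card : ℝ) := by
  refine le_of_mul_le_mul_left ?_ (Nat.cast_pos.2 (Fintype.card_pos (α := G)) : (0 : ℝ) < _)
  calc (Fintype.card G : ℝ) * ‖∑ i ∈ B, ∑ j ∈ B, ψ (r i - r j)‖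
      = ‖∑ χ : AddChar G ℂ, (∑ g, ψ g * χ g) * ((‖∑ i ∈ B, χ (r i)‖ ^ 2 : ℝ) : ℂ)‖ := by
        rw [← card_mul_sum_sum_sub, norm_mul, Complex.norm_natCast]
    _ ≤ ∑ χ : AddChar G ℂ, M * ‖∑ i ∈ B, χ (r i)‖ ^ 2 := by
        refine norm_sum_le_of_le _ fun χ _ => ?_
        rw [norm_mul, Complex.norm_real, Real.norm_of_nonneg (by positivity)]
        exact mul_le_mul_of_nonneg_right (hM χ) (by positivity)
    _ = _ := by rw [← Finset.mul_sum, sum_norm_sum_addChar_sq, mul_left_comm]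

theorem norm_sum_mul_addChar_prod_le {G₁ G₂ : Type*} [AddCommGroup G₁] [AddCommGroup G₂]
    [Fintype G₁] [Fintype G₂] {ψ₁ : G₁ → ℂ} {ψ₂ : G₂ → ℂ} {M₁ M₂ : ℝ}
    (h₁ : ∀ χ : AddChar G₁ ℂ, ‖∑ g, ψ₁ g * χ g‖ ≤ M₁)
    (h₂ : ∀ χ : AddChar G₂ ℂ, ‖∑ g, ψ₂ g * χ g‖ ≤ M₂) (χ : AddChar (G₁ × G₂) ℂ) :
    ‖∑ g, ψ₁ g.1 * ψ₂ g.2 * χ g‖ ≤ M₁ * M₂ := by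
  have hχ (u : G₁) (v : G₂) : χ (u, v) = χ (u, 0) * χ (0, v) := by
    rw [← AddChar.map_add_eq_mul, Prod.mk_add_mk, add_zero, zero_add]
  have hprod : ∑ g, ψ₁ g.1 * ψ₂ g.2 * χ g =
      (∑ u, ψ₁ u * χ.compAddMonoidHom (AddMonoidHom.inl _ _) u) *
        ∑ v, ψ₂ v * χ.compAddMonoidHom (AddMonoidHom.inr _ _) v := by
    rw [Finset.sum_mul_sum, Fintype.sum_prod_type]
    refine Finset.sum_congr rfl fun u _ => Finset.sum_congr rfl fun v _ => ?_
    rw [hχ, mul_mul_mul_comm]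
    rfl
  rw [hprod, norm_mul]
  exact mul_le_mul (h₁ _) (h₂ _) (norm_nonneg _) ((norm_nonneg _).trans (h₁ 1))

end Fourier

section GaussSum

variable (p : ℕ) [Fact p.Prime]

/-- The quadratic character of `ZMod p`, with values in `ℂ`. -/
noncomputable def complexQuadraticChar : MulChar (ZMod p) ℂ :=
  (quadraticChar (ZMod p)).ringHomComp (Int.castRingHom ℂ)

theorem complexQuadraticChar_apply (x : ZMod p) :
    complexQuadraticChar p x = ((quadraticChar (ZMod p) x : ℤ) : ℂ) := rfl

theorem isQuadratic_complexQuadraticChar : (complexQuadraticChar p).IsQuadratic :=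
  (quadraticChar_isQuadratic (ZMod p)).comp _

theorem norm_complexQuadraticChar_le_one (x : ZMod p) : ‖complexQuadraticChar p x‖ ≤ 1 := by
  rcases isQuadratic_complexQuadraticChar p x with h | h | h <;> simp [h]

variable {p}

theorem complexQuadraticChar_ne_one (hp : p ≠ 2) : complexQuadraticChar p ≠ 1 :=
  (MulChar.ringHomComp_ne_one_iff (RingHom.injective_int _)).2
    (quadraticChar_ne_one (by rwa [ZMod.ringChar_zmod_n]))

theorem complexQuadraticChar_pow_of_odd {n : ℕ} (hn : Odd n) (x : ZMod p) :
    complexQuadraticChar p (x ^ n) = complexQuadraticChar p x := by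
  have hodd (y : ℂ) (hy : y = 0 ∨ y = 1 ∨ y = -1) : y ^ n = y := by
    rcases hy with rfl | rfl | rfl
    · exact zero_pow hn.pos.ne'
    · exact one_pow n
    · exact hn.neg_one_pow
  rw [map_pow, hodd _ (isQuadratic_complexQuadraticChar p x)]

theorem norm_gaussSum_complexQuadraticChar (hp : p ≠ 2) :
    ‖gaussSum (complexQuadraticChar p) (ZMod.stdAddChar (N := p))‖ = √p := by
  have hsq : gaussSum (complexQuadraticChar p) (ZMod.stdAddChar (N := p)) ^ 2 =
      complexQuadraticChar p (-1) * Fintype.card (ZMod p) :=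
    gaussSum_sq (complexQuadraticChar_ne_one hp) (isQuadratic_complexQuadraticChar p)
      (ZMod.isPrimitive_stdAddChar p)
  replace hsq := congrArg norm hsq
  have hneg : ‖complexQuadraticChar p (-1)‖ = 1 := by
    rcases isQuadratic_complexQuadraticChar p (-1) with h | h | h
    · exact absurd h (isUnit_one.neg.map _).ne_zero
    all_goals simp [h]
  rw [norm_pow, norm_mul, hneg, one_mul, ZMod.card, Complex.norm_natCast] at hsq
  rw [← hsq, Real.sqrt_sq (norm_nonneg _)]

theorem sum_complexQuadraticChar_mul_stdAddChar (hp : p ≠ 2) (a : ZMod p) :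
    ∑ y : ZMod p, complexQuadraticChar p y * ZMod.stdAddChar (a * y) =
      complexQuadraticChar p a * gaussSum (complexQuadraticChar p) (ZMod.stdAddChar (N := p)) := by
  rcases eq_or_ne a 0 with rfl | ha
  · simpa [MulChar.map_zero] using
      MulChar.sum_eq_zero_of_ne_one (complexQuadraticChar_ne_one hp)
  · have h := gaussSum_mulShift_eq (complexQuadraticChar p) (ZMod.stdAddChar (N := p))
      (Units.mk0 a ha)
    rw [(isQuadratic_complexQuadraticChar p).inv] at h
    simpa [gaussSum] using h

theorem exists_eq_stdAddChar_mul (χ : AddChar (ZMod p) ℂ) :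
    ∃ a : ZMod p, ∀ x, χ x = ZMod.stdAddChar (a * x) := by
  have hbij : Function.Bijective (AddChar.mulShift (ZMod.stdAddChar (N := p))) := by
    rw [Fintype.bijective_iff_injective_and_card, AddChar.card_eq]
    exact ⟨AddChar.to_mulShift_inj_of_isPrimitive (ZMod.isPrimitive_stdAddChar p), rfl⟩
  obtain ⟨a, rfl⟩ := hbij.2 χ
  exact ⟨a, fun x => rfl⟩

theorem exists_eq_stdAddChar_mul_add_mul (χ : AddChar (ZMod p × ZMod p) ℂ) :
    ∃ a b : ZMod p, ∀ x y, χ (x, y) = ZMod.stdAddChar (a * x + b * y) := by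
  obtain ⟨a, ha⟩ := exists_eq_stdAddChar_mul (χ.compAddMonoidHom (AddMonoidHom.inl _ _))
  obtain ⟨b, hb⟩ := exists_eq_stdAddChar_mul (χ.compAddMonoidHom (AddMonoidHom.inr _ _))
  refine ⟨a, b, fun x y => ?_⟩
  rw [AddChar.map_add_eq_mul, ← ha, ← hb, AddChar.compAddMonoidHom_apply,
    AddChar.compAddMonoidHom_apply, ← AddChar.map_add_eq_mul]
  simp

end GaussSum

section BinaryForm

variable {p : ℕ} [Fact p.Prime] {n : ℕ} {F : MvPolynomial (Fin 2) (ZMod p)}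

theorem eval_mul_eq_eval_dehomogenize {K : Type*} [Field K] {F : MvPolynomial (Fin 2) K}
    (hF : F.IsHomogeneous n) (t : K) {y : K} (hy : y ≠ 0) :
    eval ![t * y, y] F = (dehomogenize F).eval t * y ^ n := by
  conv_lhs => rw [← homogenize_dehomogenize hF]
  rw [Polynomial.eval_homogenize (natDegree_dehomogenize_le hF) _ (by simpa using hy)]
  simp [hy]

theorem sum_mul_addChar_eq_of_ne_zero (hF : F.IsHomogeneous n) (hn : Odd n) {a b : ZMod p}
    {y : ZMod p} (hy : y ≠ 0) :
    ∑ x, complexQuadraticChar p (eval ![x, y] F) * ZMod.stdAddChar (a * x + b * y) =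
      ∑ t, complexQuadraticChar p ((dehomogenize F).eval t) *
        (complexQuadraticChar p y * ZMod.stdAddChar ((a * t + b) * y)) := by
  rw [← Equiv.sum_comp (Equiv.mulRight₀ y hy)]
  refine Finset.sum_congr rfl fun t _ => ?_
  rw [Equiv.mulRight₀_apply, eval_mul_eq_eval_dehomogenize hF t hy, map_mul,
    complexQuadraticChar_pow_of_odd hn, mul_assoc]
  congr 3
  ring

-- The substitution `x = t * y` turns the sum over `y ≠ 0` into a Gauss sum because `n` is odd.
theorem sum_complexQuadraticChar_mul_addChar_eq (hp : p ≠ 2) (hF : F.IsHomogeneous n) (hn : Odd n)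
    {χ : AddChar (ZMod p × ZMod p) ℂ} {a b : ZMod p}
    (hχ : ∀ x y, χ (x, y) = ZMod.stdAddChar (a * x + b * y)) :
    ∑ z : ZMod p × ZMod p, complexQuadraticChar p (eval ![z.1, z.2] F) * χ z =
      (∑ t, complexQuadraticChar p ((dehomogenize F *
          (Polynomial.C a * Polynomial.X + Polynomial.C b)).eval t)) *
        gaussSum (complexQuadraticChar p) (ZMod.stdAddChar (N := p)) +
      ∑ x, complexQuadraticChar p (eval ![x, 0] F) * χ (x, 0) := by
  rw [Fintype.sum_prod_type_right, ← Finset.sum_erase_add _ _ (Finset.mem_univ (0 : ZMod p))]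
  congr 1
  calc ∑ y ∈ Finset.univ.erase 0, ∑ x, complexQuadraticChar p (eval ![x, y] F) * χ (x, y)
      = ∑ y ∈ Finset.univ.erase 0, ∑ t, complexQuadraticChar p ((dehomogenize F).eval t) *
          (complexQuadraticChar p y * ZMod.stdAddChar ((a * t + b) * y)) := by
        refine Finset.sum_congr rfl fun y hy => ?_
        simp_rw [hχ]
        exact sum_mul_addChar_eq_of_ne_zero hF hn (Finset.ne_of_mem_erase hy)
    _ = ∑ t, complexQuadraticChar p ((dehomogenize F).eval t) *
          ∑ y, complexQuadraticChar p y * ZMod.stdAddChar ((a * t + b) * y) := by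
        rw [Finset.sum_comm]
        refine Finset.sum_congr rfl fun t _ => ?_
        rw [← Finset.mul_sum, Finset.sum_erase _ (by simp [MulChar.map_zero])]
    _ = _ := by
        rw [Finset.sum_mul]
        refine Finset.sum_congr rfl fun t _ => ?_
        rw [sum_complexQuadraticChar_mul_stdAddChar hp, ← mul_assoc, ← map_mul]
        simp

theorem norm_sum_complexQuadraticChar_mul_addChar_le (hp : p ≠ 2) (hF : F.IsHomogeneous n)
    (hn : Odd n) (hnd : IsNondegenerate (dehomogenize F)) (χ : AddChar (ZMod p × ZMod p) ℂ) :
    ‖∑ z : ZMod p × ZMod p, complexQuadraticChar p (eval ![z.1, z.2] F) * χ z‖ ≤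
      (11 * n + 12) * p := by
  obtain ⟨a, b, hχ⟩ := exists_eq_stdAddChar_mul_add_mul χ
  rw [sum_complexQuadraticChar_mul_addChar_eq hp hF hn hχ]
  set f := dehomogenize F * (Polynomial.C a * Polynomial.X + Polynomial.C b) with hf
  have hweil : ‖∑ t, complexQuadraticChar p (f.eval t)‖ ≤ 11 * (n + 1) * √p := by
    obtain ⟨rfl, rfl⟩ | hab : a = 0 ∧ b = 0 ∨ (a ≠ 0 ∨ b ≠ 0) := by tauto
    · simp only [hf, map_zero, zero_mul, add_zero, mul_zero, Polynomial.eval_zero,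
        MulChar.map_zero, Finset.sum_const_zero, norm_zero]
      positivity
    · have hdeg : f.natDegree ≤ n + 1 := Polynomial.natDegree_mul_le.trans
        (add_le_add (natDegree_dehomogenize_le hF) Polynomial.natDegree_linear_le)
      have h := abs_sum_quadraticChar_le hdeg (hnd a b hab)
      simp_rw [complexQuadraticChar_apply, ← Int.cast_sum, Complex.norm_intCast]
      exact_mod_cast h
  have hline : ‖∑ x, complexQuadraticChar p (eval ![x, 0] F) * χ (x, 0)‖ ≤ p := by
    refine (norm_sum_le_of_le _ (n := fun _ => 1) fun x _ => ?_).trans (by simp)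
    rw [norm_mul, AddChar.norm_apply, mul_one]
    exact norm_complexQuadraticChar_le_one _ _
  calc _ ≤ 11 * (n + 1) * √p * √p + p := by
        refine (norm_add_le _ _).trans (add_le_add ?_ hline)
        rw [norm_mul, norm_gaussSum_complexQuadraticChar hp]
        gcongr
    _ = _ := by rw [mul_assoc, Real.mul_self_sqrt (Nat.cast_nonneg p)]; ring

end BinaryForm

/-! ### The square sieve -/

section Counting

theorem card_filter_dvd_sub_le (N : ℕ) {m : ℕ} (hm : 0 < m) (a : ℤ) :
    (((Finset.Icc (0 : ℤ) N).filter fun x => (m : ℤ) ∣ x - a).card : ℝ) ≤ N / m + 1 := by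
  have hcard : ((Finset.Icc (0 : ℤ) N).filter fun x => (m : ℤ) ∣ x - a).card ≤
      (Finset.Icc (0 : ℤ) (N / m : ℕ)).card := by
    refine Finset.card_le_card_of_injOn (· / (m : ℤ)) (fun x hx => ?_) fun x hx y hy hxy => ?_
    · simp only [Finset.coe_filter, Finset.mem_Icc, Set.mem_ofPred_eq] at hx
      simp only [Finset.coe_Icc, Set.mem_Icc, Int.natCast_ediv]
      exact ⟨Int.ediv_nonneg hx.1.1 (by positivity),
        Int.ediv_le_ediv (by exact_mod_cast hm) hx.1.2⟩
    · simp only [Finset.coe_filter, Set.mem_ofPred_eq] at hx hy hxy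
      have hmod : x % m = y % m := Int.ModEq.trans (Int.modEq_iff_dvd.2 hx.2).symm
        (Int.modEq_iff_dvd.2 hy.2)
      rw [← Int.mul_ediv_add_emod x m, ← Int.mul_ediv_add_emod y m, hmod, hxy]
  rw [Int.card_Icc, sub_zero, Int.toNat_natCast_add_one] at hcard
  calc _ ≤ ((N / m + 1 : ℕ) : ℝ) := by exact_mod_cast hcard
    _ ≤ N / m + 1 := by push_cast; gcongr; exact Nat.cast_div_le

-- An element `z` with `|z| ≤ N` is `(u + z⁺) - (u + z⁻)` for every `u` in `Icc 0 N`.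
theorem card_mul_le_sum_sub {G : Type*} [AddCommGroup G] [Lattice G] [IsOrderedAddMonoid G]
    [LocallyFiniteOrder G] {f : G → ℝ} (hf : ∀ g, 0 ≤ f g) {N : G} {w : ℝ} {Z : Finset G}
    (hZ : ∀ z ∈ Z, |z| ≤ N ∧ w ≤ f z) :
    (Z.card : ℝ) * (Finset.Icc 0 N).card * w ≤
      ∑ x ∈ Finset.Icc 0 (2 • N) ×ˢ Finset.Icc 0 (2 • N), f (x.1 - x.2) := by
  classical
  let φ : G × G → G × G := fun x => (x.2 + x.1⁺, x.2 + x.1⁻)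
  have hφ (x : G × G) : (φ x).1 - (φ x).2 = x.1 := by
    simp only [φ, add_sub_add_left_eq_sub, posPart_sub_negPart]
  have hinj : Function.Injective φ := by
    intro x y hxy
    have hfst : x.1 = y.1 := by rw [← hφ x, ← hφ y, hxy]
    have hsnd : x.2 + x.1⁺ = y.2 + y.1⁺ := congrArg Prod.fst hxy
    rw [hfst] at hsnd
    exact Prod.ext hfst (add_right_cancel hsnd)
  have hmaps : (Z ×ˢ Finset.Icc 0 N).image φ ⊆
      Finset.Icc 0 (2 • N) ×ˢ Finset.Icc 0 (2 • N) := by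
    refine Finset.image_subset_iff.2 fun x hx => ?_
    obtain ⟨hx₁, hx₂⟩ := Finset.mem_product.1 hx
    obtain ⟨h0, hN⟩ := Finset.mem_Icc.1 hx₂
    have hpos : x.1⁺ ≤ N := (sup_le (le_abs_self _) (abs_nonneg _)).trans (hZ _ hx₁).1
    have hneg : x.1⁻ ≤ N := (sup_le (neg_le_abs _) (abs_nonneg _)).trans (hZ _ hx₁).1
    simp only [φ, Finset.mem_product, Finset.mem_Icc, two_nsmul]
    exact ⟨⟨add_nonneg h0 (posPart_nonneg _), add_le_add hN hpos⟩,
      add_nonneg h0 (negPart_nonneg _), add_le_add hN hneg⟩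
  calc (Z.card : ℝ) * (Finset.Icc 0 N).card * w = ∑ _x ∈ Z ×ˢ Finset.Icc 0 N, w := by
        rw [Finset.sum_const, Finset.card_product, nsmul_eq_mul, Nat.cast_mul]
    _ ≤ ∑ x ∈ Z ×ˢ Finset.Icc 0 N, f ((φ x).1 - (φ x).2) := by
        refine Finset.sum_le_sum fun _ hx => ?_
        rw [hφ]
        exact (hZ _ (Finset.mem_product.1 hx).1).2
    _ = ∑ x ∈ (Z ×ˢ Finset.Icc 0 N).image φ, f (x.1 - x.2) :=
        by rw [Finset.sum_image hinj.injOn]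
    _ ≤ _ := Finset.sum_le_sum_of_subset_of_nonneg hmaps fun _ _ _ => hf _

theorem sum_sum_sq_le {ι κ : Type*} {P : Finset ι} {S : Finset κ} {f : ι → κ → ℝ} {D E : ℝ}
    (hE : 0 ≤ E) (hdiag : ∀ p ∈ P, ∑ s ∈ S, f p s ^ 2 ≤ D)
    (hoff : ∀ p ∈ P, ∀ q ∈ P, p ≠ q → ∑ s ∈ S, f p s * f q s ≤ E) :
    ∑ s ∈ S, (∑ p ∈ P, f p s) ^ 2 ≤ P.card * D + P.card ^ 2 * E := by
  classical
  have hexpand : ∑ s ∈ S, (∑ p ∈ P, f p s) ^ 2 = ∑ p ∈ P, ∑ q ∈ P, ∑ s ∈ S, f p s * f q s := by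
    simp only [pow_two, Finset.sum_mul_sum]
    rw [Finset.sum_comm]
    exact Finset.sum_congr rfl fun p _ => Finset.sum_comm
  have hrow (p : ι) (hp : p ∈ P) : ∑ q ∈ P, ∑ s ∈ S, f p s * f q s ≤ D + P.card * E := by
    rw [← Finset.add_sum_erase _ _ hp]
    refine add_le_add (by simpa only [pow_two] using hdiag p hp) ?_
    calc ∑ q ∈ P.erase p, ∑ s ∈ S, f p s * f q s ≤ (P.erase p).card • E :=
          Finset.sum_le_card_nsmul _ _ _ fun q hq =>
            hoff p hp q (Finset.mem_of_mem_erase hq) (Finset.ne_of_mem_erase hq).symm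
      _ ≤ P.card * E := by
          rw [nsmul_eq_mul]
          gcongr
          exact Finset.erase_subset _ _
  rw [hexpand]
  refine (Finset.sum_le_card_nsmul _ _ _ hrow).trans_eq ?_
  rw [nsmul_eq_mul]
  ring

end Counting

section Sieve

/-- A prime at which the character sum estimate for the form `F` is available. -/
structure IsGoodPrime (F : MvPolynomial (Fin 2) ℤ) (p : ℕ) : Prop where
  prime : p.Prime
  ne_two : p ≠ 2
  isNondegenerate : IsNondegenerate (dehomogenize (map (Int.castRingHom (ZMod p)) F))

/-- The box of lattice points from which the differences in the square sieve are formed. -/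
noncomputable def box (A B : ℕ) : Finset (ℤ × ℤ) := Finset.Icc 0 (2 • ((A : ℤ), (B : ℤ)))

theorem card_Icc_zero_prod (A B : ℕ) :
    (Finset.Icc (0 : ℤ × ℤ) (A, B)).card = (A + 1) * (B + 1) := by
  rw [Finset.Icc_prod_def, Finset.card_product, Int.card_Icc, Int.card_Icc]
  simp only [Prod.fst_zero, Prod.snd_zero, sub_zero, Int.toNat_natCast_add_one]

theorem card_box (A B : ℕ) : (box A B).card = (2 * A + 1) * (2 * B + 1) := by
  have h := card_Icc_zero_prod (2 * A) (2 * B)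
  push_cast at h
  rw [box, ← h]
  rfl

variable {F : MvPolynomial (Fin 2) ℤ} {n p q : ℕ}

theorem complexQuadraticChar_intCast [Fact p.Prime] (m : ℤ) :
    complexQuadraticChar p m = ((jacobiSym m p : ℤ) : ℂ) := by
  rw [← jacobiSym.legendreSym.to_jacobiSym, complexQuadraticChar_apply]
  rfl

theorem eval_intCast_map {R : Type*} [CommRing R] (x y : ℤ) :
    eval ![(x : R), (y : R)] (map (Int.castRingHom R) F) = (eval ![x, y] F : ℤ) := by
  have hvec : ![(x : R), (y : R)] = Int.castRingHom R ∘ ![x, y] := by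
    ext i
    fin_cases i <;> rfl
  rw [hvec, eval_map]
  exact (eval₂_comp_left (Int.castRingHom R) (RingHom.id ℤ) ![x, y] F).symm

theorem complexQuadraticChar_eval_map [Fact p.Prime] (x y : ℤ) :
    complexQuadraticChar p (eval ![(x : ZMod p), (y : ZMod p)]
      (map (Int.castRingHom (ZMod p)) F)) = ((jacobiSym (eval ![x, y] F) p : ℤ) : ℂ) := by
  rw [← complexQuadraticChar_intCast, eval_intCast_map]

theorem card_filter_congruent_pairs_le (hp : p.Prime) (hq : q.Prime) (hpq : p ≠ q) (A B : ℕ) :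
    (((box A B ×ˢ box A B).filter fun x =>
      (((x.1.1 : ZMod p), (x.1.2 : ZMod p)), ((x.1.1 : ZMod q), (x.1.2 : ZMod q))) =
        (((x.2.1 : ZMod p), (x.2.2 : ZMod p)), ((x.2.1 : ZMod q), (x.2.2 : ZMod q)))).card : ℝ) ≤
      (box A B).card * ((2 * A / (p * q) + 1) * (2 * B / (p * q) + 1)) := by
  have hdvd {x y : ℤ} (h₁ : (x : ZMod p) = y) (h₂ : (x : ZMod q) = y) :
      ((p * q : ℕ) : ℤ) ∣ y - x := by
    rw [ZMod.intCast_eq_intCast_iff_dvd_sub] at h₁ h₂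
    rw [Nat.cast_mul]
    exact (Nat.isCoprime_iff_coprime.2 ((Nat.coprime_primes hp hq).2 hpq)).mul_dvd h₁ h₂
  rw [Finset.natCast_card_filter, Finset.sum_product, ← nsmul_eq_mul]
  refine Finset.sum_le_card_nsmul _ _ _ fun h _ => ?_
  rw [← Finset.natCast_card_filter]
  refine (Nat.cast_le.2 (Finset.card_le_card (t :=
    ((Finset.Icc (0 : ℤ) (2 * A : ℕ)).filter fun x => ((p * q : ℕ) : ℤ) ∣ x - h.1) ×ˢ
      ((Finset.Icc (0 : ℤ) (2 * B : ℕ)).filter fun x => ((p * q : ℕ) : ℤ) ∣ x - h.2))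
    fun h' hh' => ?_)).trans ?_
  · simp only [Finset.mem_filter, Prod.mk.injEq] at hh'
    obtain ⟨hmem, ⟨hp₁, hp₂⟩, hq₁, hq₂⟩ := hh'
    obtain ⟨⟨h0₁, h0₂⟩, hA, hB⟩ := Finset.mem_Icc.1 hmem
    simp only [Finset.mem_product, Finset.mem_filter, Finset.mem_Icc]
    refine ⟨⟨⟨h0₁, ?_⟩, hdvd hp₁ hq₁⟩, ⟨h0₂, ?_⟩, hdvd hp₂ hq₂⟩
    · simpa using hA
    · simpa using hB
  · have hm : 0 < p * q := Nat.mul_pos hp.pos hq.pos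
    have hA := card_filter_dvd_sub_le (2 * A) hm h.1
    have hB := card_filter_dvd_sub_le (2 * B) hm h.2
    rw [Finset.card_product]
    push_cast at hA hB ⊢
    gcongr

theorem abs_sum_jacobiSym_mul_jacobiSym_le (hF : F.IsHomogeneous n) (hn : Odd n)
    (hp : IsGoodPrime F p) (hq : IsGoodPrime F q) (hpq : p ≠ q) (A B : ℕ) :
    |((∑ x ∈ box A B ×ˢ box A B, jacobiSym (eval ![x.1.1 - x.2.1, x.1.2 - x.2.2] F) p *
        jacobiSym (eval ![x.1.1 - x.2.1, x.1.2 - x.2.2] F) q : ℤ) : ℝ)| ≤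
      (11 * n + 12) ^ 2 * (p * q) *
        ((box A B).card * ((2 * A / (p * q) + 1) * (2 * B / (p * q) + 1))) := by
  have := Fact.mk hp.prime
  have := Fact.mk hq.prime
  let r : ℤ × ℤ → (ZMod p × ZMod p) × (ZMod q × ZMod q) := fun h => ((h.1, h.2), (h.1, h.2))
  have hM := norm_sum_mul_addChar_prod_le
    (norm_sum_complexQuadraticChar_mul_addChar_le hp.ne_two (hF.map _) hn hp.isNondegenerate)
    (norm_sum_complexQuadraticChar_mul_addChar_le hq.ne_two (hF.map _) hn hq.isNondegenerate)
  have hsum := norm_sum_sum_sub_le (box A B) r hM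
  rw [← Finset.sum_product'] at hsum
  calc _ = _ := by
        rw [← Real.norm_eq_abs, ← Complex.norm_real]
        push_cast
        congr 1
        refine Finset.sum_congr rfl fun x _ => ?_
        rw [← complexQuadraticChar_eval_map, ← complexQuadraticChar_eval_map, Int.cast_sub,
          Int.cast_sub, Int.cast_sub, Int.cast_sub]
        rfl
    _ ≤ _ := hsum
    _ ≤ _ := mul_le_mul_of_nonneg_left (card_filter_congruent_pairs_le hp.prime hq.prime hpq A B)
        (by positivity)
    _ = _ := by ring

theorem half_card_le_sum_jacobiSym_sq {P : Finset ℕ} (hP : ∀ p ∈ P, p.Prime) {m : ℤ}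
    (hm : 2 * (P.filter fun p : ℕ => (p : ℤ) ∣ m).card ≤ P.card) :
    (P.card : ℝ) / 2 ≤ ∑ p ∈ P, (jacobiSym (m ^ 2) p : ℝ) := by
  have hterm (p : ℕ) (hp : p ∈ P) :
      (jacobiSym (m ^ 2) p : ℝ) = if ¬ (p : ℤ) ∣ m then 1 else 0 := by
    have := Fact.mk (hP p hp)
    rw [← jacobiSym.legendreSym.to_jacobiSym, ite_not]
    split_ifs with hdvd
    · rw [(legendreSym.eq_zero_iff p _).2, Int.cast_zero]
      exact (ZMod.intCast_zmod_eq_zero_iff_dvd _ p).2 (dvd_pow hdvd two_ne_zero)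
    · rw [legendreSym.sq_one', Int.cast_one]
      rwa [Ne, ZMod.intCast_zmod_eq_zero_iff_dvd]
  rw [Finset.sum_congr rfl hterm, ← Finset.natCast_card_filter, div_le_iff₀ two_pos]
  have hsplit := Finset.card_filter_add_card_filter_not (s := P) (fun p : ℕ => (p : ℤ) ∣ m)
  exact_mod_cast (by omega : P.card ≤ (P.filter fun p : ℕ => ¬ (p : ℤ) ∣ m).card * 2)

theorem sum_sum_jacobiSym_sq_le (hF : F.IsHomogeneous n) (hn : Odd n) (A B : ℕ) {P : Finset ℕ}
    {Q : ℝ} (hQ : 0 < Q) (hP : ∀ p ∈ P, IsGoodPrime F p ∧ (p : ℝ) ≤ Q ∧ Q ≤ (p : ℝ) ^ 2) :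
    ∑ x ∈ box A B ×ˢ box A B,
        (∑ p ∈ P, (jacobiSym (eval ![x.1.1 - x.2.1, x.1.2 - x.2.2] F) p : ℝ)) ^ 2 ≤
      P.card * ((box A B).card : ℝ) ^ 2 + (P.card : ℝ) ^ 2 * ((box A B).card *
        ((11 * n + 12) ^ 2 * (Q ^ 2 + 2 * A + 2 * B + 4 * A * B / Q))) := by
  refine sum_sum_sq_le (by positivity) (fun p _ => ?_) fun p hp q hq hpq => ?_
  · have hle (m : ℤ) : (jacobiSym m p : ℝ) ^ 2 ≤ 1 := by
      rcases jacobiSym.trichotomy m p with h | h | h <;> rw [h] <;> norm_num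
    refine (Finset.sum_le_card_nsmul _ _ 1 fun x _ => hle _).trans_eq ?_
    rw [nsmul_eq_mul, mul_one, Finset.card_product, Nat.cast_mul, pow_two]
  · obtain ⟨hp, hpQ, hQp⟩ := hP p hp
    obtain ⟨hq, hqQ, hQq⟩ := hP q hq
    have hp0 : (0 : ℝ) < p := Nat.cast_pos.2 hp.prime.pos
    have hq0 : (0 : ℝ) < q := Nat.cast_pos.2 hq.prime.pos
    have hle : (p * q : ℝ) ≤ Q ^ 2 := by
      rw [pow_two]
      exact mul_le_mul hpQ hqQ hq0.le hQ.le
    have hge : Q ≤ p * q := by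
      refine le_of_sq_le_sq ?_ (by positivity)
      rw [mul_pow, pow_two Q]
      exact mul_le_mul hQp hQq hQ.le (by positivity)
    calc _ ≤ (11 * n + 12) ^ 2 * (p * q) *
          ((box A B).card * ((2 * A / (p * q) + 1) * (2 * B / (p * q) + 1)) : ℝ) := by
          have h := (le_abs_self _).trans (abs_sum_jacobiSym_mul_jacobiSym_le hF hn hp hq hpq A B)
          exact_mod_cast h
      _ = (box A B).card * ((11 * n + 12) ^ 2 *
          (p * q + 2 * A + 2 * B + 4 * A * B / (p * q))) := by
          field_simp
          ring
      _ ≤ _ := by gcongr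

theorem card_le_of_isGoodPrime (hF : F.IsHomogeneous n) (hn : Odd n) {A B : ℕ} {P : Finset ℕ}
    {Q : ℝ} (hQ : 0 < Q) (hP : ∀ p ∈ P, IsGoodPrime F p ∧ (p : ℝ) ≤ Q ∧ Q ≤ (p : ℝ) ^ 2)
    (hP0 : 0 < P.card) {Z : Finset (ℤ × ℤ)}
    (hZ : ∀ z ∈ Z, |z.1| ≤ A ∧ |z.2| ≤ B ∧ ∃ m : ℤ, eval ![z.1, z.2] F = m ^ 2 ∧
      2 * (P.filter fun p : ℕ => (p : ℤ) ∣ m).card ≤ P.card) :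
    (Z.card : ℝ) ≤ 16 * ((2 * A + 1) * (2 * B + 1)) / P.card +
      16 * (11 * n + 12) ^ 2 * (Q ^ 2 + 2 * A + 2 * B + 4 * A * B / Q) := by
  have hlower := card_mul_le_sum_sub
    (f := fun z => (∑ p ∈ P, (jacobiSym (eval ![z.1, z.2] F) p : ℝ)) ^ 2)
    (fun _ => sq_nonneg _) (N := ((A : ℤ), (B : ℤ))) (w := ((P.card : ℝ) / 2) ^ 2) (Z := Z)
    fun z hz => by
      obtain ⟨hA, hB, m, hm, hcard⟩ := hZ z hz
      refine ⟨⟨hA, hB⟩, ?_⟩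
      have h := half_card_le_sum_jacobiSym_sq (fun p hp => (hP p hp).1.prime) hcard
      rw [hm]
      gcongr
  have hupper := sum_sum_jacobiSym_sq_le hF hn A B hQ hP
  have h := hlower.trans hupper
  rw [card_Icc_zero_prod, card_box] at h
  push_cast at h
  set b : ℝ := (2 * A + 1) * (2 * B + 1) with hb
  set E : ℝ := (11 * n + 12) ^ 2 * (Q ^ 2 + 2 * A + 2 * B + 4 * A * B / Q) with hE
  have hP0' : (0 : ℝ) < P.card := Nat.cast_pos.2 hP0
  have hb0 : 0 < b := by positivity
  have hbb : b / 4 ≤ (A + 1) * (B + 1) := by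
    rw [hb]
    linarith [show (0 : ℝ) ≤ A * B by positivity, show (0 : ℝ) ≤ A by positivity,
      show (0 : ℝ) ≤ B by positivity]
  refine le_of_mul_le_mul_right ?_ (by positivity : 0 < b * (P.card : ℝ) ^ 2)
  calc (Z.card : ℝ) * (b * (P.card : ℝ) ^ 2)
      = 16 * (Z.card * (b / 4) * (P.card / 2) ^ 2) := by ring
    _ ≤ 16 * (P.card * b ^ 2 + (P.card : ℝ) ^ 2 * (b * E)) := by
        refine mul_le_mul_of_nonneg_left (le_trans ?_ h) (by norm_num)
        gcongr
    _ = _ := by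
        rw [mul_assoc 16 _ (_ + _), ← hE]
        field_simp

end Sieve

section SievePrimes

theorem card_primeFactors_le_two_mul_log {n : ℕ} (hn : n ≠ 0) :
    (n.primeFactors.card : ℝ) ≤ 2 * Real.log n := by
  have hpow : 2 ^ n.primeFactors.card ≤ n :=
    (Finset.pow_card_le_prod _ _ _ fun p hp => (Nat.prime_of_mem_primeFactors hp).two_le).trans
      (Nat.le_of_dvd (Nat.pos_of_ne_zero hn) (Nat.prod_primeFactors_dvd n))
  have hlog : Real.log (2 ^ n.primeFactors.card) ≤ Real.log n :=
    Real.log_le_log (by positivity) (by exact_mod_cast hpow)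
  rw [Real.log_pow] at hlog
  nlinarith [Real.log_two_gt_d9, (n.primeFactors.card.cast_nonneg : (0 : ℝ) ≤ _)]

theorem card_filter_dvd_le_card_primeFactors {P : Finset ℕ} (hP : ∀ p ∈ P, p.Prime) {m : ℤ}
    (hm : m ≠ 0) : (P.filter fun p : ℕ => (p : ℤ) ∣ m).card ≤ m.natAbs.primeFactors.card := by
  refine Finset.card_le_card fun p hp => ?_
  obtain ⟨hpP, hpm⟩ := Finset.mem_filter.1 hp
  exact Nat.mem_primeFactors.2 ⟨hP p hpP, Int.natCast_dvd.1 hpm, Int.natAbs_ne_zero.2 hm⟩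

theorem le_primeCounting_floor {Q : ℝ} (hQ : 1000 ≤ Q) :
    0.6 * Q / Real.log Q ≤ Nat.primeCounting ⌊Q⌋₊ := by
  have hlog : Real.log (Q + 2) ≤ (Q + 2) / 1024 + 10 := by
    have hsplit : Real.log (Q + 2) = Real.log ((Q + 2) / 1024) + 10 * Real.log 2 := by
      rw [Real.log_div (by positivity) (by norm_num), show (1024 : ℝ) = 2 ^ 10 by norm_num,
        Real.log_pow]
      norm_num
    have hle := Real.log_le_sub_one_of_pos (x := (Q + 2) / 1024) (by positivity)
    linarith [Real.log_two_lt_d9]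
  refine le_trans ?_ (Chebyshev.pi_ge' (x := Q) (by linarith))
  refine div_le_div_of_nonneg_right ?_ (Real.log_nonneg (by linarith))
  nlinarith [Real.log_two_gt_d9]

/-- The primes in `[√Q, Q]` not dividing `2 * D`. -/
noncomputable def sievePrimes (Q : ℝ) (D : ℕ) : Finset ℕ :=
  ((Finset.Icc ⌈√Q⌉₊ ⌊Q⌋₊).filter Nat.Prime) \ (2 * D).primeFactors

theorem mem_sievePrimes {Q : ℝ} (hQ : 0 ≤ Q) {D p : ℕ} (hD : D ≠ 0) :
    p ∈ sievePrimes Q D ↔ (Q ≤ (p : ℝ) ^ 2 ∧ (p : ℝ) ≤ Q) ∧ p.Prime ∧ ¬ p ∣ 2 * D := by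
  rw [sievePrimes, Finset.mem_sdiff, Finset.mem_filter, Finset.mem_Icc, Nat.ceil_le,
    Real.sqrt_le_left (by positivity), Nat.le_floor_iff hQ, Nat.mem_primeFactors]
  have : 2 * D ≠ 0 := by positivity
  tauto

theorem primeCounting_floor_le (Q : ℝ) (D : ℕ) :
    Nat.primeCounting ⌊Q⌋₊ ≤
      (sievePrimes Q D).card + (2 * D).primeFactors.card + ⌈√Q⌉₊ := by
  have hsub : (Finset.range (⌊Q⌋₊ + 1)).filter Nat.Prime ⊆
      sievePrimes Q D ∪ (2 * D).primeFactors ∪ Finset.range ⌈√Q⌉₊ := by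
    intro p hp
    simp only [Finset.mem_filter, Finset.mem_range, Order.lt_add_one_iff] at hp
    simp only [sievePrimes, Finset.mem_union, Finset.mem_sdiff, Finset.mem_filter,
      Finset.mem_Icc, Finset.mem_range, hp, and_true]
    have := le_or_gt ⌈√Q⌉₊ p
    tauto
  rw [Nat.primeCounting, Nat.primeCounting', Nat.count_eq_card_filter_range]
  calc _ ≤ _ := Finset.card_le_card hsub
    _ ≤ _ := Finset.card_union_le _ _
    _ ≤ _ := by
      rw [Finset.card_range]
      gcongr
      exact Finset.card_union_le _ _

theorem le_card_sievePrimes {Q L : ℝ} {D : ℕ} (hD : D ≠ 0) (hL : Real.log 2 ≤ L)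
    (hQL : 10 ^ 6 * L ^ 2 ≤ Q) (hlogQ : 3 * Real.log Q ≤ L)
    (hlogD : 10 * L * Real.log (2 * D) ≤ Q) :
    Q / (2 * L) ≤ (sievePrimes Q D).card := by
  have hL₀ : 0.69 < L := lt_of_lt_of_le (by linarith [Real.log_two_gt_d9]) hL
  have hLpos : 0 < L := by linarith
  have hQ : 1000 ≤ Q := by nlinarith
  have hcount : (Nat.primeCounting ⌊Q⌋₊ : ℝ) ≤
      (sievePrimes Q D).card + (2 * D).primeFactors.card + ⌈√Q⌉₊ := by
    exact_mod_cast primeCounting_floor_le Q D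
  have hmain : 1.8 * (Q / L) ≤ Nat.primeCounting ⌊Q⌋₊ := by
    refine le_trans ?_ (le_primeCounting_floor hQ)
    rw [← mul_div_assoc, div_le_div_iff₀ hLpos (Real.log_pos (by linarith))]
    nlinarith
  have hdvd : ((2 * D).primeFactors.card : ℝ) ≤ 0.2 * (Q / L) := by
    refine (card_primeFactors_le_two_mul_log (by positivity)).trans ?_
    rw [← mul_div_assoc, le_div_iff₀ hLpos]
    push_cast
    linarith
  have hsqrt : √Q ≤ 0.001 * (Q / L) := by
    have hle : 1000 * L ≤ √Q := Real.le_sqrt_of_sq_le (by nlinarith)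
    rw [← mul_div_assoc, le_div_iff₀ hLpos]
    nlinarith [Real.mul_self_sqrt (show 0 ≤ Q by linarith)]
  have hone : 1 ≤ 0.01 * (Q / L) := by
    rw [← mul_div_assoc, le_div_iff₀ hLpos]
    nlinarith
  have hceil := Nat.ceil_lt_add_one (Real.sqrt_nonneg Q)
  have hhalf : Q / (2 * L) = 0.5 * (Q / L) := by field_simp; norm_num
  linarith

end SievePrimes

section SquarePoints

open Finset.HasAntidiagonal (antidiagonal)

/-- The integer points of the box `|x| ≤ X`, `|y| ≤ Y` at which `F` takes a nonzero square
value. -/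
def squarePoints (F : MvPolynomial (Fin 2) ℤ) (X Y : ℝ) : Set (ℤ × ℤ) :=
  {z | (|z.1| : ℝ) ≤ X ∧ (|z.2| : ℝ) ≤ Y ∧ ∃ m : ℤ, m ≠ 0 ∧ eval ![z.1, z.2] F = m ^ 2}

/-- The quantity `log (2‖F‖XY)` in which the counting bounds are expressed. -/
noncomputable def logSize (F : MvPolynomial (Fin 2) ℤ) (X Y : ℝ) : ℝ :=
  Real.log (2 * polyNorm F * X * Y)

variable {F : MvPolynomial (Fin 2) ℤ} {n : ℕ} {X Y : ℝ}

theorem abs_le_natFloor {a : ℤ} (h : (|a| : ℝ) ≤ X) : |a| ≤ (⌊X⌋₊ : ℤ) := by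
  rw [Int.abs_eq_natAbs, Nat.cast_le]
  exact Nat.le_floor (by simpa only [Nat.cast_natAbs, Int.cast_abs] using h)

theorem squarePoints_subset_box : squarePoints F X Y ⊆
    (Finset.Icc (-⌊X⌋₊ : ℤ) ⌊X⌋₊ ×ˢ Finset.Icc (-⌊Y⌋₊ : ℤ) ⌊Y⌋₊ : Finset (ℤ × ℤ)) := by
  intro z hz
  simp only [Finset.coe_product, Finset.coe_Icc, Set.mem_prod, Set.mem_Icc, ← abs_le]
  exact ⟨abs_le_natFloor hz.1, abs_le_natFloor hz.2.1⟩

theorem finite_squarePoints : (squarePoints F X Y).Finite :=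
  (Finset.finite_toSet _).subset squarePoints_subset_box

theorem ncard_squarePoints_le_box (hX : 1 ≤ X) (hY : 1 ≤ Y) :
    ((squarePoints F X Y).ncard : ℝ) ≤ 9 * (X * Y) := by
  have hcard := Set.ncard_le_ncard (squarePoints_subset_box (F := F) (X := X) (Y := Y))
  rw [Set.ncard_coe_finset, Finset.card_product, Int.card_Icc, Int.card_Icc] at hcard
  have hsize (N : ℕ) : ((N : ℤ) + 1 - -N).toNat = 2 * N + 1 := by omega
  rw [hsize, hsize] at hcard
  have hfloorX := Nat.floor_le (zero_le_one.trans hX)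
  have hfloorY := Nat.floor_le (zero_le_one.trans hY)
  calc ((squarePoints F X Y).ncard : ℝ) ≤ (2 * ⌊X⌋₊ + 1) * (2 * ⌊Y⌋₊ + 1) := by
        exact_mod_cast hcard
    _ ≤ (3 * X) * (3 * Y) := by gcongr <;> linarith
    _ = 9 * (X * Y) := by ring

theorem one_le_polyNorm (hF : F ≠ 0) : 1 ≤ polyNorm F := by
  obtain ⟨d, hd⟩ := MvPolynomial.ne_zero_iff.1 hF
  have := (Int.one_le_abs hd).trans (abs_coeff_le_polyNorm F d)
  exact_mod_cast this

theorem log_two_le_logSize (hF : F ≠ 0) (hX : 1 ≤ X) (hY : 1 ≤ Y) :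
    Real.log 2 ≤ logSize F X Y := by
  have hnorm : (1 : ℝ) ≤ polyNorm F := by exact_mod_cast one_le_polyNorm hF
  refine Real.log_le_log two_pos ?_
  calc (2 : ℝ) = 2 * 1 * 1 * 1 := by norm_num
    _ ≤ 2 * polyNorm F * X * Y := by gcongr

theorem log_mul_le_logSize (hF : F ≠ 0) (hX : 1 ≤ X) (hY : 1 ≤ Y) :
    Real.log (X * Y) ≤ logSize F X Y := by
  have hnorm : (1 : ℝ) ≤ polyNorm F := by exact_mod_cast one_le_polyNorm hF
  refine Real.log_le_log (by positivity) ?_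
  calc X * Y = 1 * 1 * X * Y := by ring
    _ ≤ 2 * polyNorm F * X * Y := by gcongr; norm_num

theorem log_two_mul_polyNorm_le_logSize (hF : F ≠ 0) (hX : 1 ≤ X) (hY : 1 ≤ Y) :
    Real.log (2 * polyNorm F) ≤ logSize F X Y := by
  have hnorm : (1 : ℝ) ≤ polyNorm F := by exact_mod_cast one_le_polyNorm hF
  refine Real.log_le_log (by positivity) ?_
  calc 2 * (polyNorm F : ℝ) = 2 * polyNorm F * 1 * 1 := by ring
    _ ≤ 2 * polyNorm F * X * Y := by gcongr

theorem abs_eval_le_pow (hF : F.IsHomogeneous n) (hn : n ≠ 0) (hX : 1 ≤ X) (hY : 1 ≤ Y)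
    {x y : ℤ} (hx : (|x| : ℝ) ≤ X) (hy : (|y| : ℝ) ≤ Y) :
    (|eval ![x, y] F| : ℝ) ≤ (2 * polyNorm F * X * Y) ^ n := by
  have hterm (i : ℕ × ℕ) (hi : i ∈ antidiagonal n) :
      |((dehomogenize F).coeff i.1 * x ^ i.1 * y ^ i.2 : ℝ)| ≤ polyNorm F * X ^ n * Y ^ n := by
    have hcoeff : |((dehomogenize F).coeff i.1 : ℝ)| ≤ polyNorm F := by
      exact_mod_cast abs_coeff_dehomogenize_le hF i.1
    rw [abs_mul, abs_mul, abs_pow, abs_pow]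
    gcongr
    · exact (pow_le_pow_left₀ (abs_nonneg _) hx _).trans
        (pow_le_pow_right₀ hX (Finset.HasAntidiagonal.antidiagonal.fst_le hi))
    · exact (pow_le_pow_left₀ (abs_nonneg _) hy _).trans
        (pow_le_pow_right₀ hY (Finset.HasAntidiagonal.antidiagonal.snd_le hi))
  have hpow : ((n : ℝ) + 1) * polyNorm F ≤ 2 ^ n * polyNorm F ^ n := by
    exact_mod_cast Nat.mul_le_mul Nat.lt_two_pow_self (Nat.le_self_pow hn _)
  calc (|eval ![x, y] F| : ℝ)
      = |∑ i ∈ antidiagonal n, ((dehomogenize F).coeff i.1 * x ^ i.1 * y ^ i.2 : ℝ)| := by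
        rw [eval_eq_sum_antidiagonal hF]
        push_cast
        rfl
    _ ≤ (antidiagonal n).card • (polyNorm F * X ^ n * Y ^ n) :=
        (Finset.abs_sum_le_sum_abs _ _).trans (Finset.sum_le_card_nsmul _ _ _ hterm)
    _ = (n + 1) * polyNorm F * (X ^ n * Y ^ n) := by
        rw [Finset.Nat.card_antidiagonal, nsmul_eq_mul]
        push_cast
        ring
    _ ≤ 2 ^ n * polyNorm F ^ n * (X ^ n * Y ^ n) := by gcongr
    _ = (2 * polyNorm F * X * Y) ^ n := by ring

theorem card_primeFactors_le_of_sq_eq_eval (hF : F.IsHomogeneous n) (hn : n ≠ 0) (hX : 1 ≤ X)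
    (hY : 1 ≤ Y) {x y m : ℤ} (hx : (|x| : ℝ) ≤ X) (hy : (|y| : ℝ) ≤ Y) (hm : m ≠ 0)
    (heval : eval ![x, y] F = m ^ 2) :
    (m.natAbs.primeFactors.card : ℝ) ≤ 2 * (n * logSize F X Y) := by
  have hm₀ : m.natAbs ≠ 0 := Int.natAbs_ne_zero.2 hm
  have hle : (m.natAbs : ℝ) ≤ (2 * polyNorm F * X * Y) ^ n := by
    refine le_trans ?_ (abs_eval_le_pow hF hn hX hY hx hy)
    have hsq : m.natAbs ≤ m.natAbs ^ 2 := Nat.le_self_pow two_ne_zero _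
    rw [heval, Int.cast_pow, abs_pow, ← Int.cast_abs, Int.abs_eq_natAbs, Int.cast_natCast]
    exact_mod_cast hsq
  refine (card_primeFactors_le_two_mul_log hm₀).trans ?_
  rw [logSize, ← Real.log_pow]
  gcongr

theorem ncard_squarePoints_le_of_goodPrimes (hF : F.IsHomogeneous n) (hn : Odd n)
    (hX : 1 ≤ X) (hY : 1 ≤ Y) {P : Finset ℕ} {Q : ℝ} (hQ : 0 < Q) (hQXY : Q ^ 3 = X * Y)
    (hP : ∀ p ∈ P, IsGoodPrime F p ∧ (p : ℝ) ≤ Q ∧ Q ≤ (p : ℝ) ^ 2)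
    (hL : 0 < logSize F X Y) (hcard : Q / (2 * logSize F X Y) ≤ P.card)
    (hQL : 8 * n * logSize F X Y ^ 2 ≤ Q) :
    ((squarePoints F X Y).ncard : ℝ) ≤
      288 * Q ^ 2 * logSize F X Y + 80 * (11 * n + 12) ^ 2 * (Q ^ 2 + X + Y) := by
  set L := logSize F X Y
  have hcard₀ : 0 < Q / (2 * L) := by positivity
  have hP₀ : 0 < P.card := by exact_mod_cast hcard₀.trans_le hcard
  have hfin : (squarePoints F X Y).Finite := finite_squarePoints
  have hroot (z : ℤ × ℤ) (hz : z ∈ hfin.toFinset) :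
      |z.1| ≤ (⌊X⌋₊ : ℤ) ∧ |z.2| ≤ (⌊Y⌋₊ : ℤ) ∧ ∃ m : ℤ, eval ![z.1, z.2] F = m ^ 2 ∧
        2 * (P.filter fun p : ℕ => (p : ℤ) ∣ m).card ≤ P.card := by
    obtain ⟨hx, hy, m, hm, heval⟩ := (Set.Finite.mem_toFinset _).1 hz
    refine ⟨abs_le_natFloor hx, abs_le_natFloor hy, m, heval, ?_⟩
    have hfactors : ((P.filter fun p : ℕ => (p : ℤ) ∣ m).card : ℝ) ≤ 2 * (n * L) :=
      (Nat.cast_le.2 (card_filter_dvd_le_card_primeFactors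
        (fun p hp => (hP p hp).1.prime) hm)).trans
          (card_primeFactors_le_of_sq_eq_eval hF hn.pos.ne' hX hY hx hy hm heval)
    have hmany : 4 * (n * L) ≤ Q / (2 * L) := by
      rw [le_div_iff₀ (by positivity)]
      linarith
    have : (2 * (P.filter fun p : ℕ => (p : ℤ) ∣ m).card : ℝ) ≤ P.card := by linarith
    exact_mod_cast this
  have hsieve := card_le_of_isGoodPrime hF hn hQ hP hP₀ hroot
  rw [← Set.ncard_eq_toFinset_card _ hfin] at hsieve
  have hfloorX := Nat.floor_le (zero_le_one.trans hX)
  have hfloorY := Nat.floor_le (zero_le_one.trans hY)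
  have hdiag : 16 * ((2 * ⌊X⌋₊ + 1) * (2 * ⌊Y⌋₊ + 1)) / (P.card : ℝ) ≤ 288 * Q ^ 2 * L := by
    calc 16 * ((2 * ⌊X⌋₊ + 1) * (2 * ⌊Y⌋₊ + 1)) / (P.card : ℝ)
        ≤ 16 * ((3 * X) * (3 * Y)) / (Q / (2 * L)) := by gcongr <;> linarith
      _ = 288 * (X * Y) * L / Q := by field_simp; ring
      _ = 288 * Q ^ 2 * L := by rw [← hQXY]; field_simp
  have hoff : Q ^ 2 + 2 * ⌊X⌋₊ + 2 * ⌊Y⌋₊ + 4 * ⌊X⌋₊ * ⌊Y⌋₊ / Q ≤ 5 * (Q ^ 2 + X + Y) := by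
    have : 4 * ⌊X⌋₊ * ⌊Y⌋₊ / Q ≤ 4 * Q ^ 2 := by
      calc 4 * ⌊X⌋₊ * ⌊Y⌋₊ / Q ≤ 4 * X * Y / Q := by gcongr
        _ = 4 * Q ^ 2 := by rw [mul_assoc, ← hQXY]; field_simp
    linarith
  calc ((squarePoints F X Y).ncard : ℝ)
      ≤ 288 * Q ^ 2 * L + 16 * (11 * n + 12) ^ 2 * (5 * (Q ^ 2 + X + Y)) :=
        hsieve.trans (by gcongr)
    _ = _ := by ring

theorem exists_goodPrimes (k : ℕ) : ∃ T : ℝ, 0 < T ∧ ∀ F : MvPolynomial (Fin 2) ℤ,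
    F.IsHomogeneous (2 * k + 1) → ¬ IsLinearMulSq k F → ∀ L Q : ℝ, Real.log 2 ≤ L →
    Real.log (2 * polyNorm F) ≤ L → 3 * Real.log Q ≤ L → T * L ^ 2 ≤ Q →
    ∃ P : Finset ℕ, (∀ p ∈ P, IsGoodPrime F p ∧ (p : ℝ) ≤ Q ∧ Q ≤ (p : ℝ) ^ 2) ∧
      Q / (2 * L) ≤ P.card := by
  obtain ⟨E, hE⟩ := exists_forall_isNondegenerate_of_not_dvd k
  refine ⟨10 ^ 6 + 10 * (E + 1), by positivity, fun F hF hns L Q hL hnorm hlogQ hQ => ?_⟩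
  obtain ⟨D, hD, hDle, hgood⟩ := hE F hF hns
  have hQ₀ : 0 ≤ Q := le_trans (by positivity) hQ
  have hL₀ : 0 ≤ L := (Real.log_nonneg one_le_two).trans hL
  have hlogD : Real.log (2 * D) ≤ (E + 1) * L := by
    have hDle' : (D : ℝ) ≤ (2 * polyNorm F) ^ E := by exact_mod_cast hDle
    rw [Real.log_mul two_ne_zero (Nat.cast_ne_zero.2 hD)]
    have hpow := Real.log_le_log (by positivity) hDle'
    rw [Real.log_pow] at hpow
    nlinarith
  refine ⟨sievePrimes Q D, fun p hp => ?_, le_card_sievePrimes hD hL ?_ hlogQ ?_⟩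
  · obtain ⟨⟨hsq, hle⟩, hprime, hdvd⟩ := (mem_sievePrimes hQ₀ hD).1 hp
    have := Fact.mk hprime
    refine ⟨⟨hprime, ?_, hgood p fun h => hdvd (h.mul_left 2)⟩, hle, hsq⟩
    rintro rfl
    exact hdvd (dvd_mul_right 2 D)
  · nlinarith
  · nlinarith

theorem rpow_one_third_pow_three {z : ℝ} (hz : 0 ≤ z) : (z ^ ((1 : ℝ) / 3)) ^ 3 = z := by
  rw [← Real.rpow_natCast, ← Real.rpow_mul hz]
  norm_num

theorem rpow_two_thirds {z : ℝ} (hz : 0 ≤ z) : z ^ ((2 : ℝ) / 3) = (z ^ ((1 : ℝ) / 3)) ^ 2 := by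
  rw [← Real.rpow_natCast, ← Real.rpow_mul hz]
  norm_num

theorem add_le_mul_sq {L S W : ℝ} (hL : Real.log 2 ≤ L) (hS : 0 ≤ S) (hW : 0 ≤ W) :
    288 * S * L + W * S ≤ (576 + 3 * W) * S * L ^ 2 := by
  have hL₀ : 0.69 < L := by linarith [Real.log_two_gt_d9]
  have hL₁ : L ≤ 2 * L ^ 2 := by nlinarith
  have hL₂ : 1 ≤ 3 * L ^ 2 := by nlinarith
  calc 288 * S * L + W * S ≤ 288 * S * (2 * L ^ 2) + W * S * (3 * L ^ 2) :=
        add_le_add (by gcongr) (le_mul_of_one_le_right (by positivity) hL₂)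
    _ = (576 + 3 * W) * S * L ^ 2 := by ring

theorem exists_ncard_squarePoints_le_add (k : ℕ) : ∃ K : ℝ, 0 < K ∧
    ∀ F : MvPolynomial (Fin 2) ℤ, F.IsHomogeneous (2 * k + 1) → ¬ IsLinearMulSq k F →
    ∀ X Y : ℝ, 1 ≤ X → 1 ≤ Y → ((squarePoints F X Y).ncard : ℝ) ≤
      K * ((X * Y) ^ ((2 : ℝ) / 3) + X + Y) * logSize F X Y ^ 2 := by
  obtain ⟨T, hT, hprimes⟩ := exists_goodPrimes k
  set n : ℕ := 2 * k + 1
  set T' : ℝ := T + 8 * n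
  set W : ℝ := 80 * (11 * n + 12) ^ 2
  refine ⟨9 * T' + 576 + 3 * W, by positivity, fun F hF hns X Y hX hY => ?_⟩
  have hF₀ : F ≠ 0 := fun h => hns (h ▸ isLinearMulSq_zero k)
  have hL := log_two_le_logSize hF₀ hX hY
  have hlogXY := log_mul_le_logSize hF₀ hX hY
  have hnorm := log_two_mul_polyNorm_le_logSize hF₀ hX hY
  set L := logSize F X Y
  have hXY : 0 < X * Y := by positivity
  set Q : ℝ := (X * Y) ^ ((1 : ℝ) / 3)
  have hQ : 0 < Q := by positivity
  have hQ₃ : Q ^ 3 = X * Y := rpow_one_third_pow_three hXY.le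
  have hL₀ : 0 < L := (Real.log_pos one_lt_two).trans_le hL
  have hS : Q ^ 2 ≤ Q ^ 2 + X + Y := by linarith
  rw [rpow_two_thirds hXY.le]
  change _ ≤ _ * (Q ^ 2 + X + Y) * L ^ 2
  set S := Q ^ 2 + X + Y
  rcases lt_or_ge Q (T' * L ^ 2) with hsmall | hlarge
  · calc ((squarePoints F X Y).ncard : ℝ) ≤ 9 * Q ^ 2 * Q := by
          refine (ncard_squarePoints_le_box hX hY).trans_eq ?_
          rw [← hQ₃]
          ring
      _ ≤ 9 * S * (T' * L ^ 2) := by gcongr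
      _ = 9 * T' * S * L ^ 2 := by ring
      _ ≤ 9 * T' * S * L ^ 2 + (576 + 3 * W) * S * L ^ 2 :=
          le_add_of_nonneg_right (by positivity)
      _ = (9 * T' + 576 + 3 * W) * S * L ^ 2 := by ring
  · have hT' : T * L ^ 2 ≤ Q ∧ 8 * n * L ^ 2 ≤ Q := by
      rw [add_mul] at hlarge
      constructor <;> linarith [show 0 ≤ T * L ^ 2 by positivity,
        show 0 ≤ 8 * (n : ℝ) * L ^ 2 by positivity]
    have hlogQ : 3 * Real.log Q ≤ L := by
      rw [Real.log_rpow hXY]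
      linarith
    obtain ⟨P, hP, hcard⟩ := hprimes F hF hns L Q hL hnorm hlogQ hT'.1
    calc ((squarePoints F X Y).ncard : ℝ) ≤ 288 * Q ^ 2 * L + W * S :=
          ncard_squarePoints_le_of_goodPrimes hF ⟨k, rfl⟩ hX hY hQ hQ₃ hP hL₀ hcard hT'.2
      _ ≤ 288 * S * L + W * S := by gcongr
      _ ≤ (576 + 3 * W) * S * L ^ 2 := add_le_mul_sq hL (by positivity) (by positivity)
      _ ≤ 9 * T' * S * L ^ 2 + (576 + 3 * W) * S * L ^ 2 :=
          le_add_of_nonneg_left (by positivity)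
      _ = (9 * T' + 576 + 3 * W) * S * L ^ 2 := by ring

end SquarePoints

/-! ### Mertens' estimates and the larger sieve -/

section Mertens

open Nat (primesLE)

theorem log_nonneg_of_mem_primesLE {n p : ℕ} (hp : p ∈ primesLE n) : 0 ≤ Real.log p :=
  Real.log_nonneg (by exact_mod_cast (Nat.mem_primesLE.1 hp).2.one_le)

theorem log_factorial_eq_sum_primesLE (n : ℕ) :
    Real.log n.factorial = ∑ p ∈ primesLE n, (n.factorial.factorization p : ℝ) * Real.log p := by
  rw [Real.log_nat_eq_sum_factorization]
  refine Finsupp.sum_of_support_subset _ (fun p hp => ?_) _ fun _ _ => by simp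
  obtain ⟨hprime, hdvd, -⟩ := Nat.mem_primeFactors.1 hp
  exact Nat.mem_primesLE.2 ⟨hprime.dvd_factorial.1 hdvd, hprime⟩

theorem factorization_factorial_le {p : ℕ} (hp : p.Prime) (n : ℕ) :
    (n.factorial.factorization p : ℝ) ≤ n / (p - 1) := by
  have hp₁ : (1 : ℝ) < p := by exact_mod_cast hp.one_lt
  have h : (p - 1) * n.factorial.factorization p ≤ n := by
    rw [Nat.sub_one_mul_factorization_factorial hp]
    exact Nat.sub_le _ _
  rw [le_div_iff₀' (by linarith), ← Nat.cast_one, ← Nat.cast_sub hp.one_le]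
  exact_mod_cast h

theorem sub_one_le_factorization_factorial {p n : ℕ} (hp : p.Prime) :
    (n / p - 1 : ℝ) ≤ n.factorial.factorization p := by
  have hdiv : n / p ≤ n.factorial.factorization p := by
    rcases lt_or_ge n p with hnp | hpn
    · exact (Nat.div_eq_of_lt hnp).trans_le (Nat.zero_le _)
    · rw [Nat.factorization_factorial hp (Nat.lt_succ_self _)]
      simpa only [pow_one] using Finset.single_le_sum (f := fun i => n / p ^ i)
        (fun _ _ => Nat.zero_le _)
        (Finset.mem_Ico.2 ⟨le_rfl, Nat.succ_lt_succ (Nat.log_pos hp.one_lt hpn)⟩)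
  have hfloor : (n / p : ℝ) < (n / p : ℕ) + 1 := by
    rw [div_lt_iff₀' (by exact_mod_cast hp.pos)]
    exact_mod_cast Nat.lt_mul_div_succ n hp.pos
  have : ((n / p : ℕ) : ℝ) ≤ n.factorial.factorization p := by exact_mod_cast hdiv
  linarith

theorem log_sub_one_le_sum_primesLE {n : ℕ} (hn : n ≠ 0) :
    Real.log n - 1 ≤ ∑ p ∈ primesLE n, Real.log p / ((p : ℝ) - 1) := by
  have hn₀ : (0 : ℝ) < n := by positivity
  have hlog : 0 ≤ Real.log n := Real.log_natCast_nonneg n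
  have hlog_pi : 0 ≤ Real.log (2 * Real.pi) := Real.log_nonneg (by linarith [Real.pi_gt_three])
  have hsum : Real.log n.factorial ≤ n * ∑ p ∈ primesLE n, Real.log p / ((p : ℝ) - 1) := by
    rw [log_factorial_eq_sum_primesLE, Finset.mul_sum]
    refine Finset.sum_le_sum fun p hp => ?_
    calc _ ≤ n / ((p : ℝ) - 1) * Real.log p :=
          mul_le_mul_of_nonneg_right (factorization_factorial_le (Nat.mem_primesLE.1 hp).2 n)
            (log_nonneg_of_mem_primesLE hp)
      _ = n * (Real.log p / ((p : ℝ) - 1)) := by ring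
  refine le_of_mul_le_mul_left ?_ hn₀
  linarith [Stirling.le_log_factorial_stirling hn]

theorem sum_primesLE_log_div_le {n : ℕ} (hn : n ≠ 0) :
    ∑ p ∈ primesLE n, Real.log p / (p : ℝ) ≤ Real.log n + Real.log 4 := by
  have hn₀ : (0 : ℝ) < n := by positivity
  have hfact : Real.log n.factorial ≤ n * Real.log n := by
    rw [← Real.log_pow]
    refine Real.log_le_log (by exact_mod_cast n.factorial_pos) ?_
    exact_mod_cast n.factorial_le_pow
  have htheta : ∑ p ∈ primesLE n, Real.log p ≤ Real.log 4 * n := by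
    have := Chebyshev.theta_le_log4_mul_x (x := n) hn₀.le
    rwa [Chebyshev.theta_eq_sum_primesLE_log] at this
  have hsum : n * ∑ p ∈ primesLE n, Real.log p / (p : ℝ) - ∑ p ∈ primesLE n, Real.log p ≤
      Real.log n.factorial := by
    rw [log_factorial_eq_sum_primesLE, Finset.mul_sum, ← Finset.sum_sub_distrib]
    refine Finset.sum_le_sum fun p hp => ?_
    calc n * (Real.log p / (p : ℝ)) - Real.log p = (n / p - 1) * Real.log p := by ring
      _ ≤ _ := mul_le_mul_of_nonneg_right
        (sub_one_le_factorization_factorial (Nat.mem_primesLE.1 hp).2)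
        (log_nonneg_of_mem_primesLE hp)
  refine le_of_mul_le_mul_left ?_ hn₀
  linarith

theorem sum_primeFactors_log_le {D : ℕ} (hD : D ≠ 0) :
    ∑ p ∈ D.primeFactors, Real.log p ≤ Real.log D := by
  have hpos (p : ℕ) (hp : p ∈ D.primeFactors) : (0 : ℝ) < p := by
    exact_mod_cast Nat.pos_of_mem_primeFactors hp
  rw [← Real.log_prod fun p hp => (hpos p hp).ne']
  refine Real.log_le_log (Finset.prod_pos hpos) ?_
  rw [← Nat.cast_prod]
  exact_mod_cast Nat.le_of_dvd (Nat.pos_of_ne_zero hD) (Nat.prod_primeFactors_dvd D)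

-- Split at the least integer `n ≥ log D`, `n ≥ 1`: small primes fall under Mertens' estimate,
-- large ones satisfy `log p / p ≤ log p / n`.
theorem sum_primeFactors_log_div_le {D : ℕ} (hD : D ≠ 0) :
    ∑ p ∈ D.primeFactors, Real.log p / (p : ℝ) ≤
      Real.log (Real.log D + 1) + Real.log 4 + 1 := by
  set n := ⌊Real.log D⌋₊ + 1 with hn
  have hnlog : (n : ℝ) ≤ Real.log D + 1 := by
    rw [hn, Nat.cast_add_one]
    gcongr
    exact Nat.floor_le (Real.log_natCast_nonneg D)
  have hlogn : Real.log D ≤ n := by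
    rw [hn, Nat.cast_add_one]
    exact (Nat.lt_floor_add_one _).le
  have hn₀ : (0 : ℝ) < n := by positivity
  have hterm (p : ℕ) : Real.log p / (p : ℝ) ≤
      (if p ≤ n then Real.log p / (p : ℝ) else 0) + Real.log p / n := by
    have := Real.log_natCast_nonneg p
    split_ifs with hpn
    · exact le_add_of_nonneg_right (by positivity)
    · rw [zero_add]
      gcongr
      exact (not_le.1 hpn).le
  have hsmall : ∑ p ∈ D.primeFactors with p ≤ n, Real.log p / (p : ℝ) ≤
      Real.log (Real.log D + 1) + Real.log 4 :=
    calc ∑ p ∈ D.primeFactors with p ≤ n, Real.log p / (p : ℝ)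
        ≤ ∑ p ∈ primesLE n, Real.log p / (p : ℝ) := by
          refine Finset.sum_le_sum_of_subset_of_nonneg (fun p hp => ?_) fun p _ _ =>
            div_nonneg (Real.log_natCast_nonneg p) p.cast_nonneg
          rw [Finset.mem_filter] at hp
          exact Nat.mem_primesLE.2 ⟨hp.2, Nat.prime_of_mem_primeFactors hp.1⟩
      _ ≤ Real.log n + Real.log 4 := sum_primesLE_log_div_le (Nat.succ_ne_zero _)
      _ ≤ _ := by gcongr
  have hlarge : (∑ p ∈ D.primeFactors, Real.log p) / n ≤ 1 :=
    (div_le_one hn₀).2 ((sum_primeFactors_log_le hD).trans hlogn)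
  calc _ ≤ _ := Finset.sum_le_sum fun p _ => hterm p
    _ = (∑ p ∈ D.primeFactors with p ≤ n, Real.log p / (p : ℝ)) +
        (∑ p ∈ D.primeFactors, Real.log p) / n := by
      rw [Finset.sum_add_distrib, ← Finset.sum_div, ← Finset.sum_filter]
    _ ≤ _ := add_le_add hsmall hlarge

theorem summable_log_div_mul_sqrt : Summable fun n : ℕ => Real.log n / (n * √(n : ℝ)) := by
  have hs : Summable fun n : ℕ => 4 * (1 / (n : ℝ) ^ ((5 : ℝ) / 4)) :=
    (Real.summable_one_div_nat_rpow.2 (by norm_num)).mul_left 4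
  refine hs.of_nonneg_of_le
    (fun n => div_nonneg (Real.log_natCast_nonneg n) (by positivity)) fun n => ?_
  rcases Nat.eq_zero_or_pos n with rfl | hn
  · simp
  have hn₀ : (0 : ℝ) < n := by exact_mod_cast hn
  have hlog := Real.log_le_rpow_div hn₀.le (show (0 : ℝ) < 1 / 4 by norm_num)
  have hsplit : (n : ℝ) * √(n : ℝ) = (n : ℝ) ^ ((1 : ℝ) / 4) * (n : ℝ) ^ ((5 : ℝ) / 4) := by
    rw [← Real.rpow_add hn₀, Real.sqrt_eq_rpow, ← Real.rpow_one_add' hn₀.le (by norm_num)]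
    norm_num
  rw [hsplit, div_le_iff₀ (by positivity)]
  refine hlog.trans_eq ?_
  field_simp

theorem sum_primesLE_log_div_sub_one_le (n : ℕ) :
    ∑ p ∈ primesLE n, Real.log p / ((p : ℝ) - 1) ≤
      ∑ p ∈ primesLE n, Real.log p / (p : ℝ) +
        2 * ∑ p ∈ primesLE n, Real.log p / (p * √(p : ℝ)) := by
  rw [Finset.mul_sum, ← Finset.sum_add_distrib]
  refine Finset.sum_le_sum fun p hp => ?_
  have hp₂ : (2 : ℝ) ≤ p := by exact_mod_cast (Nat.mem_primesLE.1 hp).2.two_le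
  have hlog := log_nonneg_of_mem_primesLE hp
  have hsqrt : √(p : ℝ) ≤ p := Real.sqrt_le_self_iff.2 (Or.inr (by linarith))
  calc Real.log p / ((p : ℝ) - 1) ≤ Real.log p / p + 2 * (Real.log p / (p * p)) := by
        rw [show Real.log p / p + 2 * (Real.log p / (p * p)) = Real.log p * (p + 2) / (p * p) by
          field_simp, div_le_div_iff₀ (by linarith) (by positivity)]
        nlinarith
    _ ≤ Real.log p / p + 2 * (Real.log p / (p * √(p : ℝ))) := by gcongr

/-- The weight `2 / p - 4c / p ^ (3 / 2)`, a lower bound for the inverse of `p / 2 + c * √p`. -/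
noncomputable def sieveWeight (c : ℝ) (p : ℕ) : ℝ := 2 / p - 4 * c / (p * √(p : ℝ))

theorem exists_le_sum_log_mul_sieveWeight {c : ℝ} (hc : 0 ≤ c) : ∃ K : ℝ, 0 ≤ K ∧
    ∀ n D : ℕ, n ≠ 0 → D ≠ 0 → 2 * Real.log n - 2 * Real.log (Real.log D + 1) - K ≤
      ∑ p ∈ primesLE n with ¬ p ∣ D, Real.log p * sieveWeight c p := by
  set S := ∑' n : ℕ, Real.log n / (n * √(n : ℝ))
  have hterm (n : ℕ) : 0 ≤ Real.log n / (n * √(n : ℝ)) :=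
    div_nonneg (Real.log_natCast_nonneg n) (by positivity)
  have : 0 ≤ S := tsum_nonneg hterm
  have hS (P : Finset ℕ) : ∑ p ∈ P, Real.log p / (p * √(p : ℝ)) ≤ S :=
    summable_log_div_mul_sqrt.sum_le_tsum P fun n _ => hterm n
  have : 0 ≤ Real.log 4 := Real.log_nonneg (by norm_num)
  refine ⟨(4 * c + 4) * S + 2 * Real.log 4 + 4, by positivity, fun n D hn hD => ?_⟩
  set T := {p ∈ primesLE n | ¬ p ∣ D}
  have hsplit : ∑ p ∈ primesLE n, Real.log p / (p : ℝ) ≤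
      ∑ p ∈ T, Real.log p / (p : ℝ) + ∑ p ∈ D.primeFactors, Real.log p / (p : ℝ) := by
    rw [← Finset.sum_filter_add_sum_filter_not (primesLE n) (fun p => ¬ p ∣ D)]
    refine add_le_add_right (Finset.sum_le_sum_of_subset_of_nonneg (fun p hp => ?_)
      fun p _ _ => div_nonneg (Real.log_natCast_nonneg p) p.cast_nonneg) _
    rw [Finset.mem_filter, Nat.mem_primesLE, not_not] at hp
    exact Nat.mem_primeFactors.2 ⟨hp.1.2, hp.2, hD⟩
  have hweight : ∑ p ∈ T, Real.log p * sieveWeight c p =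
      2 * ∑ p ∈ T, Real.log p / (p : ℝ) - 4 * c * ∑ p ∈ T, Real.log p / (p * √(p : ℝ)) := by
    rw [Finset.mul_sum, Finset.mul_sum, ← Finset.sum_sub_distrib]
    refine Finset.sum_congr rfl fun p _ => ?_
    rw [sieveWeight]
    ring
  rw [hweight]
  linarith [log_sub_one_le_sum_primesLE hn, sum_primesLE_log_div_sub_one_le n,
    sum_primeFactors_log_div_le hD, hS (primesLE n), mul_le_mul_of_nonneg_left (hS T) hc]

end Mertens

section LargerSieve

open Nat (primesLE)

theorem sq_card_le_card_image_mul_card_filter {α β : Type*} [DecidableEq β] (f : α → β)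
    (S : Finset α) :
    S.card ^ 2 ≤ (S.image f).card * ((S ×ˢ S).filter fun z => f z.1 = f z.2).card := by
  have hpairs : ((S ×ˢ S).filter fun z => f z.1 = f z.2).card =
      ∑ r ∈ S.image f, (S.filter fun a => f a = r).card ^ 2 := by
    have hmem (z) (hz : z ∈ (S ×ˢ S).filter fun z => f z.1 = f z.2) : f z.1 ∈ S.image f :=
      Finset.mem_image_of_mem _ (Finset.mem_product.1 (Finset.mem_filter.1 hz).1).1
    rw [Finset.card_eq_sum_card_fiberwise hmem]
    refine Finset.sum_congr rfl fun r _ => ?_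
    rw [sq, ← Finset.card_product]
    congr 1
    ext ⟨a, b⟩
    simp only [Finset.mem_filter, Finset.mem_product]
    constructor
    · rintro ⟨⟨⟨ha, hb⟩, hab⟩, har⟩
      exact ⟨⟨ha, har⟩, hb, hab ▸ har⟩
    · rintro ⟨⟨ha, har⟩, hb, hbr⟩
      exact ⟨⟨⟨ha, hb⟩, har.trans hbr.symm⟩, har⟩
  rw [hpairs, Finset.card_eq_sum_card_image f S]
  exact sq_sum_le_card_mul_sum_sq

theorem sum_log_ite_dvd_le {P : Finset ℕ} (hP : ∀ p ∈ P, p.Prime) {d : ℤ} (hd : d ≠ 0) :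
    ∑ p ∈ P, (if (p : ℤ) ∣ d then Real.log p else 0) ≤ Real.log |(d : ℝ)| := by
  calc ∑ p ∈ P, (if (p : ℤ) ∣ d then Real.log p else 0)
      ≤ ∑ p ∈ d.natAbs.primeFactors, Real.log p := by
        rw [← Finset.sum_filter]
        refine Finset.sum_le_sum_of_subset_of_nonneg (fun p hp => ?_)
          fun p _ _ => Real.log_natCast_nonneg p
        rw [Finset.mem_filter] at hp
        exact Nat.mem_primeFactors.2
          ⟨hP p hp.1, Int.natCast_dvd.1 hp.2, Int.natAbs_ne_zero.2 hd⟩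
    _ ≤ Real.log |(d : ℝ)| := by
        rw [← Int.cast_abs, ← Nat.cast_natAbs]
        exact sum_primeFactors_log_le (Int.natAbs_ne_zero.2 hd)

theorem sum_sum_log_ite_dvd_sub_le {S : Finset ℤ} {N : ℝ} (hN : 1 ≤ N)
    (hS : ∀ a ∈ S, ∀ b ∈ S, |(a : ℝ) - b| ≤ N) {P : Finset ℕ} (hP : ∀ p ∈ P, p.Prime) :
    ∑ z ∈ S ×ˢ S, ∑ p ∈ P, (if (p : ℤ) ∣ z.1 - z.2 then Real.log p else 0) ≤
      (S.card : ℝ) ^ 2 * Real.log N + S.card * ∑ p ∈ P, Real.log p := by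
  have hterm (z : ℤ × ℤ) (hz : z ∈ S ×ˢ S) :
      ∑ p ∈ P, (if (p : ℤ) ∣ z.1 - z.2 then Real.log p else 0) ≤
        Real.log N + if z.1 = z.2 then ∑ p ∈ P, Real.log p else 0 := by
    rw [Finset.mem_product] at hz
    split_ifs with h
    · simpa only [h, sub_self, dvd_zero, if_true] using
        le_add_of_nonneg_left (Real.log_nonneg hN)
    · have hd : z.1 - z.2 ≠ 0 := sub_ne_zero.2 h
      rw [add_zero]
      refine (sum_log_ite_dvd_le hP hd).trans (Real.log_le_log ?_ ?_)
      · exact abs_pos.2 (by exact_mod_cast hd)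
      · rw [Int.cast_sub]
        exact hS _ hz.1 _ hz.2
  have hdiag : ∑ z ∈ S ×ˢ S, (if z.1 = z.2 then ∑ p ∈ P, Real.log p else 0) =
      S.card * ∑ p ∈ P, Real.log p := by
    rw [Finset.sum_product, Finset.sum_congr rfl fun a ha => by
      rw [Finset.sum_ite_eq, if_pos ha], Finset.sum_const, nsmul_eq_mul]
  refine (Finset.sum_le_sum hterm).trans_eq ?_
  rw [Finset.sum_add_distrib, hdiag, Finset.sum_const, Finset.card_product, nsmul_eq_mul,
    Nat.cast_mul, sq]

-- Gallagher's larger sieve: compare upper and lower bounds for the sum of `log p` over the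
-- `p ∈ P` and the pairs of elements of `S` congruent modulo `p`.
theorem card_mul_sum_log_mul_sub_log_le {S : Finset ℤ} {N : ℝ} (hN : 1 ≤ N)
    (hS : ∀ a ∈ S, ∀ b ∈ S, |(a : ℝ) - b| ≤ N) {P : Finset ℕ} (hP : ∀ p ∈ P, p.Prime)
    {w : ℕ → ℝ} (hw : ∀ p ∈ P, w p * ((S.image (Int.cast : ℤ → ZMod p)).card : ℝ) ≤ 1) :
    (S.card : ℝ) * (∑ p ∈ P, Real.log p * w p - Real.log N) ≤ ∑ p ∈ P, Real.log p := by
  rcases S.eq_empty_or_nonempty with rfl | hne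
  · simpa only [Finset.card_empty, Nat.cast_zero, zero_mul] using
      Finset.sum_nonneg fun p _ => Real.log_natCast_nonneg p
  have hlower : (S.card : ℝ) ^ 2 * ∑ p ∈ P, Real.log p * w p ≤
      ∑ z ∈ S ×ˢ S, ∑ p ∈ P, (if (p : ℤ) ∣ z.1 - z.2 then Real.log p else 0) := by
    rw [Finset.sum_comm, Finset.mul_sum]
    refine Finset.sum_le_sum fun p hp => ?_
    have hcs := sq_card_le_card_image_mul_card_filter (Int.cast : ℤ → ZMod p) S
    simp only [← sub_eq_zero (b := ((_ : ℤ) : ZMod p)), ← Int.cast_sub,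
      ZMod.intCast_zmod_eq_zero_iff_dvd] at hcs
    rw [← Finset.sum_filter, Finset.sum_const, nsmul_eq_mul]
    set q := ((S ×ˢ S).filter fun z => (p : ℤ) ∣ z.1 - z.2).card
    have hpairs : (S.card : ℝ) ^ 2 * w p ≤ q := by
      rcases le_total (w p) 0 with hwp | hwp
      · exact (mul_nonpos_of_nonneg_of_nonpos (by positivity) hwp).trans q.cast_nonneg
      · calc (S.card : ℝ) ^ 2 * w p
            ≤ (S.image (Int.cast : ℤ → ZMod p)).card * q * w p := by
              gcongr
              exact_mod_cast hcs
          _ = q * (w p * (S.image (Int.cast : ℤ → ZMod p)).card) := by ring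
          _ ≤ q := mul_le_of_le_one_right q.cast_nonneg (hw p hp)
    calc (S.card : ℝ) ^ 2 * (Real.log p * w p) = (S.card : ℝ) ^ 2 * w p * Real.log p := by ring
      _ ≤ q * Real.log p := mul_le_mul_of_nonneg_right hpairs (Real.log_natCast_nonneg p)
  refine le_of_mul_le_mul_left ?_ (show (0 : ℝ) < S.card by exact_mod_cast hne.card_pos)
  linarith [hlower.trans (sum_sum_log_ite_dvd_sub_le hN hS hP)]

theorem sieveWeight_mul_le_one {c t : ℝ} {p : ℕ} (hp : p ≠ 0) (ht₀ : 0 ≤ t)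
    (ht : t ≤ p / 2 + c * √(p : ℝ)) : sieveWeight c p * t ≤ 1 := by
  rcases le_total (sieveWeight c p) 0 with hw | hw
  · exact (mul_nonpos_of_nonpos_of_nonneg hw ht₀).trans zero_le_one
  · have hr : √(p : ℝ) ≠ 0 := (Real.sqrt_pos.2 (by positivity)).ne'
    calc sieveWeight c p * t ≤ sieveWeight c p * (p / 2 + c * √(p : ℝ)) := by gcongr
      _ = 1 - 4 * c ^ 2 / p := by
        rw [sieveWeight, ← Real.sq_sqrt p.cast_nonneg, Real.sqrt_sq (Real.sqrt_nonneg _)]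
        field_simp
        ring
      _ ≤ 1 := sub_le_self _ (by positivity)

theorem exists_card_le_of_card_image_le {c : ℝ} (hc : 0 ≤ c) : ∃ K : ℝ, 0 < K ∧
    ∀ X : ℝ, 1 ≤ X → ∀ D : ℕ, D ≠ 0 → ∀ S : Finset ℤ, (∀ x ∈ S, (|x| : ℝ) ≤ X) →
      (∀ p : ℕ, p.Prime → ¬ p ∣ D →
        ((S.image (Int.cast : ℤ → ZMod p)).card : ℝ) ≤ p / 2 + c * √(p : ℝ)) →
      (S.card : ℝ) ≤ K * √X * (Real.log D + 1) := by
  obtain ⟨K, hK₀, hK⟩ := exists_le_sum_log_mul_sieveWeight hc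
  refine ⟨2 * √2 * Real.exp (K / 2 + 1), by positivity, fun X hX D hD S hS hres => ?_⟩
  set l := Real.log D + 1
  have hl : 1 ≤ l := le_add_of_nonneg_left (Real.log_natCast_nonneg D)
  -- The level `R` is chosen to make the main factor of the larger sieve at least `2`.
  set R := √(2 * X) * Real.exp (K / 2 + 1) * l with hR
  have hR₁ : 1 ≤ R := one_le_mul_of_one_le_of_one_le (one_le_mul_of_one_le_of_one_le
    (Real.one_le_sqrt.2 (by linarith)) (Real.one_le_exp (by linarith))) hl
  have hlogR : Real.log R = Real.log (2 * X) / 2 + (K / 2 + 1) + Real.log l := by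
    rw [hR, Real.log_mul (by positivity) (by positivity), Real.log_mul (by positivity)
      (by positivity), Real.log_exp, Real.log_sqrt (by linarith)]
  set m := ⌈R⌉₊
  have hRm : R ≤ m := Nat.le_ceil R
  have hm : m ≠ 0 := (Nat.ceil_pos.2 (by linarith)).ne'
  set P := {p ∈ primesLE m | ¬ p ∣ D}
  have hP (p : ℕ) (hp : p ∈ P) : p.Prime ∧ ¬ p ∣ D := by
    rw [Finset.mem_filter, Nat.mem_primesLE] at hp
    exact ⟨hp.1.2, hp.2⟩
  have hsieve := card_mul_sum_log_mul_sub_log_le (N := 2 * X) (by linarith)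
    (fun a ha b hb => (abs_sub _ _).trans (by linarith [hS a ha, hS b hb]))
    (fun p hp => (hP p hp).1) fun p hp => sieveWeight_mul_le_one (hP p hp).1.ne_zero
      (Nat.cast_nonneg _) (hres p (hP p hp).1 (hP p hp).2)
  have htheta : ∑ p ∈ P, Real.log p ≤ Real.log 4 * m := by
    refine le_trans ?_ (Chebyshev.theta_le_log4_mul_x m.cast_nonneg)
    rw [Chebyshev.theta_eq_sum_primesLE_log]
    exact Finset.sum_le_sum_of_subset_of_nonneg (Finset.filter_subset _ _)
      fun p _ _ => Real.log_natCast_nonneg p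
  have hfactor : 2 ≤ ∑ p ∈ P, Real.log p * sieveWeight c p - Real.log (2 * X) := by
    linarith [hK m D hm hD, Real.log_le_log (by linarith) hRm]
  have hlog4 : Real.log 4 ≤ 2 := by
    rw [show (4 : ℝ) = 2 ^ 2 by norm_num, Real.log_pow]
    norm_num
    linarith [Real.log_two_lt_d9]
  calc (S.card : ℝ) ≤ m := by
        have := mul_le_mul_of_nonneg_left hfactor (S.card.cast_nonneg (α := ℝ))
        have := mul_le_mul_of_nonneg_right hlog4 (m.cast_nonneg (α := ℝ))
        linarith
    _ ≤ 2 * R := by linarith [Nat.ceil_lt_add_one (show 0 ≤ R by linarith)]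
    _ = 2 * √2 * Real.exp (K / 2 + 1) * √X * l := by
      rw [hR, Real.sqrt_mul zero_le_two]
      ring

end LargerSieve

/-! ### Counting points line by line -/

section Slices

variable {F : MvPolynomial (Fin 2) ℤ} {n p : ℕ}

theorem two_mul_card_le_of_isSquare_eval [Fact p.Prime] {f : (ZMod p)[X]}
    (hf : f ≠ 0) {T : Finset (ZMod p)} (hT : ∀ t ∈ T, IsSquare (f.eval t)) :
    (2 * T.card : ℤ) ≤ p + ∑ t, quadraticChar (ZMod p) (f.eval t) + f.natDegree := by
  have hterm (t : ZMod p) : (2 * (if t ∈ T then 1 else 0) : ℤ) ≤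
      1 + quadraticChar (ZMod p) (f.eval t) + (if f.eval t = 0 then 1 else 0) := by
    by_cases h₀ : f.eval t = 0
    · rw [if_pos h₀, h₀, MulChar.map_zero]
      split_ifs <;> norm_num
    · rw [if_neg h₀]
      split_ifs with ht
      · rw [(quadraticChar_one_iff_isSquare h₀).2 (hT t ht)]
        norm_num
      · rcases quadraticChar_dichotomy h₀ with h | h <;> rw [h] <;> norm_num
  have hsum := Finset.sum_le_sum fun t (_ : t ∈ Finset.univ) => hterm t
  rw [Finset.sum_add_distrib, Finset.sum_add_distrib, ← Finset.mul_sum, Finset.sum_boole,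
    Finset.sum_boole, Finset.filter_univ_mem] at hsum
  simp only [Finset.sum_const, Finset.card_univ, ZMod.card, nsmul_eq_mul, mul_one] at hsum
  have hroots : ((Finset.univ.filter fun t => f.eval t = 0).card : ℤ) ≤ f.natDegree := by
    exact_mod_cast card_filter_eval_eq_zero_le hf
  linarith

theorem card_image_le_of_isSquare_eval [Fact p.Prime] {f : (ZMod p)[X]}
    (hf : f.natDegree ≤ n) (hns : ¬ IsConstMulSq f) {S : Finset ℤ}
    (hS : ∀ x ∈ S, IsSquare (f.eval (x : ZMod p))) :
    ((S.image (Int.cast : ℤ → ZMod p)).card : ℝ) ≤ p / 2 + 6 * n * √(p : ℝ) := by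
  have hf₀ : f ≠ 0 := by
    rintro rfl
    exact hns ⟨0, 0, by simp⟩
  have hcard := two_mul_card_le_of_isSquare_eval hf₀ (T := S.image Int.cast) fun t ht => by
    obtain ⟨x, hx, rfl⟩ := Finset.mem_image.1 ht
    exact hS x hx
  have hcard' : (2 * (S.image (Int.cast : ℤ → ZMod p)).card : ℝ) ≤
      p + ((∑ t, quadraticChar (ZMod p) (f.eval t) : ℤ) : ℝ) + n := by
    exact_mod_cast hcard.trans (add_le_add_right (Nat.cast_le.2 hf) _)
  have hsqrt : (n : ℝ) * 1 ≤ n * √(p : ℝ) := by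
    gcongr
    exact Real.one_le_sqrt.2 (by exact_mod_cast (Fact.out : p.Prime).one_le)
  linarith [(le_abs_self _).trans (abs_sum_quadraticChar_le hf hns)]

theorem not_isConstMulSq_C_mul_X_pow {K : Type*} [Field K] (hn : Odd n) {a : K} (ha : a ≠ 0) :
    ¬ IsConstMulSq (Polynomial.C a * Polynomial.X ^ n) := by
  rintro ⟨c, h, hc⟩
  have hc₀ : c ≠ 0 := by
    rintro rfl
    simp [ha] at hc
  have hdeg := congrArg Polynomial.natDegree hc
  rw [Polynomial.natDegree_C_mul_X_pow _ _ ha, Polynomial.natDegree_C_mul hc₀,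
    Polynomial.natDegree_pow] at hdeg
  exact (Nat.not_odd_iff_even.2 ⟨h.natDegree, by omega⟩) hn

theorem not_isConstMulSq_C_mul_comp {K : Type*} [Field K] {f : K[X]} (hf : ¬ IsConstMulSq f)
    {a y : K} (ha : a ≠ 0) (hy : y ≠ 0) :
    ¬ IsConstMulSq (Polynomial.C a * f.comp (Polynomial.C y⁻¹ * Polynomial.X)) := by
  intro h
  obtain ⟨c, g, hg⟩ := h.comp (Polynomial.C y * Polynomial.X)
  refine hf ⟨a⁻¹ * c, g, ?_⟩
  have hcomp : (Polynomial.C y⁻¹ * Polynomial.X).comp (Polynomial.C y * Polynomial.X) =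
      Polynomial.X := by
    rw [Polynomial.mul_comp, Polynomial.C_comp, Polynomial.X_comp, ← mul_assoc,
      ← Polynomial.C_mul, inv_mul_cancel₀ hy, Polynomial.C_1, one_mul]
  rw [Polynomial.mul_comp, Polynomial.C_comp, Polynomial.comp_assoc, hcomp,
    Polynomial.comp_X] at hg
  rw [Polynomial.C_mul, mul_assoc, ← hg, ← mul_assoc, ← Polynomial.C_mul, inv_mul_cancel₀ ha,
    Polynomial.C_1, one_mul]

theorem IsNondegenerate.not_isConstMulSq {R : Type*} [CommRing R] [Nontrivial R] {f : R[X]}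
    (hf : IsNondegenerate f) : ¬ IsConstMulSq f := by
  simpa using hf 0 1 (Or.inr one_ne_zero)

theorem card_image_le_of_not_dvd (hF : F.IsHomogeneous n) (hp : IsGoodPrime F p) {y : ℤ}
    (hy : ¬ (p : ℤ) ∣ y) {S : Finset ℤ} (hS : ∀ x ∈ S, IsSquare (eval ![x, y] F)) :
    ((S.image (Int.cast : ℤ → ZMod p)).card : ℝ) ≤ p / 2 + 6 * n * √(p : ℝ) := by
  have := Fact.mk hp.prime
  rw [← ZMod.intCast_zmod_eq_zero_iff_dvd] at hy
  set φ := Int.castRingHom (ZMod p)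
  have hFp : (map φ F).IsHomogeneous n := hF.map φ
  refine card_image_le_of_isSquare_eval
    (f := Polynomial.C ((y : ZMod p) ^ n) *
      (dehomogenize (map φ F)).comp (Polynomial.C (y : ZMod p)⁻¹ * Polynomial.X)) ?_
    (not_isConstMulSq_C_mul_comp hp.isNondegenerate.not_isConstMulSq (pow_ne_zero n hy) hy)
    fun x hx => ?_
  · refine (Polynomial.natDegree_C_mul_le _ _).trans (Polynomial.natDegree_comp_le.trans ?_)
    calc _ ≤ n * 1 := Nat.mul_le_mul (natDegree_dehomogenize_le hFp)
          ((Polynomial.natDegree_C_mul_le _ _).trans Polynomial.natDegree_X_le)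
      _ = n := mul_one n
  · have heval : (Polynomial.C ((y : ZMod p) ^ n) * (dehomogenize (map φ F)).comp
        (Polynomial.C (y : ZMod p)⁻¹ * Polynomial.X)).eval (x : ZMod p) =
        φ (eval ![x, y] F) := by
      have hxy : (x : ZMod p) = (y : ZMod p)⁻¹ * x * y := by field_simp
      rw [eq_intCast, ← eval_intCast_map, hxy, eval_mul_eq_eval_dehomogenize hFp _ hy, ← hxy,
        Polynomial.eval_mul, Polynomial.eval_C, Polynomial.eval_comp, Polynomial.eval_mul,
        Polynomial.eval_C, Polynomial.eval_X, mul_comm]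
    rw [heval]
    exact (hS x hx).map φ

theorem eval_zero_right (hF : F.IsHomogeneous n) (x : ℤ) :
    eval ![x, 0] F = (dehomogenize F).coeff n * x ^ n := by
  rw [eval_eq_sum_antidiagonal hF, Finset.sum_eq_single (n, 0)]
  · simp
  · rintro ⟨i, j⟩ hij hne
    rw [Finset.HasAntidiagonal.mem_antidiagonal] at hij
    have hj : j ≠ 0 := by
      rintro rfl
      exact hne (by rw [← hij, add_zero])
    simp [hj]
  · simp

theorem card_image_le_of_not_dvd_coeff (hF : F.IsHomogeneous n) (hn : Odd n) (hp : p.Prime)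
    (ha : ¬ (p : ℤ) ∣ (dehomogenize F).coeff n) {S : Finset ℤ}
    (hS : ∀ x ∈ S, IsSquare (eval ![x, 0] F)) :
    ((S.image (Int.cast : ℤ → ZMod p)).card : ℝ) ≤ p / 2 + 6 * n * √(p : ℝ) := by
  have := Fact.mk hp
  rw [← ZMod.intCast_zmod_eq_zero_iff_dvd] at ha
  refine card_image_le_of_isSquare_eval (Polynomial.natDegree_C_mul_X_pow_le _ n)
    (not_isConstMulSq_C_mul_X_pow hn ha) fun x hx => ?_
  have hsq := (hS x hx).map (Int.castRingHom (ZMod p))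
  rw [eval_zero_right hF] at hsq
  simpa using hsq

variable {X Y : ℝ}

-- For `y = 0` the form restricts to the monomial `a * x ^ n`, which is not a square up to a
-- constant as soon as `p ∤ a`; if `a = 0` there is nothing to count.
theorem exists_forall_card_image_le (hF : F.IsHomogeneous n) (hn : Odd n) (hX : 1 ≤ X)
    (hY : 1 ≤ Y) {y : ℤ} {S : Finset ℤ} (hSne : S.Nonempty)
    (hS : ∀ x ∈ S, (x, y) ∈ squarePoints F X Y) :
    ∃ e : ℕ, e ≠ 0 ∧ (e : ℝ) ≤ 2 * polyNorm F * X * Y ∧ ∀ p, IsGoodPrime F p → ¬ p ∣ e →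
      ((S.image (Int.cast : ℤ → ZMod p)).card : ℝ) ≤ p / 2 + 6 * n * √(p : ℝ) := by
  obtain ⟨x₀, hx₀⟩ := hSne
  obtain ⟨-, hy, m, hm, heval⟩ := hS x₀ hx₀
  have hF₀ : F ≠ 0 := by
    rintro rfl
    rw [map_zero] at heval
    exact pow_ne_zero 2 hm heval.symm
  have hnorm : (1 : ℝ) ≤ polyNorm F := by exact_mod_cast one_le_polyNorm hF₀
  have hsq (x : ℤ) (hx : x ∈ S) : IsSquare (eval ![x, y] F) := by
    obtain ⟨-, -, m, -, hm⟩ := hS x hx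
    exact hm ▸ IsSquare.sq m
  by_cases hy₀ : y = 0
  · subst hy₀
    set a := (dehomogenize F).coeff n with ha
    have ha₀ : a ≠ 0 := by
      intro ha₀
      change eval ![x₀, 0] F = m ^ 2 at heval
      rw [eval_zero_right hF, ← ha, ha₀, zero_mul] at heval
      exact pow_ne_zero 2 hm heval.symm
    refine ⟨a.natAbs, Int.natAbs_ne_zero.2 ha₀, ?_, fun p hp hpa => ?_⟩
    · have hle : (a.natAbs : ℝ) ≤ polyNorm F := by
        exact_mod_cast (Int.abs_eq_natAbs a).symm.trans_le (abs_coeff_dehomogenize_le hF n)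
      calc (a.natAbs : ℝ) ≤ 1 * polyNorm F * 1 * 1 := by linarith
        _ ≤ 2 * polyNorm F * X * Y := by gcongr; norm_num
    · exact card_image_le_of_not_dvd_coeff hF hn hp.prime
        (mt Int.natCast_dvd.1 hpa) hsq
  · refine ⟨y.natAbs, Int.natAbs_ne_zero.2 hy₀, ?_, fun p hp hpy =>
      card_image_le_of_not_dvd hF hp (mt Int.natCast_dvd.1 hpy) hsq⟩
    calc (y.natAbs : ℝ) = |(y : ℝ)| := by rw [Nat.cast_natAbs, Int.cast_abs]
      _ ≤ 1 * 1 * 1 * Y := by linarith [show |(y : ℝ)| ≤ Y from hy]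
      _ ≤ 2 * polyNorm F * X * Y := by gcongr; norm_num

theorem exists_card_slice_le (k : ℕ) : ∃ K : ℝ, 0 < K ∧
    ∀ F : MvPolynomial (Fin 2) ℤ, F.IsHomogeneous (2 * k + 1) → ¬ IsLinearMulSq k F →
    ∀ X Y : ℝ, 1 ≤ X → 1 ≤ Y → ∀ (y : ℤ) (S : Finset ℤ),
      (∀ x ∈ S, (x, y) ∈ squarePoints F X Y) → (S.card : ℝ) ≤ K * √X * logSize F X Y := by
  obtain ⟨E, hE⟩ := exists_forall_isNondegenerate_of_not_dvd k
  obtain ⟨K, hK₀, hK⟩ := exists_card_le_of_card_image_le (c := 6 * (2 * k + 1 : ℕ)) (by positivity)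
  refine ⟨K * (E + 4), by positivity, fun F hF hns X Y hX hY y S hS => ?_⟩
  have hF₀ : F ≠ 0 := fun h => hns (h ▸ isLinearMulSq_zero k)
  have hL := log_two_le_logSize hF₀ hX hY
  have hL₀ : 0 ≤ logSize F X Y := (Real.log_nonneg one_le_two).trans hL
  rcases S.eq_empty_or_nonempty with rfl | hSne
  · rw [Finset.card_empty, Nat.cast_zero]
    positivity
  obtain ⟨D, hD, hDle, hgood⟩ := hE F hF hns
  obtain ⟨e, he, hele, hres⟩ := exists_forall_card_image_le hF ⟨k, rfl⟩ hX hY hSne hS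
  have hcard := hK X hX (2 * D * e) (by positivity) S (fun x hx => (hS x hx).1)
    fun p hp hpd => by
      have := Fact.mk hp
      refine hres p ⟨hp, ?_, hgood p fun h => hpd ((h.mul_left 2).mul_right e)⟩
        fun h => hpd (h.mul_left _)
      rintro rfl
      exact hpd ((dvd_mul_right 2 D).mul_right e)
  have hlogD : Real.log D ≤ E * logSize F X Y := by
    have hDle' : (D : ℝ) ≤ (2 * polyNorm F) ^ E := by exact_mod_cast hDle
    have hpow := Real.log_le_log (by positivity) hDle'
    rw [Real.log_pow] at hpow
    exact hpow.trans (by gcongr; exact log_two_mul_polyNorm_le_logSize hF₀ hX hY)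
  have hloge : Real.log e ≤ logSize F X Y := Real.log_le_log (by positivity) hele
  have hlog : Real.log ((2 * D * e : ℕ) : ℝ) + 1 ≤ (E + 4) * logSize F X Y := by
    rw [Nat.cast_mul, Nat.cast_mul, Real.log_mul (by positivity) (by positivity),
      Real.log_mul (by positivity) (by positivity), Nat.cast_ofNat]
    linarith [Real.log_two_gt_d9]
  calc (S.card : ℝ) ≤ K * √X * (Real.log ((2 * D * e : ℕ) : ℝ) + 1) := hcard
    _ ≤ K * √X * ((E + 4) * logSize F X Y) := by gcongr
    _ = K * (E + 4) * √X * logSize F X Y := by ring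

theorem exists_ncard_squarePoints_le_mul_sqrt (k : ℕ) : ∃ K : ℝ, 0 < K ∧
    ∀ F : MvPolynomial (Fin 2) ℤ, F.IsHomogeneous (2 * k + 1) → ¬ IsLinearMulSq k F →
    ∀ X Y : ℝ, 1 ≤ X → 1 ≤ Y →
      ((squarePoints F X Y).ncard : ℝ) ≤ K * (Y * √X) * logSize F X Y := by
  obtain ⟨K, hK₀, hK⟩ := exists_card_slice_le k
  refine ⟨3 * K, by positivity, fun F hF hns X Y hX hY => ?_⟩
  have hF₀ : F ≠ 0 := fun h => hns (h ▸ isLinearMulSq_zero k)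
  have hL₀ := (Real.log_nonneg one_le_two).trans (log_two_le_logSize hF₀ hX hY)
  have hfin := finite_squarePoints (F := F) (X := X) (Y := Y)
  set Z := hfin.toFinset
  have hmaps (z : ℤ × ℤ) (hz : z ∈ Z) : z.2 ∈ Finset.Icc (-(⌊Y⌋₊ : ℤ)) ⌊Y⌋₊ :=
    Finset.mem_Icc.2 (abs_le.1 (abs_le_natFloor (hfin.mem_toFinset.1 hz).2.1))
  have hfiber (y : ℤ) : ((Z.filter fun z => z.2 = y).card : ℝ) ≤ K * √X * logSize F X Y := by
    rw [← Finset.card_image_of_injOn (f := Prod.fst)]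
    · refine hK F hF hns X Y hX hY y _ fun x hx => ?_
      obtain ⟨⟨a, b⟩, hz, rfl⟩ := Finset.mem_image.1 hx
      obtain ⟨hzZ, rfl⟩ := Finset.mem_filter.1 hz
      exact hfin.mem_toFinset.1 hzZ
    · rintro ⟨a, b⟩ hz ⟨a', b'⟩ hz' rfl
      obtain rfl : b = y := (Finset.mem_filter.1 hz).2
      exact Prod.ext rfl (Finset.mem_filter.1 hz').2.symm
  have hfloor := Nat.floor_le (zero_le_one.trans hY)
  have hheight : ((⌊Y⌋₊ : ℤ) + 1 - -(⌊Y⌋₊ : ℤ)).toNat = 2 * ⌊Y⌋₊ + 1 := by omega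
  rw [Set.ncard_eq_toFinset_card _ hfin, Finset.card_eq_sum_card_fiberwise hmaps, Nat.cast_sum]
  calc _ ≤ _ := Finset.sum_le_card_nsmul _ _ _ fun y _ => hfiber y
    _ = (2 * ⌊Y⌋₊ + 1) * (K * √X * logSize F X Y) := by
      rw [Int.card_Icc, nsmul_eq_mul, hheight, Nat.cast_succ, Nat.cast_mul, Nat.cast_ofNat]
    _ ≤ 3 * Y * (K * √X * logSize F X Y) := by
      gcongr
      linarith
    _ = 3 * K * (Y * √X) * logSize F X Y := by ring

end Slices

/-! ### The counting bound -/

section Swap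

variable {R : Type*} [CommRing R] {n k : ℕ}

/-- The form `F(v, u)`, obtained from `F(u, v)` by exchanging the variables. -/
noncomputable def swapVars (F : MvPolynomial (Fin 2) R) : MvPolynomial (Fin 2) R :=
  rename (Equiv.swap 0 1) F

theorem swapVars_swapVars (F : MvPolynomial (Fin 2) R) : swapVars (swapVars F) = F := by
  simp [swapVars, rename_rename, ← Equiv.coe_trans]

theorem isHomogeneous_swapVars {F : MvPolynomial (Fin 2) R} (hF : F.IsHomogeneous n) :
    (swapVars F).IsHomogeneous n :=
  hF.rename_isHomogeneous

theorem IsLinearMulSq.swapVars {F : MvPolynomial (Fin 2) R} (hF : IsLinearMulSq k F) :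
    IsLinearMulSq k (swapVars F) := by
  obtain ⟨L, Q, hL, hQ, rfl⟩ := hF
  exact ⟨_, _, isHomogeneous_swapVars hL, isHomogeneous_swapVars hQ, by
    simp [SquareValues.swapVars]⟩

theorem eval_swapVars (F : MvPolynomial (Fin 2) R) (x y : R) :
    eval ![x, y] (swapVars F) = eval ![y, x] F := by
  rw [swapVars, eval_rename]
  congr 2
  ext i
  fin_cases i <;> rfl

theorem polyNorm_swapVars (F : MvPolynomial (Fin 2) ℤ) : polyNorm (swapVars F) = polyNorm F := by
  classical
  have hinj : Function.Injective (Equiv.swap (0 : Fin 2) 1) := Equiv.injective _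
  rw [polyNorm, swapVars, support_rename_of_injective hinj, Finset.sup_image]
  simp [Function.comp_def, coeff_rename_mapDomain _ hinj, polyNorm]

theorem logSize_swapVars (F : MvPolynomial (Fin 2) ℤ) (X Y : ℝ) :
    logSize (swapVars F) Y X = logSize F X Y := by
  rw [logSize, logSize, polyNorm_swapVars, mul_right_comm]

theorem ncard_squarePoints_swapVars (F : MvPolynomial (Fin 2) ℤ) (X Y : ℝ) :
    (squarePoints (swapVars F) Y X).ncard = (squarePoints F X Y).ncard := by
  rw [← Set.ncard_image_of_injective _ Prod.swap_injective]
  congr 1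
  ext ⟨x, y⟩
  simp [squarePoints, eval_swapVars, and_left_comm]

end Swap

section CountingBound

variable {X Y : ℝ}

theorem mul_sqrt_le_rpow_two_thirds (hX : 0 ≤ X) (hY : 0 ≤ Y) (h : Y ^ 2 ≤ X) :
    Y * √X ≤ (X * Y) ^ ((2 : ℝ) / 3) := by
  have hXY : 0 ≤ X * Y := mul_nonneg hX hY
  refine le_of_pow_le_pow_left₀ (n := 6) (by norm_num) (by positivity) ?_
  calc (Y * √X) ^ 6 = Y ^ 2 * Y ^ 4 * (√X ^ 2) ^ 3 := by ring
    _ ≤ X * Y ^ 4 * (√X ^ 2) ^ 3 := by gcongr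
    _ = (X * Y) ^ 4 := by rw [Real.sq_sqrt hX]; ring
    _ = (((X * Y) ^ ((1 : ℝ) / 3)) ^ 3) ^ 4 := by rw [rpow_one_third_pow_three hXY]
    _ = ((X * Y) ^ ((2 : ℝ) / 3)) ^ 6 := by rw [rpow_two_thirds hXY]; ring

theorem le_rpow_two_thirds (hX : 0 ≤ X) (hY : 0 ≤ Y) (h : X ≤ Y ^ 2) :
    X ≤ (X * Y) ^ ((2 : ℝ) / 3) := by
  have hXY : 0 ≤ X * Y := mul_nonneg hX hY
  refine le_of_pow_le_pow_left₀ (n := 3) (by norm_num) (by positivity) ?_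
  calc X ^ 3 = X ^ 2 * X := by ring
    _ ≤ X ^ 2 * Y ^ 2 := by gcongr
    _ = (((X * Y) ^ ((1 : ℝ) / 3)) ^ 3) ^ 2 := by rw [rpow_one_third_pow_three hXY]; ring
    _ = ((X * Y) ^ ((2 : ℝ) / 3)) ^ 3 := by rw [rpow_two_thirds hXY]; ring

theorem exists_ncard_squarePoints_le_of_sq_le (k : ℕ) : ∃ K : ℝ, 0 < K ∧
    ∀ F : MvPolynomial (Fin 2) ℤ, F.IsHomogeneous (2 * k + 1) → ¬ IsLinearMulSq k F →
    ∀ X Y : ℝ, 1 ≤ X → 1 ≤ Y → Y ^ 2 ≤ X → ((squarePoints F X Y).ncard : ℝ) ≤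
      K * (X * Y) ^ ((2 : ℝ) / 3) * logSize F X Y ^ 2 := by
  obtain ⟨K, hK, hbound⟩ := exists_ncard_squarePoints_le_mul_sqrt k
  refine ⟨2 * K, by positivity, fun F hF hns X Y hX hY hXY => ?_⟩
  have hF₀ : F ≠ 0 := fun h => hns (h ▸ isLinearMulSq_zero k)
  have hL : 0.69 < logSize F X Y :=
    lt_of_lt_of_le (by linarith [Real.log_two_gt_d9]) (log_two_le_logSize hF₀ hX hY)
  have hL₂ : logSize F X Y ≤ 2 * logSize F X Y ^ 2 := by nlinarith
  calc ((squarePoints F X Y).ncard : ℝ) ≤ K * (Y * √X) * logSize F X Y := hbound F hF hns X Y hX hY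
    _ ≤ K * (X * Y) ^ ((2 : ℝ) / 3) * (2 * logSize F X Y ^ 2) := by
      gcongr
      exact mul_sqrt_le_rpow_two_thirds (by linarith) (by linarith) hXY
    _ = 2 * K * (X * Y) ^ ((2 : ℝ) / 3) * logSize F X Y ^ 2 := by ring

theorem exists_ncard_squarePoints_le (k : ℕ) : ∃ K : ℝ, 0 < K ∧
    ∀ F : MvPolynomial (Fin 2) ℤ, F.IsHomogeneous (2 * k + 1) → ¬ IsLinearMulSq k F →
    ∀ X Y : ℝ, 1 ≤ X → 1 ≤ Y → ((squarePoints F X Y).ncard : ℝ) ≤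
      K * (X * Y) ^ ((2 : ℝ) / 3) * logSize F X Y ^ 2 := by
  obtain ⟨K₁, hK₁, hsieve⟩ := exists_ncard_squarePoints_le_add k
  obtain ⟨K₂, -, hslices⟩ := exists_ncard_squarePoints_le_of_sq_le k
  refine ⟨max (3 * K₁) K₂, by positivity, fun F hF hns X Y hX hY => ?_⟩
  set W := (X * Y) ^ ((2 : ℝ) / 3) with hW
  rcases le_or_gt (Y ^ 2) X with hYX | hYX
  · refine (hslices F hF hns X Y hX hY hYX).trans ?_
    gcongr
    exact le_max_right _ _
  rcases le_or_gt (X ^ 2) Y with hXY | hXY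
  · have hns' : ¬ IsLinearMulSq k (swapVars F) :=
      fun h => hns (swapVars_swapVars F ▸ h.swapVars)
    have hswap := hslices _ (isHomogeneous_swapVars hF) hns' Y X hY hX hXY
    rw [ncard_squarePoints_swapVars, logSize_swapVars, mul_comm Y X] at hswap
    refine hswap.trans ?_
    gcongr
    exact le_max_right _ _
  have hXW : X ≤ W := le_rpow_two_thirds (by linarith) (by linarith) hYX.le
  have hYW : Y ≤ W := by
    rw [hW, mul_comm X]
    exact le_rpow_two_thirds (by linarith) (by linarith) hXY.le
  calc ((squarePoints F X Y).ncard : ℝ) ≤ K₁ * (W + X + Y) * logSize F X Y ^ 2 :=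
        hsieve F hF hns X Y hX hY
    _ ≤ K₁ * (W + W + W) * logSize F X Y ^ 2 := by gcongr
    _ = 3 * K₁ * W * logSize F X Y ^ 2 := by ring
    _ ≤ max (3 * K₁) K₂ * W * logSize F X Y ^ 2 := by
      gcongr
      exact le_max_left _ _

end CountingBound

/-! ### The exceptional quintic forms -/

section Exceptional

variable {K : Type*} [Field K] [CharZero K]

theorem coeff_eqs_of_normalized {β γ δ μ p q : K}
    (h : ∀ a b : K, (a + β * b) ^ 2 * a ^ 3 + (γ * a + δ * b) ^ 2 * b ^ 3 =
      (a + μ * b) * (a ^ 2 + p * a * b + q * b ^ 2) ^ 2) :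
    2 * β = μ + 2 * p ∧ β ^ 2 = p ^ 2 + 2 * q + 2 * μ * p ∧
      γ ^ 2 = 2 * p * q + μ * (p ^ 2 + 2 * q) ∧ 2 * γ * δ = q ^ 2 + 2 * μ * p * q ∧
      δ ^ 2 = μ * q ^ 2 := by
  have hcoeff := Matrix.eq_zero_of_forall_index_sum_pow_mul_eq_zero
    (f := fun i : Fin 6 => ((i : ℕ) : K)) (Nat.cast_injective.comp Fin.val_injective)
    (v := ![0, 2 * β - (μ + 2 * p), β ^ 2 - (p ^ 2 + 2 * q + 2 * μ * p),
      γ ^ 2 - (2 * p * q + μ * (p ^ 2 + 2 * q)), 2 * γ * δ - (q ^ 2 + 2 * μ * p * q),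
      δ ^ 2 - μ * q ^ 2])
    fun j => by
      simp only [Fin.sum_univ_succ]
      simp
      linear_combination h 1 (j : ℕ)
  have hv (i : Fin 6) := congrFun hcoeff i
  exact ⟨sub_eq_zero.1 (hv 1), sub_eq_zero.1 (hv 2), sub_eq_zero.1 (hv 3),
    sub_eq_zero.1 (hv 4), sub_eq_zero.1 (hv 5)⟩

theorem exists_scale_of_normalized {β γ δ μ p q : K} (hδ : δ ≠ 0)
    (h : ∀ a b : K, (a + β * b) ^ 2 * a ^ 3 + (γ * a + δ * b) ^ 2 * b ^ 3 =
      (a + μ * b) * (a ^ 2 + p * a * b + q * b ^ 2) ^ 2) :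
    ∃ g : K, g ≠ 0 ∧ β = -5 / 4 * g ^ 2 ∧ γ = 5 / 4 * g ^ 3 ∧ δ = -g ^ 5 := by
  obtain ⟨e₁, e₂, e₃, e₄, e₅⟩ := coeff_eqs_of_normalized h
  have hq : q ≠ 0 := by
    rintro rfl
    exact hδ (by simpa using e₅)
  obtain ⟨m, rfl⟩ : ∃ m, δ = m * q := ⟨δ / q, by field_simp⟩
  have hm : m ≠ 0 := left_ne_zero_of_mul hδ
  obtain rfl : μ = m ^ 2 := mul_right_cancel₀ (pow_ne_zero 2 hq) (by linear_combination -e₅)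
  have hβ : β = p + m ^ 2 / 2 := by linear_combination e₁ / 2
  have hq₁ : q = m ^ 4 / 8 - p * m ^ 2 / 2 := by
    rw [hβ] at e₂
    linear_combination -e₂ / 2
  have hγ : 2 * γ * m = q + 2 * p * m ^ 2 := mul_left_cancel₀ hq (by linear_combination e₄)
  have hq₂ : q = 4 * p * m ^ 2 + 8 * m ^ 4 :=
    mul_left_cancel₀ hq (by
      linear_combination -(2 * γ * m + q + 2 * p * m ^ 2) * hγ + 4 * m ^ 2 * e₃)
  have hp : p = -7 / 4 * m ^ 2 :=
    mul_left_cancel₀ (pow_ne_zero 2 hm) (by linear_combination (2 / 9) * hq₁ - (2 / 9) * hq₂)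
  have hq₃ : q = m ^ 4 := by rw [hq₂, hp]; ring
  refine ⟨-m, neg_ne_zero.2 hm, ?_, mul_left_cancel₀ hm ?_, ?_⟩
  · rw [hβ, hp]; ring
  · rw [hq₃, hp] at hγ
    linear_combination hγ / 2
  · rw [hq₃]; ring

theorem exists_param_of_diagonal {α β γ δ l m q₀ q₁ q₂ : K} (hα : α ≠ 0) (hδ : δ ≠ 0)
    (h : ∀ a b : K, (α * a + β * b) ^ 2 * a ^ 3 + (γ * a + δ * b) ^ 2 * b ^ 3 =
      (l * a + m * b) * (q₀ * a ^ 2 + q₁ * a * b + q₂ * b ^ 2) ^ 2) :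
    ∃ g ν : K, g ≠ 0 ∧ ν ≠ 0 ∧ α = 4 * ν ∧ β = -5 * g ^ 2 * ν ∧ γ = 5 * ν * g ^ 3 ∧
      δ = -4 * ν * g ^ 5 := by
  have hlead : l * q₀ ^ 2 = α ^ 2 := by linear_combination -h 1 0
  have hlq : l * q₀ ^ 2 ≠ 0 := hlead ▸ pow_ne_zero 2 hα
  have hl : l ≠ 0 := left_ne_zero_of_mul hlq
  have hq₀ : q₀ ≠ 0 := by
    rintro rfl
    simp at hlq
  obtain ⟨g, hg, hβ, hγ, hδ'⟩ := exists_scale_of_normalized (β := β / α) (γ := γ / α)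
    (δ := δ / α) (μ := m / l) (p := q₁ / q₀) (q := q₂ / q₀) (div_ne_zero hδ hα)
    fun a b => by
      refine mul_left_cancel₀ (pow_ne_zero 2 hα) ?_
      calc α ^ 2 * ((a + β / α * b) ^ 2 * a ^ 3 + (γ / α * a + δ / α * b) ^ 2 * b ^ 3)
          = (α * a + β * b) ^ 2 * a ^ 3 + (γ * a + δ * b) ^ 2 * b ^ 3 := by field_simp
        _ = (l * a + m * b) * (q₀ * a ^ 2 + q₁ * a * b + q₂ * b ^ 2) ^ 2 := h a b
        _ = α ^ 2 * ((a + m / l * b) * (a ^ 2 + q₁ / q₀ * a * b + q₂ / q₀ * b ^ 2) ^ 2) := by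
          rw [← hlead]
          field_simp
  rw [div_eq_iff hα] at hβ hγ hδ'
  exact ⟨g, α / 4, hg, div_ne_zero hα (by norm_num), by ring, by rw [hβ]; ring, by rw [hγ]; ring,
    by rw [hδ']; ring⟩

theorem exists_param_of_eq_linear_mul_sq {a₁ b₁ a₂ b₂ c₁ d₁ c₂ d₂ l m q₀ q₁ q₂ : K}
    (hM : c₁ * d₂ - d₁ * c₂ ≠ 0) (h₁₂ : a₁ * d₂ - b₁ * c₂ ≠ 0) (h₂₁ : c₁ * b₂ - d₁ * a₂ ≠ 0)
    (h : ∀ x y : K, (a₁ * x + b₁ * y) ^ 2 * (c₁ * x + d₁ * y) ^ 3 +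
        (a₂ * x + b₂ * y) ^ 2 * (c₂ * x + d₂ * y) ^ 3 =
      (l * x + m * y) * (q₀ * x ^ 2 + q₁ * x * y + q₂ * y ^ 2) ^ 2) :
    ∃ g ν : K, g ≠ 0 ∧ ν ≠ 0 ∧
      a₁ = ν * (4 * c₁ - 5 * g ^ 2 * c₂) ∧ b₁ = ν * (4 * d₁ - 5 * g ^ 2 * d₂) ∧
      a₂ = ν * g ^ 3 * (5 * c₁ - 4 * g ^ 2 * c₂) ∧
      b₂ = ν * g ^ 3 * (5 * d₁ - 4 * g ^ 2 * d₂) := by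
  generalize hΔ : c₁ * d₂ - d₁ * c₂ = Δ at hM
  -- In the coordinates `a = c₁ x + d₁ y`, `b = c₂ x + d₂ y` the cubed forms are `a` and `b`.
  obtain ⟨g, ν, hg, hν, k₁, k₂, k₃, k₄⟩ := exists_param_of_diagonal (K := K)
    (β := (b₁ * c₁ - a₁ * d₁) / Δ) (γ := (a₂ * d₂ - b₂ * c₂) / Δ)
    (l := (l * d₂ - m * c₂) / Δ) (m := (m * c₁ - l * d₁) / Δ)
    (q₀ := (q₀ * d₂ ^ 2 - q₁ * d₂ * c₂ + q₂ * c₂ ^ 2) / Δ ^ 2)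
    (q₁ := (-2 * q₀ * d₁ * d₂ + q₁ * (d₂ * c₁ + d₁ * c₂) - 2 * q₂ * c₁ * c₂) / Δ ^ 2)
    (q₂ := (q₀ * d₁ ^ 2 - q₁ * d₁ * c₁ + q₂ * c₁ ^ 2) / Δ ^ 2)
    (div_ne_zero h₁₂ hM) (div_ne_zero h₂₁ hM) fun a b => by
      have hxy := h ((d₂ * a - d₁ * b) / Δ) ((c₁ * b - c₂ * a) / Δ)
      have ha : c₁ * ((d₂ * a - d₁ * b) / Δ) + d₁ * ((c₁ * b - c₂ * a) / Δ) = a := by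
        rw [← mul_div_assoc, ← mul_div_assoc, ← add_div, div_eq_iff hM, ← hΔ]
        ring
      have hb : c₂ * ((d₂ * a - d₁ * b) / Δ) + d₂ * ((c₁ * b - c₂ * a) / Δ) = b := by
        rw [← mul_div_assoc, ← mul_div_assoc, ← add_div, div_eq_iff hM, ← hΔ]
        ring
      rw [ha, hb] at hxy
      refine Eq.trans ?_ (hxy.trans ?_) <;> ring
  rw [div_eq_iff hM] at k₁ k₂ k₃ k₄
  refine ⟨g, ν, hg, hν, ?_, ?_, ?_, ?_⟩ <;> apply mul_left_cancel₀ hM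
  · linear_combination c₁ * k₁ + c₂ * k₂ - a₁ * hΔ
  · linear_combination d₁ * k₁ + d₂ * k₂ - b₁ * hΔ
  · linear_combination c₁ * k₃ + c₂ * k₄ - a₂ * hΔ
  · linear_combination d₁ * k₃ + d₂ * k₄ - b₂ * hΔ

end Exceptional

section Quintic

theorem IsLinearMulSq.map {R S : Type*} [CommRing R] [CommRing S] (φ : R →+* S) {k : ℕ}
    {F : MvPolynomial (Fin 2) R} (hF : IsLinearMulSq k F) : IsLinearMulSq k (map φ F) := by
  obtain ⟨L, Q, hL, hQ, rfl⟩ := hF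
  exact ⟨_, _, hL.map φ, hQ.map φ, by simp⟩

theorem IsLinearMulSq.exists_eval_eq {R : Type*} [CommRing R] {F : MvPolynomial (Fin 2) R}
    (hF : IsLinearMulSq 2 F) : ∃ l m q₀ q₁ q₂ : R, ∀ x y : R, eval ![x, y] F =
      (l * x + m * y) * (q₀ * x ^ 2 + q₁ * x * y + q₂ * y ^ 2) ^ 2 := by
  obtain ⟨L, Q, hL, hQ, rfl⟩ := hF
  refine ⟨(dehomogenize L).coeff 1, (dehomogenize L).coeff 0, (dehomogenize Q).coeff 2,
    (dehomogenize Q).coeff 1, (dehomogenize Q).coeff 0, fun x y => ?_⟩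
  rw [map_mul, map_pow, eval_eq_sum_antidiagonal hL, eval_eq_sum_antidiagonal hQ]
  simp [Finset.Nat.antidiagonal_succ]
  ring

theorem det_ne_zero_of_not_proportional {L M : ℤ × ℤ} (h : ¬ Proportional L M) :
    (L.1 : ℚ) * M.2 - L.2 * M.1 ≠ 0 := by
  intro hdet
  by_cases hM : (M.1 : ℚ) = 0 ∧ (M.2 : ℚ) = 0
  · exact h (Or.inr ⟨0, by simp [hM.1], by simp [hM.2]⟩)
  refine h (Or.inl ?_)
  by_cases hM₁ : (M.1 : ℚ) = 0
  · have hM₂ : (M.2 : ℚ) ≠ 0 := fun h₀ => hM ⟨hM₁, h₀⟩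
    have hL₁ : (L.1 : ℚ) = 0 := by simpa [hM₁, hM₂] using hdet
    exact ⟨L.2 / M.2, by rw [hL₁, hM₁, mul_zero], by field_simp⟩
  · refine ⟨L.1 / M.1, by field_simp, ?_⟩
    field_simp
    linarith

/-- The form `L₁²M₁³ + L₂²M₂³`. -/
noncomputable def quinticForm (L₁ L₂ M₁ M₂ : ℤ × ℤ) : MvPolynomial (Fin 2) ℤ :=
  linForm L₁ ^ 2 * linForm M₁ ^ 3 + linForm L₂ ^ 2 * linForm M₂ ^ 3

/-- The condition that `L₁ = ν(4M₁ - 5g²M₂)` and `L₂ = νg³(5M₁ - 4g²M₂)` for some nonzero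
rationals `g` and `ν`; then `L₁²M₁³ + L₂²M₂³` is a linear form times the square of a form. -/
def IsExceptional (L₁ L₂ M₁ M₂ : ℤ × ℤ) : Prop :=
  ∃ g ν : ℚ, g ≠ 0 ∧ ν ≠ 0 ∧
    (L₁.1 : ℚ) = ν * (4 * M₁.1 - 5 * g ^ 2 * M₂.1) ∧
    (L₁.2 : ℚ) = ν * (4 * M₁.2 - 5 * g ^ 2 * M₂.2) ∧
    (L₂.1 : ℚ) = ν * g ^ 3 * (5 * M₁.1 - 4 * g ^ 2 * M₂.1) ∧
    (L₂.2 : ℚ) = ν * g ^ 3 * (5 * M₁.2 - 4 * g ^ 2 * M₂.2)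

variable {L₁ L₂ M₁ M₂ : ℤ × ℤ}

theorem isHomogeneous_linForm (L : ℤ × ℤ) : (linForm L).IsHomogeneous 1 :=
  ((isHomogeneous_X ℤ 0).C_mul _).add ((isHomogeneous_X ℤ 1).C_mul _)

theorem isHomogeneous_quinticForm (L₁ L₂ M₁ M₂ : ℤ × ℤ) :
    (quinticForm L₁ L₂ M₁ M₂).IsHomogeneous 5 :=
  (((isHomogeneous_linForm L₁).pow 2).mul ((isHomogeneous_linForm M₁).pow 3)).add
    (((isHomogeneous_linForm L₂).pow 2).mul ((isHomogeneous_linForm M₂).pow 3))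

theorem isExceptional_of_isLinearMulSq (h₁₂ : ¬ Proportional L₁ M₂) (h₂₁ : ¬ Proportional L₂ M₁)
    (hM : ¬ Proportional M₁ M₂) (hF : IsLinearMulSq 2 (quinticForm L₁ L₂ M₁ M₂)) :
    IsExceptional L₁ L₂ M₁ M₂ := by
  obtain ⟨l, m, q₀, q₁, q₂, heval⟩ := (hF.map (Int.castRingHom ℚ)).exists_eval_eq
  have hdet : (M₁.1 : ℚ) * L₂.2 - M₁.2 * L₂.1 ≠ 0 := fun h₀ =>
    det_ne_zero_of_not_proportional h₂₁ (by linear_combination -h₀)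
  refine exists_param_of_eq_linear_mul_sq (det_ne_zero_of_not_proportional hM)
    (det_ne_zero_of_not_proportional h₁₂) hdet fun x y => Eq.trans ?_ (heval x y)
  simp [quinticForm, linForm]

end Quintic

end SquareValues

open SquareValues in
theorem squares_of_quintic_form_general :
    ∃ C : ℝ, 0 < C ∧ ∀ L₁ L₂ M₁ M₂ : ℤ × ℤ,
      ¬ Proportional L₁ M₂ → ¬ Proportional L₂ M₁ → ¬ Proportional M₁ M₂ →
      ∀ X Y : ℝ, 1 ≤ X → 1 ≤ Y →
        IsExceptional L₁ L₂ M₁ M₂ ∨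
        ((squarePoints (quinticForm L₁ L₂ M₁ M₂) X Y).ncard : ℝ) ≤
          C * (X * Y) ^ ((2 : ℝ) / 3) * logSize (quinticForm L₁ L₂ M₁ M₂) X Y ^ 2 := by
  obtain ⟨C, hC, hbound⟩ := exists_ncard_squarePoints_le 2
  refine ⟨C, hC, fun L₁ L₂ M₁ M₂ h₁₂ h₂₁ hM X Y hX hY => ?_⟩
  by_cases hF : IsLinearMulSq 2 (quinticForm L₁ L₂ M₁ M₂)
  · exact Or.inl (isExceptional_of_isLinearMulSq h₁₂ h₂₁ hM hF)
  · exact Or.inr (hbound _ (isHomogeneous_quinticForm L₁ L₂ M₁ M₂) hF X Y hX hY)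

/-- There is an absolute constant `C` with the following property. Let `L₁, L₂, M₁, M₂` be
nonzero integral linear forms in two variables such that no two of them are proportional,
except possibly `L₁` and `M₁`, or `L₂` and `M₂`. Put `F = L₁²M₁³ + L₂²M₂³`. Then for all real
`X, Y ≥ 1`, the number of integer pairs `(x, y)` with `|x| ≤ X`, `|y| ≤ Y` for which `F(x, y)`
is a nonzero square is at most `C (XY)^{2/3} (log(2‖F‖XY))²`, unless there are nonzero
rationals `g, ν` with `L₁ = ν(4M₁ - 5g²M₂)` and `L₂ = νg³(5M₁ - 4g²M₂)`. -/
theorem squares_of_quintic_form :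
    ∃ C : ℝ, 0 < C ∧ ∀ L₁ L₂ M₁ M₂ : ℤ × ℤ,
      L₁ ≠ (0, 0) → L₂ ≠ (0, 0) → M₁ ≠ (0, 0) → M₂ ≠ (0, 0) →
      ¬ Proportional L₁ L₂ → ¬ Proportional L₁ M₂ →
      ¬ Proportional L₂ M₁ → ¬ Proportional M₁ M₂ →
      ∀ X Y : ℝ, 1 ≤ X → 1 ≤ Y →
        (∃ g ν : ℚ, g ≠ 0 ∧ ν ≠ 0 ∧
          (L₁.1 : ℚ) = ν * (4 * M₁.1 - 5 * g ^ 2 * M₂.1) ∧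
          (L₁.2 : ℚ) = ν * (4 * M₁.2 - 5 * g ^ 2 * M₂.2) ∧
          (L₂.1 : ℚ) = ν * g ^ 3 * (5 * M₁.1 - 4 * g ^ 2 * M₂.1) ∧
          (L₂.2 : ℚ) = ν * g ^ 3 * (5 * M₁.2 - 4 * g ^ 2 * M₂.2)) ∨
        (({p : ℤ × ℤ | (|p.1| : ℝ) ≤ X ∧ (|p.2| : ℝ) ≤ Y ∧
            ∃ n : ℤ, n ≠ 0 ∧ MvPolynomial.eval ![p.1, p.2]
              ((linForm L₁) ^ 2 * (linForm M₁) ^ 3 +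
                (linForm L₂) ^ 2 * (linForm M₂) ^ 3) = n ^ 2}).ncard : ℝ) ≤
          C * (X * Y) ^ ((2 : ℝ) / 3) *
            Real.log (2 * polyNorm ((linForm L₁) ^ 2 * (linForm M₁) ^ 3 +
              (linForm L₂) ^ 2 * (linForm M₂) ^ 3) * X * Y) ^ 2 := by
  obtain ⟨C, hC, hbound⟩ := squares_of_quintic_form_general
  exact ⟨C, hC, fun L₁ L₂ M₁ M₂ _ _ _ _ _ h₁₂ h₂₁ hM => hbound L₁ L₂ M₁ M₂ h₁₂ h₂₁ hM⟩
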